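/- Ground state energy in the Gross–Pitaevskii regime (Lieb–Seiringer–Yngvason): Let V:ℝ³→[0,∞) be measurable, radial and compactly supported with scattering length 𝔞>0. For N∈ℕ let E_N^{GP} be the ground state energy of the Gross–Pitaevskii Hamiltonian on the unit torus. Then lim_{N→∞} E_N^{GP}/N = 4π𝔞. -/

import Mathlib

open MeasureTheory Filter Real
open scoped ENNReal NNReal

noncomputable section

abbrev Vec (d : ℕ) := Fin d → ℝ

def box (d N : ℕ) (T : ℝ) : Set (Fin N → Vec d) :=
  {x | ∀ i k, x i k ∈ Set.Icc (-T/2) (T/2)}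

def periodize (d : ℕ) (V : Vec d → ℝ≥0∞) (T : ℝ) (z : Vec d) : ℝ≥0∞ :=
  ∑' n : Fin d → ℤ, V (fun k => z k + T * n k)

def kineticE (d N : ℕ) (T : ℝ) (ψ : (Fin N → Vec d) → ℂ) : ℝ≥0∞ :=
  ∑ i : Fin N, ∑ k : Fin d,
    ∫⁻ x in box d N T, (‖fderiv ℝ ψ x (Pi.single i (Pi.single k 1))‖₊ : ℝ≥0∞) ^ 2

def interE (d N : ℕ) (T : ℝ) (V : Vec d → ℝ≥0∞) (ψ : (Fin N → Vec d) → ℂ) : ℝ≥0∞ :=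
  ∑ i : Fin N, ∑ j : Fin N,
    if i < j then
      ∫⁻ x in box d N T, periodize d V T (fun k => x i k - x j k) * (‖ψ x‖₊ : ℝ≥0∞) ^ 2
    else 0

def IsTrialState (d N : ℕ) (T : ℝ) (ψ : (Fin N → Vec d) → ℂ) : Prop :=
  ContDiff ℝ (⊤ : ℕ∞) ψ ∧
  (∀ (x : Fin N → Vec d) (v : Fin N → Fin d → ℤ), ψ (fun i k => x i k + T * v i k) = ψ x) ∧
  (∀ (σ : Equiv.Perm (Fin N)) (x : Fin N → Vec d), ψ (x ∘ σ) = ψ x) ∧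
  ∫⁻ x in box d N T, (‖ψ x‖₊ : ℝ≥0∞) ^ 2 = 1

def gsEnergy (d N : ℕ) (T : ℝ) (V : Vec d → ℝ≥0∞) : ℝ :=
  sInf {e : ℝ | ∃ ψ, IsTrialState d N T ψ ∧
        kineticE d N T ψ + interE d N T V ψ ≠ ⊤ ∧
        (kineticE d N T ψ + interE d N T V ψ).toReal = e}

/-- side length of the thermodynamic box -/
def sideLength (d : ℕ) (ρ : ℝ) (N : ℕ) : ℝ := ((N : ℝ) / ρ) ^ ((1 : ℝ) / d)

def eMinus (d : ℕ) (V : Vec d → ℝ≥0∞) (ρ : ℝ) : ℝ :=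
  liminf (fun N : ℕ => gsEnergy d N (sideLength d ρ N) V / (sideLength d ρ N) ^ d) atTop

def ePlus (d : ℕ) (V : Vec d → ℝ≥0∞) (ρ : ℝ) : ℝ :=
  limsup (fun N : ℕ => gsEnergy d N (sideLength d ρ N) V / (sideLength d ρ N) ^ d) atTop

def scatSet3 (V : Vec 3 → ℝ≥0∞) : Set ℝ≥0∞ :=
  {E | ∃ f : Vec 3 → ℝ, ContDiff ℝ (⊤ : ℕ∞) f ∧ HasCompactSupport (fun x => f x - 1) ∧
       E = ∫⁻ x, ((∑ k, ((‖fderiv ℝ f x (Pi.single k 1)‖₊ : ℝ≥0∞)) ^ 2)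
             + V x * (‖f x‖₊ : ℝ≥0∞) ^ 2 / 2)}

/-- The Gross–Pitaevskii interaction on the unit torus:
`V_N(x) = Σ_{n ∈ ℤ³} N² V(N(x+n))`. -/
def gpPotential (V : Vec 3 → ℝ) (N : ℕ) : Vec 3 → ℝ≥0∞ :=
  fun x => ENNReal.ofReal ((N : ℝ) ^ 2 * V ((N : ℝ) • x))

/-! For the upper bound, rescale a near-optimal profile `f` of the scattering problem to length
`1 / N`, extend it periodically, and take the product of its values over all pairs of particles.
The diagonal gradient terms and the interaction of this Jastrow function give `N ^ 2` times the
rescaled scattering energy, which is of order `1 / N`; the three-body gradient terms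
and the defect of the norm from `1` are negligible because `∇f` and `1 - |f| ^ 2` are integrable.

For the lower bound, split the torus into `L ^ 3` cells with `M` particles per cell on average and
discard the interaction between different cells. Since `N / L → ∞`, the interaction is short-ranged
on the scale of a cell. A bounded number `n` of particles in a cell has either a large energy or,
by the Poincaré inequality, a nearly constant wave function. In the second case each particle has
at least the scattering energy in a small ball around each of the others, because a cutoff whose
gradient is small in `L³` costs almost nothing in energy (Hölder and Sobolev), so that the cell
contributes `n * (n - 1)` times the rescaled scattering energy. Cells with more than `2 * M`
particles are split into groups, and `n * (n - 1) ≥ (2 * M - 1) * n - M ^ 2` bounds the total from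
below by a linear function of the number of particles; its constant is sharp as `M → ∞`.
-/

/-! ### The Poincaré inequality on convex sets -/

section Poincare

theorem sq_lintegral_le_lintegral_sq {α : Type*} [MeasurableSpace α] (μ : Measure α)
    [IsProbabilityMeasure μ] {f : α → ℝ≥0∞} (hf : AEMeasurable f μ) :
    (∫⁻ x, f x ∂μ) ^ 2 ≤ ∫⁻ x, f x ^ 2 ∂μ := by
  have h := ENNReal.lintegral_mul_le_Lp_mul_Lq μ Real.HolderConjugate.two_two hf
    (aemeasurable_const (b := 1))
  simp only [Pi.mul_apply, mul_one, ENNReal.one_rpow, lintegral_const, measure_univ] at h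
  calc (∫⁻ x, f x ∂μ) ^ 2 ≤ ((∫⁻ x, f x ^ (2 : ℝ) ∂μ) ^ (1 / (2 : ℝ))) ^ 2 := by gcongr
    _ = ∫⁻ x, f x ^ 2 ∂μ := by
      rw [← ENNReal.rpow_natCast, ← ENNReal.rpow_mul]
      norm_num

variable {E F : Type*} [NormedAddCommGroup E] [NormedSpace ℝ E] [NormedAddCommGroup F]
  [NormedSpace ℝ F]

theorem enorm_sub_sq_le_lintegral_segment [CompleteSpace F] {φ : E → F} (hφ : ContDiff ℝ 1 φ)
    (x y : E) :
    ‖φ x - φ y‖ₑ ^ 2 ≤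
      ‖x - y‖ₑ ^ 2 * ∫⁻ t in Set.Icc (0 : ℝ) 1, ‖fderiv ℝ φ ((1 - t) • y + t • x)‖ₑ ^ 2 := by
  have : IsProbabilityMeasure (volume.restrict (Set.Icc (0 : ℝ) 1)) := ⟨by simp⟩
  have hcont : Continuous fun t : ℝ => fderiv ℝ φ ((1 - t) • y + t • x) :=
    (hφ.continuous_fderiv one_ne_zero).comp (by fun_prop)
  have hderiv : ∀ t : ℝ, HasDerivAt (fun t : ℝ => φ ((1 - t) • y + t • x))
      (fderiv ℝ φ ((1 - t) • y + t • x) (x - y)) t := fun t => by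
    have hline : HasDerivAt (fun t : ℝ => (1 - t) • y + t • x) (x - y) t := by
      convert! (((hasDerivAt_id t).const_sub 1).smul_const y).add
        ((hasDerivAt_id t).smul_const x) using 1
      simp [sub_eq_add_neg, add_comm]
    exact (hφ.differentiable one_ne_zero _).hasFDerivAt.comp_hasDerivAt t hline
  have hftc : ∫ t in Set.Icc (0 : ℝ) 1, fderiv ℝ φ ((1 - t) • y + t • x) (x - y) = φ x - φ y := by
    rw [integral_Icc_eq_integral_Ioc, ← intervalIntegral.integral_of_le zero_le_one,
      intervalIntegral.integral_eq_sub_of_hasDerivAt (fun t _ => hderiv t)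
        ((hcont.clm_apply continuous_const).intervalIntegrable 0 1)]
    simp
  calc ‖φ x - φ y‖ₑ ^ 2
      ≤ (∫⁻ t in Set.Icc (0 : ℝ) 1, ‖fderiv ℝ φ ((1 - t) • y + t • x)‖ₑ * ‖x - y‖ₑ) ^ 2 := by
        rw [← hftc]
        gcongr
        exact (enorm_integral_le_lintegral_enorm _).trans
          (lintegral_mono fun t => ContinuousLinearMap.le_opENorm _ _)
    _ = ‖x - y‖ₑ ^ 2 *
          (∫⁻ t in Set.Icc (0 : ℝ) 1, ‖fderiv ℝ φ ((1 - t) • y + t • x)‖ₑ) ^ 2 := by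
        rw [lintegral_mul_const' _ _ enorm_ne_top, mul_pow, mul_comm]
    _ ≤ _ := by
        gcongr
        exact sq_lintegral_le_lintegral_sq _ hcont.enorm.measurable.aemeasurable

variable [MeasurableSpace E] [BorelSpace E] [FiniteDimensional ℝ E] (μ : Measure E)
  [μ.IsAddHaarMeasure]

theorem lintegral_comp_add_smul {r : ℝ} (hr : r ≠ 0) (b : E) (f : E → ℝ≥0∞) :
    ∫⁻ x, f (b + r • x) ∂μ
      = ENNReal.ofReal |(r ^ Module.finrank ℝ E)⁻¹| * ∫⁻ x, f x ∂μ := by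
  have he : MeasurableEmbedding (fun x : E => r • x) :=
    (Homeomorph.smulOfNeZero r hr).measurableEmbedding
  rw [← he.lintegral_map (fun x => f (b + x)), Measure.map_addHaar_smul μ hr,
    lintegral_smul_measure, smul_eq_mul, lintegral_add_left_eq_self (μ := μ) f b]

theorem setLIntegral_comp_add_smul_le {s : Set E} (hs : MeasurableSet s) {r : ℝ} (hr : 1 / 2 ≤ r)
    (b : E) (hb : ∀ x ∈ s, b + r • x ∈ s) (g : E → ℝ≥0∞) :
    ∫⁻ x in s, g (b + r • x) ∂μ ≤ 2 ^ Module.finrank ℝ E * ∫⁻ x in s, g x ∂μ := by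
  have hr0 : 0 < r := by linarith
  have hr2 : r⁻¹ ≤ 2 := by
    rw [inv_le_comm₀ hr0 two_pos]
    linarith
  calc ∫⁻ x in s, g (b + r • x) ∂μ = ∫⁻ x in s, s.indicator g (b + r • x) ∂μ :=
        setLIntegral_congr_fun hs fun x hx => by simp [hb x hx]
    _ ≤ ∫⁻ x, s.indicator g (b + r • x) ∂μ := setLIntegral_le_lintegral _ _
    _ = ENNReal.ofReal r⁻¹ ^ Module.finrank ℝ E * ∫⁻ x in s, g x ∂μ := by
        rw [lintegral_comp_add_smul μ hr0.ne', lintegral_indicator hs,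
          abs_of_pos (by positivity), ← inv_pow, ENNReal.ofReal_pow (by positivity)]
    _ ≤ _ := by
        gcongr
        simpa using ENNReal.ofReal_le_ofReal hr2

-- One of `t` and `1 - t` is at least `1 / 2`, so that one of the two substitutions is harmless.
theorem lintegral_lintegral_segment_le {s : Set E} (hs : MeasurableSet s) (hc : Convex ℝ s)
    {g : E → ℝ≥0∞} (hg : Measurable g) {t : ℝ} (ht : t ∈ Set.Icc (0 : ℝ) 1) :
    ∫⁻ x in s, ∫⁻ y in s, g ((1 - t) • y + t • x) ∂μ ∂μ
      ≤ 2 ^ Module.finrank ℝ E * (∫⁻ x in s, g x ∂μ) * μ s := by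
  have of_pointwise : ∀ f : E → ℝ≥0∞,
      (∀ x ∈ s, f x ≤ 2 ^ Module.finrank ℝ E * ∫⁻ x in s, g x ∂μ) →
      ∫⁻ x in s, f x ∂μ ≤ 2 ^ Module.finrank ℝ E * (∫⁻ x in s, g x ∂μ) * μ s := fun f hf =>
    (setLIntegral_mono' hs hf).trans_eq (setLIntegral_const _ _)
  rcases le_total (1 / 2) t with h | h
  · rw [lintegral_lintegral_swap]
    swap
    · exact (hg.comp (by fun_prop)).aemeasurable
    exact of_pointwise _ fun y hy => setLIntegral_comp_add_smul_le μ hs h _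
      (fun x hx => hc hy hx (by linarith [ht.2]) ht.1 (by ring)) g
  · simp_rw [add_comm _ (t • _)]
    exact of_pointwise _ fun x hx => setLIntegral_comp_add_smul_le μ hs (by linarith) _
      (fun y hy => hc hx hy ht.1 (by linarith [ht.2]) (by ring)) g

theorem lintegral_lintegral_segment_swap {g : E → ℝ≥0∞} (hg : Measurable g) (s : Set E) :
    ∫⁻ y in s, ∫⁻ x in s, ∫⁻ t in Set.Icc (0 : ℝ) 1, g ((1 - t) • y + t • x) ∂volume ∂μ ∂μ
      = ∫⁻ t in Set.Icc (0 : ℝ) 1, ∫⁻ y in s, ∫⁻ x in s, g ((1 - t) • y + t • x) ∂μ ∂μ := by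
  calc _ = ∫⁻ y in s, ∫⁻ t in Set.Icc (0 : ℝ) 1, ∫⁻ x in s,
          g ((1 - t) • y + t • x) ∂μ ∂volume ∂μ :=
        lintegral_congr fun y => lintegral_lintegral_swap
          (hg.comp (by fun_prop : Measurable fun z : E × ℝ =>
            (1 - z.2) • y + z.2 • z.1)).aemeasurable
    _ = _ := lintegral_lintegral_swap <| Measurable.aemeasurable <|
        Measurable.lintegral_prod_right' (ν := μ.restrict s)
          (f := fun z : (E × ℝ) × E => g ((1 - z.1.2) • z.1.1 + z.1.2 • z.2))
          (hg.comp (by fun_prop))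

theorem lintegral_lintegral_enorm_sub_sq_le [CompleteSpace F] {s : Set E} (hs : MeasurableSet s)
    (hc : Convex ℝ s) {φ : E → F} (hφ : ContDiff ℝ 1 φ) :
    ∫⁻ y in s, ∫⁻ x in s, ‖φ x - φ y‖ₑ ^ 2 ∂μ ∂μ ≤
      2 ^ Module.finrank ℝ E * Metric.ediam s ^ 2 * (∫⁻ x in s, ‖fderiv ℝ φ x‖ₑ ^ 2 ∂μ) * μ s := by
  have hDφ : Measurable fun x => ‖fderiv ℝ φ x‖ₑ ^ 2 :=
    (hφ.continuous_fderiv one_ne_zero).enorm.measurable.pow_const 2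
  have hg := hDφ.const_mul (Metric.ediam s ^ 2)
  set g : E → ℝ≥0∞ := fun x => Metric.ediam s ^ 2 * ‖fderiv ℝ φ x‖ₑ ^ 2
  calc ∫⁻ y in s, ∫⁻ x in s, ‖φ x - φ y‖ₑ ^ 2 ∂μ ∂μ
      ≤ ∫⁻ y in s, ∫⁻ x in s,
          ∫⁻ t in Set.Icc (0 : ℝ) 1, g ((1 - t) • y + t • x) ∂volume ∂μ ∂μ := by
        refine setLIntegral_mono' hs fun y hy => setLIntegral_mono' hs fun x hx =>
          (enorm_sub_sq_le_lintegral_segment hφ x y).trans <|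
            le_trans ?_ (lintegral_const_mul_le _ _)
        rw [← edist_eq_enorm_sub]
        gcongr
        exact Metric.edist_le_ediam_of_mem hx hy
    _ = ∫⁻ t in Set.Icc (0 : ℝ) 1, ∫⁻ y in s, ∫⁻ x in s, g ((1 - t) • y + t • x) ∂μ ∂μ :=
        lintegral_lintegral_segment_swap μ hg s
    _ ≤ ∫⁻ _t in Set.Icc (0 : ℝ) 1, 2 ^ Module.finrank ℝ E * (∫⁻ x in s, g x ∂μ) * μ s := by
        refine setLIntegral_mono' measurableSet_Icc fun t ht => ?_
        have ht' : 1 - t ∈ Set.Icc (0 : ℝ) 1 := ⟨by linarith [ht.2], by linarith [ht.1]⟩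
        simpa [add_comm] using lintegral_lintegral_segment_le μ hs hc hg ht'
    _ = _ := by
        rw [lintegral_const_mul _ hDφ]
        simp only [setLIntegral_const, Real.volume_Icc, sub_zero, ENNReal.ofReal_one, mul_one,
          mul_assoc]

theorem exists_lintegral_enorm_sub_sq_le [CompleteSpace F] {s : Set E} (hs : MeasurableSet s)
    (hc : Convex ℝ s) (hs0 : μ s ≠ 0) (hs_top : μ s ≠ ⊤) {φ : E → F} (hφ : ContDiff ℝ 1 φ) :
    ∃ c : F, ∫⁻ x in s, ‖φ x - c‖ₑ ^ 2 ∂μ ≤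
      2 ^ Module.finrank ℝ E * Metric.ediam s ^ 2 * ∫⁻ x in s, ‖fderiv ℝ φ x‖ₑ ^ 2 ∂μ := by
  have hmeas : Measurable fun z : E × E => ‖φ z.2 - φ z.1‖ₑ ^ 2 :=
    (by fun_prop : Continuous fun z : E × E => ‖φ z.2 - φ z.1‖ₑ).measurable.pow_const 2
  obtain ⟨y, -, hy⟩ := exists_le_setLAverage hs0 hs_top
    (f := fun y => ∫⁻ x in s, ‖φ x - φ y‖ₑ ^ 2 ∂μ)
    (hmeas.lintegral_prod_right' (ν := μ.restrict s)).aemeasurable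
  refine ⟨φ y, hy.trans ?_⟩
  rw [setLAverage_eq]
  exact ENNReal.div_le_of_le_mul (lintegral_lintegral_enorm_sub_sq_le μ hs hc hφ)

end Poincare

/-! ### Energy densities and the scattering energy -/

section EnormSq

variable {F : Type*} [NormedAddCommGroup F]

theorem ennreal_add_sq_le (e a b : ℝ≥0∞) :
    (a + b) ^ 2 ≤ (1 + e) * a ^ 2 + (1 + e⁻¹) * b ^ 2 := by
  have two_mul_le : 2 * a * b ≤ e * a ^ 2 + e⁻¹ * b ^ 2 := by
    rcases eq_or_ne a 0 with rfl | ha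
    · simp
    rcases eq_or_ne b 0 with rfl | hb
    · simp
    rcases eq_or_ne e 0 with rfl | he
    · simp [hb]
    rcases eq_or_ne e ⊤ with rfl | he'
    · simp [ha]
    rcases eq_or_ne a ⊤ with rfl | ha'
    · simp [he]
    rcases eq_or_ne b ⊤ with rfl | hb'
    · simp [he']
    lift e to ℝ≥0 using he'
    lift a to ℝ≥0 using ha'
    lift b to ℝ≥0 using hb'
    have he0 : e ≠ 0 := by exact_mod_cast he
    rw [← ENNReal.coe_inv he0]
    norm_cast
    rw [← NNReal.coe_le_coe]
    push_cast
    have hsq : 0 ≤ (e : ℝ)⁻¹ * (e * a - b) ^ 2 := by positivity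
    have : (e : ℝ) ≠ 0 := by exact_mod_cast he0
    calc 2 * (a : ℝ) * b ≤ 2 * a * b + (e : ℝ)⁻¹ * (e * a - b) ^ 2 := by linarith
      _ = _ := by field_simp; ring
  calc (a + b) ^ 2 = a ^ 2 + b ^ 2 + 2 * a * b := by ring
    _ ≤ a ^ 2 + b ^ 2 + (e * a ^ 2 + e⁻¹ * b ^ 2) := by gcongr
    _ = _ := by ring

theorem enorm_add_sq_le (e : ℝ≥0∞) (p q : F) :
    ‖p + q‖ₑ ^ 2 ≤ (1 + e) * ‖p‖ₑ ^ 2 + (1 + e⁻¹) * ‖q‖ₑ ^ 2 :=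
  (pow_le_pow_left' (enorm_add_le p q) 2).trans (ennreal_add_sq_le e _ _)

theorem enorm_sum_pow_le_of_subsingleton {ι : Type*} (s : Finset ι) (f : ι → F) {n : ℕ}
    (hn : n ≠ 0) (h : ∀ i ∈ s, ∀ j ∈ s, f i ≠ 0 → f j ≠ 0 → i = j) :
    ‖∑ i ∈ s, f i‖ₑ ^ n ≤ ∑ i ∈ s, ‖f i‖ₑ ^ n := by
  by_cases hz : ∀ i ∈ s, f i = 0
  · simp [Finset.sum_eq_zero hz, hn]
  push Not at hz
  obtain ⟨i, hi, hi0⟩ := hz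
  rw [Finset.sum_eq_single_of_mem i hi fun j hj hji => by
    by_contra hj0
    exact hji (h j hj i hi hj0 hi0)]
  exact Finset.single_le_sum (f := fun i => ‖f i‖ₑ ^ n) (fun _ _ => zero_le) hi

end EnormSq

section Gradient

variable {d : ℕ} {F G : Type*} [NormedAddCommGroup F] [NormedSpace ℝ F] [NormedAddCommGroup G]
  [NormedSpace ℝ G]

/-- The squared Euclidean norm `|∇h|²` of the gradient of a vector-valued function. -/
def gradSq (h : Vec d → F) (z : Vec d) : ℝ≥0∞ :=
  ∑ k, ‖fderiv ℝ h z (Pi.single k 1)‖ₑ ^ 2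

theorem enorm_sq_le_sum_single {κ : Type*} [Fintype κ] [DecidableEq κ] {X : κ → Type*}
    [∀ k, NormedAddCommGroup (X k)] [∀ k, NormedSpace ℝ (X k)] (L : (∀ k, X k) →L[ℝ] F) :
    ‖L‖ₑ ^ 2 ≤ Fintype.card κ * ∑ k, ‖L.comp (.single ℝ X k)‖ₑ ^ 2 := by
  have norm_le : ‖L‖ ≤ ∑ k, ‖L.comp (.single ℝ X k)‖ := by
    refine L.opNorm_le_bound (by positivity) fun x => ?_
    rw [← L.sum_comp_single, Finset.sum_mul]
    refine norm_sum_le_of_le _ fun k _ => (L.comp (.single ℝ X k)).le_opNorm_of_le ?_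
    exact norm_le_pi_norm x k
  have nnnorm_le : ‖L‖₊ ≤ ∑ k, ‖L.comp (.single ℝ X k)‖₊ := by
    rw [← NNReal.coe_le_coe]
    push_cast
    exact norm_le
  simp only [enorm_eq_nnnorm]
  norm_cast
  calc ‖L‖₊ ^ 2 ≤ (∑ k, ‖L.comp (.single ℝ X k)‖₊) ^ 2 := by gcongr
    _ ≤ _ := by
        simpa using sq_sum_le_card_mul_sum_sq (s := Finset.univ)
          (f := fun k => ‖L.comp (.single ℝ X k)‖₊)

theorem enorm_sq_le_sum_basis {κ : Type*} [Fintype κ] [DecidableEq κ] (L : (κ → ℝ) →L[ℝ] F) :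
    ‖L‖ₑ ^ 2 ≤ Fintype.card κ * ∑ k, ‖L (Pi.single k 1)‖ₑ ^ 2 := by
  refine (enorm_sq_le_sum_single L).trans_eq (congr_arg _ (Finset.sum_congr rfl fun k _ => ?_))
  rw [← (L.comp (.single ℝ (fun _ => ℝ) k)).toSpanSingleton_apply_map_one, enorm_eq_nnnorm,
    ContinuousLinearMap.nnnorm_toSpanSingleton]
  rfl

theorem enorm_fderiv_sq_le (h : Vec d → F) (z : Vec d) :
    ‖fderiv ℝ h z‖ₑ ^ 2 ≤ d * gradSq h z := by
  simpa [gradSq] using enorm_sq_le_sum_basis (fderiv ℝ h z)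

theorem enorm_apply_single_le {κ : Type*} [Fintype κ] [DecidableEq κ] (L : (κ → ℝ) →L[ℝ] F)
    (k : κ) : ‖L (Pi.single k 1)‖ₑ ≤ ‖L‖ₑ := by
  have hone : ‖(Pi.single k 1 : κ → ℝ)‖ₑ = 1 := by rw [← ofReal_norm, Pi.norm_single]; simp
  simpa [hone] using L.le_opENorm (Pi.single k 1)

theorem gradSq_le (h : Vec d → F) (z : Vec d) : gradSq h z ≤ d * ‖fderiv ℝ h z‖ₑ ^ 2 := by
  calc gradSq h z ≤ ∑ _k : Fin d, ‖fderiv ℝ h z‖ₑ ^ 2 :=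
        Finset.sum_le_sum fun k _ => by gcongr; exact enorm_apply_single_le _ k
    _ = _ := by simp

theorem measurable_gradSq {h : Vec d → F} (hh : ContDiff ℝ 1 h) : Measurable (gradSq h) :=
  Finset.measurable_sum _ fun _ _ =>
    ((hh.continuous_fderiv one_ne_zero).clm_apply continuous_const).enorm.measurable.pow_const 2

theorem gradSq_comp_smul (h : Vec d → F) (r : ℝ) (z : Vec d) :
    gradSq (fun w => h (r • w)) z = ‖r‖ₑ ^ 2 * gradSq h (r • z) := by
  simp_rw [gradSq, fderiv_comp_smul, smul_apply, enorm_smul, mul_pow, Finset.mul_sum]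

theorem gradSq_comp_add_left (h : Vec d → F) (y z : Vec d) :
    gradSq (fun w => h (y + w)) z = gradSq h (y + z) := by
  simp_rw [gradSq, fderiv_comp_add_left]

/-- The density `|∇h|² + ½W|h|²` of the two-body energy whose infimum defines the scattering
length. -/
def energyDensity (W : Vec d → ℝ≥0∞) (h : Vec d → F) (z : Vec d) : ℝ≥0∞ :=
  gradSq h z + W z * ‖h z‖ₑ ^ 2 / 2

theorem energyDensity_lipschitz_comp_le {χ : F → G} {K : ℝ≥0} (hχ : LipschitzWith K χ)
    (hχd : Differentiable ℝ χ) (hχ0 : χ 0 = 0) (W : Vec d → ℝ≥0∞) {h : Vec d → F}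
    (hh : Differentiable ℝ h) (z : Vec d) :
    energyDensity W (fun w => χ (h w)) z ≤ K ^ 2 * energyDensity W h z := by
  have hgrad : gradSq (fun w => χ (h w)) z ≤ K ^ 2 * gradSq h z := by
    rw [gradSq, gradSq, Finset.mul_sum]
    refine Finset.sum_le_sum fun k _ => ?_
    rw [← mul_pow, fderiv_fun_comp z (hχd _) (hh z)]
    gcongr
    refine ((fderiv ℝ χ (h z)).le_opENorm _).trans (mul_le_mul_left ?_ _)
    exact ENNReal.coe_le_coe.2 (norm_fderiv_le_of_lipschitz ℝ hχ)
  calc energyDensity W (fun w => χ (h w)) z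
      ≤ K ^ 2 * gradSq h z + W z * (K * ‖h z‖ₑ) ^ 2 / 2 := by
        unfold energyDensity
        gcongr
        simpa [hχ0, edist_zero_right] using hχ (h z) 0
    _ = _ := by
        rw [energyDensity, mul_add, mul_pow, ← mul_div_assoc]
        ring_nf

theorem energyDensity_add_le (W : Vec d → ℝ≥0∞) {f g : Vec d → F} (hf : Differentiable ℝ f)
    (hg : Differentiable ℝ g) (z : Vec d) :
    energyDensity W (fun w => f w + g w) z
      ≤ 2 * (energyDensity W f z + energyDensity W g z) := by
  have hsq (p q : F) : ‖p + q‖ₑ ^ 2 ≤ 2 * (‖p‖ₑ ^ 2 + ‖q‖ₑ ^ 2) := by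
    simpa [one_add_one_eq_two, mul_add] using enorm_add_sq_le 1 p q
  calc energyDensity W (fun w => f w + g w) z
      ≤ 2 * (gradSq f z + gradSq g z) + W z * (2 * (‖f z‖ₑ ^ 2 + ‖g z‖ₑ ^ 2)) / 2 := by
        unfold energyDensity
        gcongr
        · simp_rw [gradSq, ← Finset.sum_add_distrib, Finset.mul_sum, fderiv_fun_add (hf z) (hg z)]
          exact Finset.sum_le_sum fun k _ => hsq _ _
        · exact hsq _ _
    _ = _ := by
        simp only [energyDensity, div_eq_mul_inv]
        ring

theorem energyDensity_comp_add_left (W : Vec d → ℝ≥0∞) (h : Vec d → F) (y z : Vec d) :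
    energyDensity W (fun w => h (y + w)) z = energyDensity (fun x => W (x - y)) h (y + z) := by
  simp [energyDensity, gradSq_comp_add_left]

end Gradient

section Scattering

variable {F : Type*} [NormedAddCommGroup F] [NormedSpace ℝ F]

/-- The Gross–Pitaevskii rescaling `x ↦ l² V(l x)` of a potential; the value `⊤` is allowed, so that
hard cores are covered. -/
def scaledPotential {d : ℕ} (V : Vec d → ℝ≥0∞) (l : ℝ) (x : Vec d) : ℝ≥0∞ :=
  ‖l‖ₑ ^ 2 * V (l • x)

/-- The scattering energy of a potential, which is `4π` times its scattering length. -/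
def scatEnergy (V : Vec 3 → ℝ≥0∞) : ℝ≥0∞ := sInf (scatSet3 V)

theorem energyDensity_comp_smul {d : ℕ} (V : Vec d → ℝ≥0∞) {l : ℝ} (hl : l ≠ 0) (h : Vec d → F)
    (z : Vec d) :
    energyDensity V (fun w => h (l⁻¹ • w)) z
      = (‖l‖ₑ ^ 2)⁻¹ * energyDensity (scaledPotential V l) h (l⁻¹ • z) := by
  have hl' : ‖l‖ₑ ^ 2 ≠ 0 := by simpa using hl
  rw [energyDensity, energyDensity, gradSq_comp_smul, enorm_inv hl, ← ENNReal.inv_pow, mul_add,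
    scaledPotential, smul_inv_smul₀ hl, ← mul_div_assoc, ← mul_assoc, ← mul_assoc,
    ENNReal.inv_mul_cancel hl' (by finiteness), one_mul]

-- Composing with a norming functional of `c` reduces the claim to the defining variational problem.
theorem scatEnergy_mul_le (V : Vec 3 → ℝ≥0∞) {g : Vec 3 → F} (hg : ContDiff ℝ (⊤ : ℕ∞) g) {c : F}
    (hc : HasCompactSupport fun z => g z - c) :
    scatEnergy V * ‖c‖ₑ ^ 2 ≤ ∫⁻ z, energyDensity V g z := by
  rcases eq_or_ne c 0 with rfl | hc0
  · simp
  obtain ⟨L, hL, hLc⟩ := exists_dual_vector ℝ c (norm_ne_zero_iff.2 hc0)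
  have hLc1 : (‖c‖⁻¹ • L) c = 1 := by simp [hLc, hc0]
  have hnorm : ‖‖c‖⁻¹ • L‖ₑ ^ 2 = (‖c‖ₑ ^ 2)⁻¹ := by
    have : ‖L‖ₑ = 1 := by rw [← ofReal_norm, hL, ENNReal.ofReal_one]
    rw [enorm_smul, this, mul_one, enorm_inv (norm_ne_zero_iff.2 hc0), enorm_norm, ENNReal.inv_pow]
  have hle : scatEnergy V ≤ ∫⁻ z, energyDensity V (fun w => (‖c‖⁻¹ • L) (g w)) z := by
    refine sInf_le ⟨fun w => (‖c‖⁻¹ • L) (g w), (‖c‖⁻¹ • L).contDiff.comp hg, ?_, rfl⟩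
    convert! hc.comp_left (map_zero (‖c‖⁻¹ • L)) using 1
    ext w
    simp only [Function.comp, map_sub, hLc1]
  have hc2 : ‖c‖ₑ ^ 2 ≠ 0 := by simpa using hc0
  calc scatEnergy V * ‖c‖ₑ ^ 2
      ≤ (∫⁻ z, (‖c‖ₑ ^ 2)⁻¹ * energyDensity V g z) * ‖c‖ₑ ^ 2 := by
        gcongr
        refine hle.trans (lintegral_mono fun z => ?_)
        rw [← hnorm]
        exact energyDensity_lipschitz_comp_le (‖c‖⁻¹ • L).lipschitz
          (‖c‖⁻¹ • L).differentiable (map_zero _) V (hg.differentiable (by simp)) z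
    _ = _ := by
        rw [lintegral_const_mul' _ _ (ENNReal.inv_ne_top.2 hc2), mul_comm, ← mul_assoc,
          ENNReal.mul_inv_cancel hc2 (by finiteness), one_mul]

theorem lintegral_energyDensity_comp_smul (V : Vec 3 → ℝ≥0∞) {l : ℝ} (hl : 0 < l)
    (h : Vec 3 → F) :
    ∫⁻ z, energyDensity V (fun w => h (l⁻¹ • w)) z
      = ENNReal.ofReal l * ∫⁻ z, energyDensity (scaledPotential V l) h z := by
  have hl0 : ENNReal.ofReal l ≠ 0 := by simpa using hl
  have hscale := lintegral_comp_add_smul volume (inv_ne_zero hl.ne') (0 : Vec 3)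
    (energyDensity (scaledPotential V l) h)
  simp only [zero_add, Module.finrank_fin_fun, inv_pow, inv_inv, abs_of_pos (pow_pos hl 3),
    ENNReal.ofReal_pow hl.le] at hscale
  simp_rw [energyDensity_comp_smul V hl.ne' h, Real.enorm_of_nonneg hl.le]
  rw [lintegral_const_mul' _ _ (by finiteness), hscale, ← mul_assoc, pow_succ _ 2,
    ← mul_assoc, ENNReal.inv_mul_cancel (pow_ne_zero 2 hl0) (by finiteness), one_mul]

theorem scatEnergy_mul_le_scaled (V : Vec 3 → ℝ≥0∞) {l : ℝ} (hl : 0 < l) {g : Vec 3 → F}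
    (hg : ContDiff ℝ (⊤ : ℕ∞) g) {c : F} (hc : HasCompactSupport fun z => g z - c) :
    scatEnergy V * ‖c‖ₑ ^ 2
      ≤ ENNReal.ofReal l * ∫⁻ z, energyDensity (scaledPotential V l) g z := by
  rw [← lintegral_energyDensity_comp_smul V hl]
  exact scatEnergy_mul_le V (hg.comp (by fun_prop))
    (hc.comp_homeomorph (Homeomorph.smulOfNeZero l⁻¹ (inv_ne_zero hl.ne')))

end Scattering

/-! ### Cutoffs with small gradient -/

section Cutoff

variable {E : Type*} [NormedAddCommGroup E] [NormedSpace ℝ E] [FiniteDimensional ℝ E]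

/-- The smooth bump at scale `δ / 4 ^ k`: it equals `1` on the ball of radius `δ / (2 * 4 ^ k)` and
vanishes outside the ball of radius `δ / 4 ^ k`. -/
def dyadicBump (δ : ℝ) (k : ℕ) (x : E) : ℝ :=
  (⟨1, 2, one_pos, one_lt_two⟩ : ContDiffBump (0 : E)) ((2 * 4 ^ k / δ) • x)

/-- The average of the first `K` dyadic bumps. Their gradients have disjoint supports and
scale-invariant `Lⁿ` norms, so that averaging makes the `Lⁿ` norm of the gradient small. -/
def dyadicCutoff (δ : ℝ) (K : ℕ) (x : E) : ℝ :=
  (K : ℝ)⁻¹ * ∑ k ∈ Finset.range K, dyadicBump δ k x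

variable {δ : ℝ} {K : ℕ}

theorem contDiff_dyadicBump (δ : ℝ) (k : ℕ) :
    ContDiff ℝ (⊤ : ℕ∞) (dyadicBump δ k : E → ℝ) :=
  (ContDiffBump.contDiff _).comp (by fun_prop)

theorem dyadicBump_nonneg (δ : ℝ) (k : ℕ) (x : E) : 0 ≤ dyadicBump δ k x :=
  ContDiffBump.nonneg _

theorem dyadicBump_le_one (δ : ℝ) (k : ℕ) (x : E) : dyadicBump δ k x ≤ 1 :=
  ContDiffBump.le_one _

theorem dyadicBump_eq_zero (hδ : 0 < δ) {k : ℕ} {x : E} (hx : δ ≤ 4 ^ k * ‖x‖) :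
    dyadicBump δ k x = 0 := by
  refine ContDiffBump.zero_of_le_dist _ ?_
  rw [dist_zero_right, norm_smul, Real.norm_of_nonneg (by positivity), div_mul_eq_mul_div,
    le_div_iff₀ hδ]
  linarith

theorem dyadicBump_eq_one (hδ : 0 < δ) {k : ℕ} {x : E} (hx : 2 * 4 ^ k * ‖x‖ ≤ δ) :
    dyadicBump δ k x = 1 := by
  refine ContDiffBump.one_of_mem_closedBall _ ?_
  rw [mem_closedBall_zero_iff, norm_smul, Real.norm_of_nonneg (by positivity), div_mul_eq_mul_div]
  exact (div_le_one hδ).2 hx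

theorem fderiv_dyadicBump_ne_zero (hδ : 0 < δ) {k : ℕ} {x : E}
    (hx : fderiv ℝ (dyadicBump δ k) x ≠ 0) : δ ≤ 2 * 4 ^ k * ‖x‖ ∧ 4 ^ k * ‖x‖ ≤ δ := by
  constructor <;> by_contra! hlt <;> refine hx ?_
  · have : (dyadicBump δ k : E → ℝ) =ᶠ[nhds x] fun _ => 1 := by
      filter_upwards [(by fun_prop : Continuous fun y : E => 2 * 4 ^ k * ‖y‖).continuousAt
        |>.eventually_lt continuousAt_const hlt] with y hy using dyadicBump_eq_one hδ hy.le
    rw [this.fderiv_eq, fderiv_const_apply]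
  · have : (dyadicBump δ k : E → ℝ) =ᶠ[nhds x] fun _ => 0 := by
      filter_upwards [continuousAt_const.eventually_lt
        (by fun_prop : Continuous fun y : E => 4 ^ k * ‖y‖).continuousAt hlt] with y hy
        using dyadicBump_eq_zero hδ hy.le
    rw [this.fderiv_eq, fderiv_const_apply]

theorem eq_of_fderiv_dyadicBump_ne_zero (hδ : 0 < δ) {x : E} {i j : ℕ}
    (hi : fderiv ℝ (dyadicBump δ i) x ≠ 0) (hj : fderiv ℝ (dyadicBump δ j) x ≠ 0) : i = j := by
  have not_lt : ∀ {i j : ℕ}, fderiv ℝ (dyadicBump δ i) x ≠ 0 →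
      fderiv ℝ (dyadicBump δ j) x ≠ 0 → ¬ i < j := fun {i j} hi hj hij => by
    have hpow : (4 : ℝ) ^ (i + 1) ≤ 4 ^ j := pow_le_pow_right₀ (by norm_num) hij
    have hmul : 4 ^ (i + 1) * ‖x‖ ≤ 4 ^ j * ‖x‖ := by gcongr
    rw [pow_succ] at hmul
    linarith [(fderiv_dyadicBump_ne_zero hδ hi).1, (fderiv_dyadicBump_ne_zero hδ hj).2]
  exact le_antisymm (Nat.not_lt.1 (not_lt hj hi)) (Nat.not_lt.1 (not_lt hi hj))

theorem dyadicCutoff_nonneg (δ : ℝ) (K : ℕ) (x : E) : 0 ≤ dyadicCutoff δ K x :=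
  mul_nonneg (by positivity) (Finset.sum_nonneg fun _ _ => dyadicBump_nonneg _ _ _)

theorem dyadicCutoff_le_one (δ : ℝ) (K : ℕ) (x : E) : dyadicCutoff δ K x ≤ 1 := by
  have hsum : ∑ k ∈ Finset.range K, dyadicBump δ k x ≤ K := by
    simpa using Finset.sum_le_card_nsmul (Finset.range K) _ 1 fun k _ => dyadicBump_le_one δ k x
  exact inv_mul_le_one_of_le₀ hsum (by positivity)

theorem contDiff_dyadicCutoff (δ : ℝ) (K : ℕ) :
    ContDiff ℝ (⊤ : ℕ∞) (dyadicCutoff δ K : E → ℝ) :=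
  contDiff_const.mul (ContDiff.sum fun k _ => contDiff_dyadicBump δ k)

theorem dyadicCutoff_eq_zero (hδ : 0 < δ) {x : E} (hx : δ ≤ ‖x‖) : dyadicCutoff δ K x = 0 := by
  rw [dyadicCutoff, Finset.sum_eq_zero, mul_zero]
  exact fun k _ => dyadicBump_eq_zero hδ <|
    hx.trans (le_mul_of_one_le_left (norm_nonneg x) (one_le_pow₀ (by norm_num)))

theorem dyadicCutoff_eq_one (hδ : 0 < δ) (hK : K ≠ 0) {x : E} (hx : 2 * 4 ^ K * ‖x‖ ≤ δ) :
    dyadicCutoff δ K x = 1 := by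
  rw [dyadicCutoff, Finset.sum_congr rfl fun k hk => dyadicBump_eq_one hδ (le_trans ?_ hx)]
  · simp [hK]
  · gcongr
    · norm_num
    · exact (Finset.mem_range.1 hk).le

variable [MeasurableSpace E] [BorelSpace E] (μ : Measure E) [μ.IsAddHaarMeasure]

theorem lintegral_fderiv_dyadicBump_pow (hδ : 0 < δ) (k : ℕ) :
    ∫⁻ x, ‖fderiv ℝ (dyadicBump δ k : E → ℝ) x‖ₑ ^ Module.finrank ℝ E ∂μ
      = ∫⁻ x, ‖fderiv ℝ (dyadicBump 2 0 : E → ℝ) x‖ₑ ^ Module.finrank ℝ E ∂μ := by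
  have hs : 0 < 2 * 4 ^ k / δ := by positivity
  have hbump : (dyadicBump δ k : E → ℝ) = fun x => dyadicBump 2 0 ((2 * 4 ^ k / δ) • x) := by
    ext x
    simp [dyadicBump]
  have hscale := lintegral_comp_add_smul μ hs.ne' 0
    (fun x : E => ‖fderiv ℝ (dyadicBump 2 0 : E → ℝ) x‖ₑ ^ Module.finrank ℝ E)
  simp only [zero_add] at hscale
  simp_rw [hbump, fderiv_comp_smul, enorm_smul, mul_pow]
  rw [lintegral_const_mul' _ _ (by finiteness), hscale, ← mul_assoc, Real.enorm_of_nonneg hs.le,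
    ← ENNReal.ofReal_pow hs.le, abs_of_pos (by positivity), ← ENNReal.ofReal_mul (by positivity),
    mul_inv_cancel₀ (by positivity), ENNReal.ofReal_one, one_mul]

theorem lintegral_fderiv_dyadicBump_pow_lt_top [Nontrivial E] :
    ∫⁻ x, ‖fderiv ℝ (dyadicBump 2 0 : E → ℝ) x‖ₑ ^ Module.finrank ℝ E ∂μ < ⊤ := by
  have hsupp : HasCompactSupport (dyadicBump 2 0 : E → ℝ) := by
    refine HasCompactSupport.intro (isCompact_closedBall (0 : E) 2) fun x hx => ?_
    rw [mem_closedBall_zero_iff, not_le] at hx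
    exact dyadicBump_eq_zero two_pos (by linarith)
  have hcont := (contDiff_dyadicBump (E := E) 2 0).continuous_fderiv (by simp)
  have hmem := (hcont.memLp_of_hasCompactSupport (p := Module.finrank ℝ E) (μ := μ)
    (hsupp.fderiv ℝ)).eLpNorm_lt_top
  rw [eLpNorm_lt_top_iff_lintegral_rpow_enorm_lt_top
    (by simpa using Module.finrank_pos.ne') (by simp)] at hmem
  simpa using hmem

theorem mul_lintegral_fderiv_dyadicCutoff_pow_le (hδ : 0 < δ) (hK : K ≠ 0)
    (hn : 2 ≤ Module.finrank ℝ E) :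
    K * ∫⁻ x, ‖fderiv ℝ (dyadicCutoff δ K : E → ℝ) x‖ₑ ^ Module.finrank ℝ E ∂μ
      ≤ ∫⁻ x, ‖fderiv ℝ (dyadicBump 2 0 : E → ℝ) x‖ₑ ^ Module.finrank ℝ E ∂μ := by
  set n := Module.finrank ℝ E
  set A := ∫⁻ x, ‖fderiv ℝ (dyadicBump 2 0 : E → ℝ) x‖ₑ ^ n ∂μ
  have hd : ∀ k, Differentiable ℝ (dyadicBump δ k : E → ℝ) := fun k =>
    (contDiff_dyadicBump δ k).differentiable (by simp)
  have hpointwise : ∀ x : E, ‖fderiv ℝ (dyadicCutoff δ K) x‖ₑ ^ n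
      ≤ (K : ℝ≥0∞)⁻¹ ^ n * ∑ k ∈ Finset.range K, ‖fderiv ℝ (dyadicBump δ k) x‖ₑ ^ n := fun x => by
    have hderiv : fderiv ℝ (dyadicCutoff δ K) x
        = (K : ℝ)⁻¹ • ∑ k ∈ Finset.range K, fderiv ℝ (dyadicBump δ k) x := by
      unfold dyadicCutoff
      rw [fderiv_const_mul (by fun_prop), fderiv_fun_sum fun k _ => hd k x]
    rw [hderiv, enorm_smul, mul_pow, enorm_inv (by positivity), Real.enorm_natCast]
    gcongr
    exact enorm_sum_pow_le_of_subsingleton _ _ (by lia) fun i _ j _ hi hj =>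
      eq_of_fderiv_dyadicBump_ne_zero hδ hi hj
  have hK0 : (K : ℝ≥0∞) ≠ 0 := by exact_mod_cast hK
  calc K * ∫⁻ x, ‖fderiv ℝ (dyadicCutoff δ K : E → ℝ) x‖ₑ ^ n ∂μ
      ≤ K * ∫⁻ x, (K : ℝ≥0∞)⁻¹ ^ n
          * ∑ k ∈ Finset.range K, ‖fderiv ℝ (dyadicBump δ k) x‖ₑ ^ n ∂μ := by
        gcongr with x
        exact hpointwise x
    _ = K * ((K : ℝ≥0∞)⁻¹ ^ n * (K * A)) := by
        rw [lintegral_const_mul' _ _ (by finiteness), lintegral_finsetSum _ fun k _ =>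
          ((contDiff_dyadicBump δ k).continuous_fderiv (by simp)).enorm.measurable.pow_const n]
        simp_rw [n, lintegral_fderiv_dyadicBump_pow μ hδ]
        simp [A, n]
    _ ≤ K * ((K : ℝ≥0∞)⁻¹ ^ 2 * (K * A)) := by
        gcongr 2
        exact pow_le_pow_right_of_le_one' (ENNReal.inv_le_one.2 (by exact_mod_cast hK.bot_lt)) hn
    _ = (K * (K : ℝ≥0∞)⁻¹) ^ 2 * A := by ring
    _ = A := by rw [ENNReal.mul_inv_cancel hK0 (by simp)]; simp

theorem exists_cutoff (hn : 2 ≤ Module.finrank ℝ E) {δ : ℝ} (hδ : 0 < δ) {ε : ℝ≥0∞} (hε : ε ≠ 0) :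
    ∃ χ : E → ℝ, ContDiff ℝ (⊤ : ℕ∞) χ ∧ (∀ x, χ x ∈ Set.Icc 0 1) ∧ (∀ x, δ ≤ ‖x‖ → χ x = 0) ∧
      (∀ᶠ x in nhds 0, χ x = 1) ∧ ∫⁻ x, ‖fderiv ℝ χ x‖ₑ ^ Module.finrank ℝ E ∂μ ≤ ε := by
  have : Nontrivial E := Module.nontrivial_of_finrank_pos (R := ℝ) (by lia)
  obtain ⟨K, hK⟩ := ENNReal.exists_nat_mul_gt hε (lintegral_fderiv_dyadicBump_pow_lt_top μ).ne
  have hK0 : K ≠ 0 := by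
    rintro rfl
    simp at hK
  have hnear : ∀ᶠ x : E in nhds 0, 2 * 4 ^ K * ‖x‖ < δ :=
    (by fun_prop : Continuous fun y : E => 2 * 4 ^ K * ‖y‖).continuousAt.eventually_lt
      continuousAt_const (by simpa using hδ)
  refine ⟨dyadicCutoff δ K, contDiff_dyadicCutoff δ K,
    fun x => ⟨dyadicCutoff_nonneg δ K x, dyadicCutoff_le_one δ K x⟩,
    fun x => dyadicCutoff_eq_zero hδ, hnear.mono fun x hx => dyadicCutoff_eq_one hδ hK0 hx.le, ?_⟩
  exact (ENNReal.mul_le_mul_iff_right (by exact_mod_cast hK0) (by simp)).1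
    ((mul_lintegral_fderiv_dyadicCutoff_pow_le μ hδ hK0 hn).trans hK.le)

end Cutoff

section EnormBounds

variable {E F : Type*} [NormedAddCommGroup E] [NormedSpace ℝ E] [NormedAddCommGroup F]
  [NormedSpace ℝ F]

theorem enorm_fderiv_eq_zero_of_notMem_tsupport {f : E → F} {x : E} (hx : x ∉ tsupport f) :
    ‖fderiv ℝ f x‖ₑ = 0 := by
  rw [image_eq_zero_of_notMem_tsupport fun h => hx (tsupport_fderiv_subset ℝ h), ← ofReal_norm,
    norm_zero, ENNReal.ofReal_zero]

theorem exists_enorm_fderiv_le {η : E → F} (hη : ContDiff ℝ 1 η) (hs : HasCompactSupport η) :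
    ∃ B : ℝ≥0, ∀ x, ‖fderiv ℝ η x‖ₑ ≤ B := by
  obtain ⟨B, hB⟩ := (hη.continuous_fderiv one_ne_zero).bounded_above_of_compact_support
    (hs.fderiv ℝ)
  refine ⟨B.toNNReal, fun x => ?_⟩
  rw [← ofReal_norm]
  exact ENNReal.ofReal_le_ofReal (hB x)

theorem enorm_le_one_of_mem_Icc {t : ℝ} (ht : t ∈ Set.Icc (0 : ℝ) 1) : ‖t‖ₑ ≤ 1 := by
  rw [Real.enorm_of_nonneg ht.1]
  exact ENNReal.ofReal_le_one.2 ht.2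

theorem exists_lintegral_fderiv_smul_sq_le [MeasurableSpace E] (μ : Measure E) {η : E → ℝ}
    (hη : ContDiff ℝ 1 η) (hη01 : ∀ x, η x ∈ Set.Icc 0 1) {s : Set E} (hs : MeasurableSet s)
    (hηs : tsupport η ⊆ s) (hηc : HasCompactSupport η) :
    ∃ C : ℝ≥0, ∀ h : E → F, ContDiff ℝ 1 h →
      ∫⁻ x, ‖fderiv ℝ (fun x => η x • h x) x‖ₑ ^ 2 ∂μ
        ≤ C * ∫⁻ x in s, (‖fderiv ℝ h x‖ₑ ^ 2 + ‖h x‖ₑ ^ 2) ∂μ := by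
  obtain ⟨B, hB⟩ := exists_enorm_fderiv_le hη hηc
  refine ⟨2 * (1 + B ^ 2), fun h hh => ?_⟩
  have hinside : ∀ x, ‖fderiv ℝ (fun x => η x • h x) x‖ₑ ^ 2
      ≤ 2 * (1 + B ^ 2) * (‖fderiv ℝ h x‖ₑ ^ 2 + ‖h x‖ₑ ^ 2) := fun x => by
    rw [fderiv_fun_smul (hη.differentiable one_ne_zero x) (hh.differentiable one_ne_zero x)]
    have hsmul : ‖(fderiv ℝ η x).smulRight (h x)‖ₑ ≤ B * ‖h x‖ₑ := by
      rw [← ofReal_norm, ContinuousLinearMap.norm_smulRight_apply,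
        ENNReal.ofReal_mul (norm_nonneg _), ofReal_norm, ofReal_norm]
      gcongr
      exact hB x
    calc ‖η x • fderiv ℝ h x + (fderiv ℝ η x).smulRight (h x)‖ₑ ^ 2
        ≤ (1 + 1) * ‖η x • fderiv ℝ h x‖ₑ ^ 2
          + (1 + 1⁻¹) * ‖(fderiv ℝ η x).smulRight (h x)‖ₑ ^ 2 := enorm_add_sq_le 1 _ _
      _ ≤ (1 + 1) * (1 * ‖fderiv ℝ h x‖ₑ) ^ 2 + (1 + 1⁻¹) * (B * ‖h x‖ₑ) ^ 2 := by
          rw [enorm_smul]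
          gcongr
          exact enorm_le_one_of_mem_Icc (hη01 x)
      _ = 2 * ‖fderiv ℝ h x‖ₑ ^ 2 + 2 * B ^ 2 * ‖h x‖ₑ ^ 2 := by
          rw [inv_one, one_add_one_eq_two]
          ring
      _ ≤ (2 * ‖fderiv ℝ h x‖ₑ ^ 2 + 2 * B ^ 2 * ‖h x‖ₑ ^ 2)
          + (2 * B ^ 2 * ‖fderiv ℝ h x‖ₑ ^ 2 + 2 * ‖h x‖ₑ ^ 2) := le_self_add
      _ = _ := by ring
  push_cast
  rw [← lintegral_const_mul' _ _ (by finiteness), ← lintegral_indicator hs]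
  refine lintegral_mono fun x => ?_
  by_cases hx : x ∈ s
  · simpa only [Set.indicator_of_mem hx] using hinside x
  · have hsupp : x ∉ tsupport fun x => η x • h x := fun hxu =>
      hx (hηs (tsupport_smul_subset_left η h hxu))
    simp [enorm_fderiv_eq_zero_of_notMem_tsupport hsupp]

end EnormBounds

theorem exists_nnreal_mul_rpow_le {C ε : ℝ≥0} (hε : 0 < ε) {r : ℝ} (hr : 0 < r) :
    ∃ t : ℝ≥0∞, t ≠ 0 ∧ t ^ r * C ≤ ε := by
  have ht : 0 < ε / (C + 1) := by positivity
  refine ⟨(ε / (C + 1) : ℝ≥0) ^ r⁻¹, ?_, ?_⟩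
  · exact (ENNReal.rpow_pos (by exact_mod_cast ht) ENNReal.coe_ne_top).ne'
  · rw [← ENNReal.rpow_mul, inv_mul_cancel₀ hr.ne', ENNReal.rpow_one]
    norm_cast
    calc ε / (C + 1) * C = ε * (C / (C + 1)) := by ring
      _ ≤ ε * 1 := by
          gcongr
          exact div_le_one_of_le₀ (by simp) (by positivity)
      _ = ε := mul_one ε

theorem eLpNorm_sq_eq_lintegral_rpow {α : Type*} [MeasurableSpace α] (μ : Measure α)
    {F : Type*} [NormedAddCommGroup F] (u : α → F) {p : ℝ≥0} (hp : p ≠ 0) :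
    eLpNorm u p μ ^ 2 = (∫⁻ x, ‖u x‖ₑ ^ (p : ℝ) ∂μ) ^ (2 / p : ℝ) := by
  rw [eLpNorm_eq_lintegral_rpow_enorm_toReal (by exact_mod_cast hp) (by simp),
    ← ENNReal.rpow_natCast, ← ENNReal.rpow_mul, ENNReal.coe_toReal]
  congr 1
  push_cast
  ring

theorem tsupport_subset_closedBall {E F : Type*} [NormedAddCommGroup E] [Zero F] {f : E → F}
    {r : ℝ} (hf : ∀ x, r ≤ ‖x‖ → f x = 0) : tsupport f ⊆ Metric.closedBall 0 r := by
  refine closure_minimal (fun x hx => ?_) Metric.isClosed_closedBall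
  rw [mem_closedBall_zero_iff]
  by_contra! hlt
  exact hx (hf x hlt.le)

section SmallCutoff

variable {E : Type*} [NormedAddCommGroup E] [NormedSpace ℝ E] [FiniteDimensional ℝ E]
  [MeasurableSpace E] [BorelSpace E] (μ : Measure E) [μ.IsAddHaarMeasure]
  (F : Type*) [NormedAddCommGroup F] [NormedSpace ℝ F] [FiniteDimensional ℝ F]

theorem exists_lintegral_sq_mul_sq_le (hn : 2 < Module.finrank ℝ E) :
    ∃ C : ℝ≥0, ∀ (u : E → F) (w : E → ℝ≥0∞), ContDiff ℝ 1 u → HasCompactSupport u → Measurable w →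
      ∫⁻ x, w x ^ 2 * ‖u x‖ₑ ^ 2 ∂μ
        ≤ (∫⁻ x, w x ^ Module.finrank ℝ E ∂μ) ^ (2 / Module.finrank ℝ E : ℝ)
          * (C * ∫⁻ x, ‖fderiv ℝ u x‖ₑ ^ 2 ∂μ) := by
  set n := Module.finrank ℝ E
  have hn' : (2 : ℝ) < n := by exact_mod_cast hn
  have hinv : (0 : ℝ) < 2⁻¹ - (n : ℝ)⁻¹ := sub_pos.2 (inv_strictAnti₀ two_pos hn')
  -- The Sobolev exponent `2n / (n - 2)`.
  obtain ⟨p, hp⟩ : ∃ p : ℝ≥0, (p : ℝ)⁻¹ = 2⁻¹ - (n : ℝ)⁻¹ :=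
    ⟨⟨(2⁻¹ - (n : ℝ)⁻¹)⁻¹, by positivity⟩, inv_inv _⟩
  have hp0 : (0 : ℝ) < p := inv_pos.1 (hp ▸ hinv)
  refine ⟨SNormLESNormFDerivOfEqConst F μ 2 ^ 2, fun u w hu hs hw => ?_⟩
  have hsobolev := eLpNorm_le_eLpNorm_fderiv_of_eq (μ := μ) (F := F) hu hs (p := 2) (p' := p)
    (by norm_num) (by lia) (by rw [hp]; simp [n])
  have hL2 : eLpNorm (fderiv ℝ u) (2 : ℝ≥0) μ ^ 2 = ∫⁻ x, ‖fderiv ℝ u x‖ₑ ^ 2 ∂μ := by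
    rw [eLpNorm_sq_eq_lintegral_rpow μ _ two_ne_zero]
    simp
  calc ∫⁻ x, w x ^ 2 * ‖u x‖ₑ ^ 2 ∂μ
      = ∫⁻ x, (w x ^ n) ^ (2 / n : ℝ) * (‖u x‖ₑ ^ (p : ℝ)) ^ (2 / p : ℝ) ∂μ := by
        refine lintegral_congr fun x => ?_
        have hn0 : (n : ℝ) ≠ 0 := by positivity
        simp_rw [← ENNReal.rpow_natCast, ← ENNReal.rpow_mul, mul_div_cancel₀ _ hn0,
          mul_div_cancel₀ _ hp0.ne', Nat.cast_ofNat]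
    _ ≤ (∫⁻ x, w x ^ n ∂μ) ^ (2 / n : ℝ) * (∫⁻ x, ‖u x‖ₑ ^ (p : ℝ) ∂μ) ^ (2 / p : ℝ) :=
        ENNReal.lintegral_mul_norm_pow_le (hw.pow_const n).aemeasurable
          (hu.continuous.enorm.measurable.pow_const _).aemeasurable (by positivity) (by positivity)
          (by rw [div_eq_mul_inv _ (p : ℝ), hp]; field_simp; ring)
    _ ≤ (∫⁻ x, w x ^ n ∂μ) ^ (2 / n : ℝ)
          * (SNormLESNormFDerivOfEqConst F μ 2 * eLpNorm (fderiv ℝ u) (2 : ℝ≥0) μ) ^ 2 := by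
        rw [← eLpNorm_sq_eq_lintegral_rpow μ u (by exact_mod_cast hp0.ne')]
        gcongr
        exact hsobolev
    _ = _ := by
        rw [mul_pow, hL2]
        push_cast
        rfl

theorem exists_cutoff_lintegral_le (hn : 2 < Module.finrank ℝ E) {ε : ℝ≥0} (hε : 0 < ε) {δ : ℝ}
    (hδ : 0 < δ) :
    ∃ χ : E → ℝ, ContDiff ℝ (⊤ : ℕ∞) χ ∧ (∀ x, χ x ∈ Set.Icc 0 1) ∧ (∀ x, δ ≤ ‖x‖ → χ x = 0) ∧
      (∀ᶠ x in nhds 0, χ x = 1) ∧ ∀ h : E → F, ContDiff ℝ 1 h →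
        ∫⁻ x, ‖fderiv ℝ χ x‖ₑ ^ 2 * ‖h x‖ₑ ^ 2 ∂μ
          ≤ ε * ∫⁻ x in Metric.ball 0 δ, (‖fderiv ℝ h x‖ₑ ^ 2 + ‖h x‖ₑ ^ 2) ∂μ := by
  let η : ContDiffBump (0 : E) := ⟨δ / 2, δ * (3 / 4), by positivity, by linarith⟩
  have hηball : tsupport η ⊆ Metric.ball 0 δ := by
    rw [η.tsupport_eq]
    exact Metric.closedBall_subset_ball (by change δ * (3 / 4) < δ; linarith)
  obtain ⟨C₁, hC₁⟩ := exists_lintegral_sq_mul_sq_le μ F hn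
  obtain ⟨C₂, hC₂⟩ := exists_lintegral_fderiv_smul_sq_le (F := F) μ η.contDiff
    (fun x => ⟨η.nonneg, η.le_one⟩) measurableSet_ball hηball η.hasCompactSupport
  obtain ⟨t, ht0, ht⟩ := exists_nnreal_mul_rpow_le (C := C₁ * C₂) hε
    (r := 2 / Module.finrank ℝ E) (by positivity)
  obtain ⟨χ, hχ, hχ01, hχδ, hχnear, hχt⟩ := exists_cutoff μ hn.le (half_pos hδ) ht0
  refine ⟨χ, hχ, hχ01, fun x hx => hχδ x (by linarith), hχnear, fun h hh => ?_⟩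
  have hlocal (x : E) :
      ‖fderiv ℝ χ x‖ₑ ^ 2 * ‖h x‖ₑ ^ 2 = ‖fderiv ℝ χ x‖ₑ ^ 2 * ‖η x • h x‖ₑ ^ 2 := by
    by_cases hx : x ∈ Metric.closedBall 0 (δ / 2)
    · rw [η.one_of_mem_closedBall hx, one_smul]
    · simp [enorm_fderiv_eq_zero_of_notMem_tsupport fun h =>
        hx (tsupport_subset_closedBall hχδ h)]
  calc ∫⁻ x, ‖fderiv ℝ χ x‖ₑ ^ 2 * ‖h x‖ₑ ^ 2 ∂μ
      = ∫⁻ x, ‖fderiv ℝ χ x‖ₑ ^ 2 * ‖η x • h x‖ₑ ^ 2 ∂μ := lintegral_congr hlocal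
    _ ≤ t ^ (2 / Module.finrank ℝ E : ℝ)
          * (C₁ * (C₂ * ∫⁻ x in Metric.ball 0 δ, (‖fderiv ℝ h x‖ₑ ^ 2 + ‖h x‖ₑ ^ 2) ∂μ)) := by
        refine (hC₁ _ _ (η.contDiff.smul hh) η.hasCompactSupport.smul_right
          (hχ.continuous_fderiv (by simp)).enorm.measurable).trans ?_
        gcongr
        exact hC₂ h hh
    _ = t ^ (2 / Module.finrank ℝ E : ℝ) * (C₁ * C₂ : ℝ≥0)
          * ∫⁻ x in Metric.ball 0 δ, (‖fderiv ℝ h x‖ₑ ^ 2 + ‖h x‖ₑ ^ 2) ∂μ := by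
        push_cast
        ring
    _ ≤ _ := by gcongr

end SmallCutoff

section LocalScattering

variable {d : ℕ} {F : Type*} [NormedAddCommGroup F] [NormedSpace ℝ F]

theorem gradSq_smul_add_le (ε : ℝ≥0∞) {χ : Vec d → ℝ} {h : Vec d → F} (hχ : Differentiable ℝ χ)
    (hh : Differentiable ℝ h) (c : F) (z : Vec d) :
    gradSq (fun z => χ z • h z + c) z ≤
      (1 + ε) * (‖χ z‖ₑ ^ 2 * gradSq h z) + (1 + ε⁻¹) * (gradSq χ z * ‖h z‖ₑ ^ 2) := by
  calc gradSq (fun z => χ z • h z + c) z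
      ≤ ∑ k, ((1 + ε) * ‖χ z • fderiv ℝ h z (Pi.single k 1)‖ₑ ^ 2
          + (1 + ε⁻¹) * ‖fderiv ℝ χ z (Pi.single k 1) • h z‖ₑ ^ 2) := by
        refine Finset.sum_le_sum fun k _ => ?_
        rw [fderiv_add_const, fderiv_fun_smul (hχ z) (hh z)]
        exact enorm_add_sq_le ε _ _
    _ = _ := by
        simp_rw [gradSq, Finset.sum_mul, Finset.mul_sum, enorm_smul, mul_pow,
          Finset.sum_add_distrib]

theorem energyDensity_smul_sub_add_le (ε : ℝ≥0∞) {χ : Vec d → ℝ} {h : Vec d → F}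
    (hχ : Differentiable ℝ χ) (hh : Differentiable ℝ h) (hχ01 : ∀ x, χ x ∈ Set.Icc 0 1)
    {s : Set (Vec d)} (hχs : ∀ x ∉ s, χ x = 0) {W : Vec d → ℝ≥0∞} (hW : ∀ x, W x ≠ 0 → χ x = 1)
    (c : F) (z : Vec d) :
    energyDensity W (fun z => χ z • (h z - c) + c) z ≤
      s.indicator (fun z => (1 + ε) * energyDensity W h z) z
        + (1 + ε⁻¹) * d * (‖fderiv ℝ χ z‖ₑ ^ 2 * ‖h z - c‖ₑ ^ 2) := by
  have hgrad : gradSq (fun z => χ z • (h z - c) + c) z ≤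
      (1 + ε) * (‖χ z‖ₑ ^ 2 * gradSq h z)
        + (1 + ε⁻¹) * d * (‖fderiv ℝ χ z‖ₑ ^ 2 * ‖h z - c‖ₑ ^ 2) := by
    refine (gradSq_smul_add_le ε hχ (hh.sub_const c) c z).trans ?_
    have hsub : gradSq (fun z => h z - c) z = gradSq h z := by simp_rw [gradSq, fderiv_sub_const]
    rw [hsub, mul_assoc (1 + ε⁻¹), ← mul_assoc (d : ℝ≥0∞)]
    gcongr
    exact gradSq_le χ z
  have hpot : W z * ‖χ z • (h z - c) + c‖ₑ ^ 2 / 2 ≤ (1 + ε) * (W z * ‖h z‖ₑ ^ 2 / 2) := by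
    rcases eq_or_ne (W z) 0 with h0 | h0
    · simp [h0]
    · rw [hW z h0, one_smul, sub_add_cancel]
      exact le_mul_of_one_le_left zero_le le_self_add
  by_cases hz : z ∈ s
  · calc _ ≤ (1 + ε) * (1 ^ 2 * gradSq h z)
          + (1 + ε⁻¹) * d * (‖fderiv ℝ χ z‖ₑ ^ 2 * ‖h z - c‖ₑ ^ 2)
          + (1 + ε) * (W z * ‖h z‖ₑ ^ 2 / 2) := by
          refine add_le_add (hgrad.trans ?_) hpot
          gcongr
          exact enorm_le_one_of_mem_Icc (hχ01 z)
      _ = _ := by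
          rw [Set.indicator_of_mem hz, energyDensity]
          ring
  · have hχz := hχs z hz
    have hWz : W z = 0 := by
      by_contra h0
      exact zero_ne_one (hχz.symm.trans (hW z h0))
    simpa [energyDensity, Set.indicator_of_notMem hz, hWz, hχz] using hgrad

theorem measurable_energyDensity {W : Vec d → ℝ≥0∞} (hW : Measurable W) {h : Vec d → F}
    (hh : ContDiff ℝ 1 h) : Measurable (energyDensity W h) :=
  (measurable_gradSq hh).add
    ((hW.mul (hh.continuous.enorm.measurable.pow_const 2)).div_const 2)

theorem enorm_fderiv_sq_add_le (W : Vec d → ℝ≥0∞) (h : Vec d → F) (z : Vec d) (b : ℝ≥0∞) :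
    ‖fderiv ℝ h z‖ₑ ^ 2 + b ≤ (d + 1) * (energyDensity W h z + b) :=
  calc ‖fderiv ℝ h z‖ₑ ^ 2 + b ≤ d * energyDensity W h z + b := by
        gcongr
        exact (enorm_fderiv_sq_le h z).trans (mul_le_mul_right le_self_add _)
    _ ≤ d * energyDensity W h z + b + (energyDensity W h z + d * b) := le_self_add
    _ = _ := by ring

theorem one_add_half_mul_add_le (ε a b : ℝ≥0∞) :
    (1 + ε / 2) * a + ε / 2 * (a + b) ≤ (1 + ε) * a + ε * b :=
  calc (1 + ε / 2) * a + ε / 2 * (a + b) = (1 + (ε / 2 + ε / 2)) * a + ε / 2 * b := by ring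
    _ ≤ _ := by
        rw [ENNReal.add_halves]
        gcongr
        exact ENNReal.half_le_self

theorem lintegral_energyDensity_smul_sub_add_le {ε ε₁ : ℝ≥0}
    (hε₁ : (1 + (ε / 2 : ℝ≥0∞)⁻¹) * d * (ε₁ * (d + 1)) ≤ ε / 2) {χ : Vec d → ℝ}
    (hχ : ContDiff ℝ 1 χ) (hχ01 : ∀ x, χ x ∈ Set.Icc 0 1) {s : Set (Vec d)} (hs : MeasurableSet s)
    (hχs : ∀ x ∉ s, χ x = 0) {W : Vec d → ℝ≥0∞} (hWm : Measurable W)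
    (hW : ∀ x, W x ≠ 0 → χ x = 1) {h : Vec d → F} (hh : ContDiff ℝ 1 h) (c : F)
    (hgrad : ∫⁻ z, ‖fderiv ℝ χ z‖ₑ ^ 2 * ‖h z - c‖ₑ ^ 2
      ≤ ε₁ * ∫⁻ z in s, (‖fderiv ℝ h z‖ₑ ^ 2 + ‖h z - c‖ₑ ^ 2)) :
    ∫⁻ z, energyDensity W (fun z => χ z • (h z - c) + c) z
      ≤ ∫⁻ z in s, ((1 + ε) * energyDensity W h z + ε * ‖h z - c‖ₑ ^ 2) := by
  set D := energyDensity W h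
  set Z := fun z => ‖h z - c‖ₑ ^ 2
  have hD : Measurable D := measurable_energyDensity hWm hh
  have hZ : Measurable Z := ((hh.continuous.sub continuous_const).enorm.measurable.pow_const 2)
  calc ∫⁻ z, energyDensity W (fun z => χ z • (h z - c) + c) z
      ≤ ∫⁻ z, (s.indicator (fun z => (1 + (ε / 2 : ℝ≥0∞)) * D z) z
          + (1 + (ε / 2 : ℝ≥0∞)⁻¹) * d * (‖fderiv ℝ χ z‖ₑ ^ 2 * Z z)) :=
        lintegral_mono fun z => energyDensity_smul_sub_add_le _ (hχ.differentiable one_ne_zero)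
          (hh.differentiable one_ne_zero) hχ01 hχs hW c z
    _ ≤ (1 + (ε / 2 : ℝ≥0∞)) * (∫⁻ z in s, D z)
          + (1 + (ε / 2 : ℝ≥0∞)⁻¹) * d * (ε₁ * ∫⁻ z in s, (d + 1) * (D z + Z z)) := by
        rw [lintegral_add_left ((hD.const_mul _).indicator hs), lintegral_indicator hs,
          lintegral_const_mul _ hD, lintegral_const_mul _ (by fun_prop)]
        gcongr
        exact hgrad.trans (mul_le_mul_right (lintegral_mono fun z =>
          enorm_fderiv_sq_add_le W h z (Z z)) _)
    _ = (1 + (ε / 2 : ℝ≥0∞)) * (∫⁻ z in s, D z)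
          + (1 + (ε / 2 : ℝ≥0∞)⁻¹) * d * (ε₁ * (d + 1)) * ∫⁻ z in s, (D z + Z z) := by
        rw [lintegral_const_mul _ (by fun_prop)]
        ring
    _ ≤ (1 + (ε / 2 : ℝ≥0∞)) * (∫⁻ z in s, D z) + (ε / 2 : ℝ≥0∞) * ∫⁻ z in s, (D z + Z z) := by
        gcongr
    _ ≤ _ := by
        rw [← lintegral_const_mul _ hD, ← lintegral_const_mul _ (by fun_prop),
          ← lintegral_add_left (hD.const_mul _)]
        exact lintegral_mono fun z => one_add_half_mul_add_le ε (D z) (Z z)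

theorem eventually_comp_smul_ne_zero_imp {M : Type*} [Zero M] {g : Vec d → M}
    (hg : HasCompactSupport g) {p : Vec d → Prop} (hp : ∀ᶠ x in nhds 0, p x) :
    ∀ᶠ l : ℝ in atTop, ∀ x, g (l • x) ≠ 0 → p x := by
  obtain ⟨r, hr, hball⟩ := Metric.eventually_nhds_iff_ball.1 hp
  obtain ⟨R, hR⟩ := hg.isCompact.isBounded.subset_closedBall (0 : Vec d)
  filter_upwards [eventually_gt_atTop (R / r), eventually_gt_atTop 0] with l hl hl0 x hx
  have hlx : l • x ∈ Metric.closedBall (0 : Vec d) R := hR (subset_tsupport g hx)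
  rw [mem_closedBall_zero_iff, norm_smul, Real.norm_of_nonneg hl0.le] at hlx
  refine hball x (mem_ball_zero_iff.2 (lt_of_mul_lt_mul_left ?_ hl0.le))
  exact hlx.trans_lt ((div_lt_iff₀ hr).1 hl)

theorem measurable_scaledPotential {V : Vec d → ℝ≥0∞} (hV : Measurable V) (l : ℝ) :
    Measurable (scaledPotential V l) :=
  (hV.comp (measurable_const_smul l)).const_mul _

variable (F) [FiniteDimensional ℝ F]

theorem eventually_scatEnergy_mul_le_ball_zero {V : Vec 3 → ℝ≥0∞} (hV : Measurable V)
    (hVs : HasCompactSupport V) {ε : ℝ≥0} (hε : 0 < ε) {δ : ℝ} (hδ : 0 < δ) :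
    ∀ᶠ l : ℝ in atTop, ∀ (h : Vec 3 → F) (c : F), ContDiff ℝ (⊤ : ℕ∞) h →
      scatEnergy V * ‖c‖ₑ ^ 2 ≤ ENNReal.ofReal l * ∫⁻ z in Metric.ball 0 δ,
        ((1 + ε) * energyDensity (scaledPotential V l) h z + ε * ‖h z - c‖ₑ ^ 2) := by
  obtain ⟨ε₁, hε₁, hle⟩ : ∃ ε₁ > 0, (1 + (ε / 2)⁻¹) * 3 * (ε₁ * (3 + 1)) ≤ ε / 2 := by
    refine ⟨ε / 2 / ((1 + (ε / 2)⁻¹) * 3 * (3 + 1)), by positivity, le_of_eq ?_⟩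
    field_simp
  obtain ⟨χ, hχ, hχ01, hχδ, hχ1, hχe⟩ :=
    exists_cutoff_lintegral_le (E := Vec 3) volume F (by simp) hε₁ hδ
  filter_upwards [eventually_comp_smul_ne_zero_imp hVs hχ1, eventually_gt_atTop 0]
    with l hl hl0 h c hh
  have hgc : HasCompactSupport fun z => χ z • (h z - c) + c - c := by
    refine .of_isClosed_subset (isCompact_closedBall (0 : Vec 3) δ) (isClosed_tsupport _)
      (tsupport_subset_closedBall fun x hx => ?_)
    simp [hχδ x hx]
  have hball : ∀ x ∉ Metric.ball (0 : Vec 3) δ, χ x = 0 := fun x hx =>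
    hχδ x (by simpa using hx)
  refine (scatEnergy_mul_le_scaled V hl0 (by fun_prop) hgc).trans ?_
  refine mul_le_mul_right ?_ _
  refine lintegral_energyDensity_smul_sub_add_le (ε₁ := ε₁) ?_ (hχ.of_le (by simp)) hχ01
    measurableSet_ball hball (measurable_scaledPotential hV l)
    (fun x hx => hl x (right_ne_zero_of_mul hx)) (hh.of_le (by simp)) c ?_
  · rw [← ENNReal.coe_ofNat, ← ENNReal.coe_div two_ne_zero, ← ENNReal.coe_inv (by positivity)]
    exact_mod_cast hle
  · simpa only [fderiv_sub_const] using
      hχe (fun z => h z - c) ((hh.of_le (by simp)).sub contDiff_const)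

theorem eventually_scatEnergy_mul_le_ball {V : Vec 3 → ℝ≥0∞} (hV : Measurable V)
    (hVs : HasCompactSupport V) {ε : ℝ≥0} (hε : 0 < ε) {δ : ℝ} (hδ : 0 < δ) :
    ∀ᶠ l : ℝ in atTop, ∀ (h : Vec 3 → F) (c : F) (y : Vec 3), ContDiff ℝ (⊤ : ℕ∞) h →
      scatEnergy V / ENNReal.ofReal l * ‖c‖ₑ ^ 2 ≤ ∫⁻ z in Metric.ball y δ,
        ((1 + ε) * energyDensity (fun x => scaledPotential V l (x - y)) h z
          + ε * ‖h z - c‖ₑ ^ 2) := by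
  filter_upwards [eventually_scatEnergy_mul_le_ball_zero F hV hVs hε hδ] with l hl h c y hh
  rw [← ENNReal.mul_div_right_comm]
  refine (ENNReal.div_le_of_le_mul' (hl (fun z => h (y + z)) c
    (hh.comp (by fun_prop)))).trans_eq ?_
  have hpre : (fun z : Vec 3 => y + z) ⁻¹' Metric.ball y δ = Metric.ball 0 δ := by
    ext z
    simp [dist_eq_norm]
  rw [← (measurePreserving_add_left volume y).setLIntegral_comp_preimage_emb
    (MeasurableEquiv.addLeft y).measurableEmbedding _ (Metric.ball y δ), hpre]
  simp_rw [energyDensity_comp_add_left]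

end LocalScattering

/-! ### Finitely many particles in a cell -/

section Configurations

variable {ι E : Type*} [NormedAddCommGroup E]

/-- Configurations of points of `s` that keep distance `δ` from the complement of `s` and `2 δ` from
each other. -/
def separated (ι : Type*) (s : Set E) (δ : ℝ) : Set (ι → E) :=
  {x | (∀ j, Metric.closedBall (x j) δ ⊆ s) ∧ ∀ i j, i ≠ j → 2 * δ ≤ dist (x i) (x j)}

theorem separated_anti (s : Set E) : Antitone (separated ι s) := fun _ _ h _ hx =>
  ⟨fun j => (Metric.closedBall_subset_closedBall h).trans (hx.1 j),
    fun i j hij => le_trans (by linarith) (hx.2 i j hij)⟩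

theorem separated_subset {s : Set E} {δ : ℝ} (hδ : 0 ≤ δ) :
    separated ι s δ ⊆ Set.univ.pi fun _ => s :=
  fun _ hx j _ => hx.1 j (Metric.mem_closedBall_self hδ)

theorem isClosed_separated {s : Set E} (hs : IsClosed s) (δ : ℝ) :
    IsClosed (separated ι s δ) := by
  have hball : ∀ v : E, Metric.closedBall v δ ⊆ s ↔ ∀ w, ‖w‖ ≤ δ → v + w ∈ s := fun v => by
    refine ⟨fun h w hw => h (by simpa using hw), fun h u hu => ?_⟩
    simpa using h (u - v) (by simpa [dist_eq_norm] using hu)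
  simp only [separated, hball, Set.ofPred_and, Set.ofPred_forall]
  refine .inter (isClosed_iInter fun j => isClosed_iInter fun w => isClosed_iInter fun _ => ?_)
    (isClosed_iInter fun i => isClosed_iInter fun j => isClosed_iInter fun _ => ?_)
  · exact hs.preimage (by fun_prop)
  · exact isClosed_le continuous_const (by fun_prop)

variable [NormedSpace ℝ E] [FiniteDimensional ℝ E] [MeasurableSpace E] [BorelSpace E] [Fintype ι]
  (μ : Measure E) [μ.IsAddHaarMeasure]

theorem measure_pi_diagonal_eq_zero [Nontrivial E] {i j : ι} (hij : i ≠ j) :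
    Measure.pi (fun _ : ι => μ) {x | x i = x j} = 0 := by
  classical
  let L : (ι → E) →ₗ[ℝ] E := (LinearMap.proj i : (ι → E) →ₗ[ℝ] E) - LinearMap.proj j
  have hL : {x : ι → E | x i = x j} = (LinearMap.ker L : Set (ι → E)) := by
    ext x
    simp [L, sub_eq_zero]
  rw [hL]
  refine Measure.addHaar_submodule _ _ fun htop => ?_
  obtain ⟨v, hv⟩ := exists_ne (0 : E)
  have hker : L (Pi.single i v) = 0 := by
    rw [← LinearMap.mem_ker, htop]
    trivial
  exact hv (by simpa [L, hij.symm] using hker)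

theorem exists_lt_measure_pi_separated [Nontrivial E] {s : Set E} (hs : Convex ℝ s) {θ : ℝ≥0∞}
    (hθ : θ < Measure.pi (fun _ : ι => μ) (Set.univ.pi fun _ => s)) :
    ∃ δ > 0, θ < Measure.pi (fun _ : ι => μ) (separated ι s δ) := by
  let S : ℕ → Set (ι → E) := fun m => separated ι s (1 / ((m : ℝ) + 1))
  have hS : Monotone S := fun m n hmn => separated_anti s (by gcongr)
  have hae : (Set.univ.pi fun _ => s : Set (ι → E)) ≤ᵐ[Measure.pi fun _ => μ] ⋃ m, S m := by
    have hfront : ∀ j : ι, ∀ᵐ x ∂Measure.pi (fun _ : ι => μ), x j ∉ frontier s := fun j =>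
      compl_mem_ae_iff.2 (Measure.pi_eval_preimage_null (fun _ => μ) (hs.addHaar_frontier μ))
    have hdiag : ∀ i j : ι, ∀ᵐ x ∂Measure.pi (fun _ : ι => μ), i ≠ j → x i ≠ x j := fun i j =>
      Filter.eventually_imp_distrib_left.2 fun hij =>
        compl_mem_ae_iff.2 (measure_pi_diagonal_eq_zero μ hij)
    filter_upwards [ae_all_iff.2 hfront, ae_all_iff.2 fun i => ae_all_iff.2 (hdiag i)]
      with x hxf hxd hx
    have hlim : Tendsto (fun m : ℕ => 1 / ((m : ℝ) + 1)) atTop (nhds 0) :=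
      tendsto_one_div_add_atTop_nhds_zero_nat
    have hev : ∀ᶠ m in atTop, x ∈ S m := by
      simp only [S, separated, Set.mem_ofPred_eq, eventually_and, eventually_all]
      refine ⟨fun j => ?_, fun i j hij => ?_⟩
      · have hint : s ∈ nhds (x j) := by
          rw [← mem_interior_iff_mem_nhds, ← self_sdiff_frontier]
          exact ⟨hx j (Set.mem_univ j), hxf j⟩
        obtain ⟨r, hr, hrs⟩ := Metric.nhds_basis_closedBall.mem_iff.1 hint
        filter_upwards [hlim.eventually_lt_const hr] with m hm
        exact (Metric.closedBall_subset_closedBall hm.le).trans hrs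
      · filter_upwards [hlim.eventually_lt_const (half_pos (dist_pos.2 (hxd i j hij)))] with m hm
        linarith
    obtain ⟨m, hm⟩ := hev.exists
    exact Set.mem_iUnion.2 ⟨m, hm⟩
  obtain ⟨m, hm⟩ := ((tendsto_measure_iUnion_atTop hS).eventually_const_lt
    (hθ.trans_le (measure_mono_ae hae))).exists
  exact ⟨1 / ((m : ℝ) + 1), by positivity, hm⟩

theorem lintegral_lintegral_update [DecidableEq ι] {X : ι → Type*} [∀ i, MeasurableSpace (X i)]
    (μ : ∀ i, Measure (X i)) [∀ i, IsProbabilityMeasure (μ i)] {f : (∀ i, X i) → ℝ≥0∞}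
    (hf : Measurable f) (i : ι) :
    ∫⁻ x, ∫⁻ z, f (Function.update x i z) ∂μ i ∂Measure.pi μ = ∫⁻ x, f x ∂Measure.pi μ := by
  have hm := hf.lmarginal μ (s := {i})
  refine lintegral_eq_of_lmarginal_eq {i} (f := fun x => ∫⁻ z, f (Function.update x i z) ∂μ i)
    ?_ hf ?_
  · rwa [lmarginal_singleton] at hm
  · ext x
    simp [lmarginal_singleton]

end Configurations

theorem volume_unitCube (ι : Type*) [Fintype ι] (d : ℕ) :
    volume (Set.Icc (0 : ι → Vec d) 1) = 1 := by
  rw [← Set.pi_univ_Icc, volume_pi_pi]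
  simp [Real.volume_Icc_pi]

theorem isProbabilityMeasure_unitCube (ι : Type*) [Fintype ι] (d : ℕ) :
    IsProbabilityMeasure (volume.restrict (Set.Icc (0 : ι → Vec d) 1)) :=
  ⟨by simpa using volume_unitCube ι d⟩

theorem exists_sq_mul_lt_one_add (n P : ℝ≥0) {ε : ℝ≥0} (hε : 0 < ε) :
    ∃ e > 0, (1 + e) ^ 2 * (1 + e + n * e * P) < 1 + ε := by
  have hcont : Continuous fun e : ℝ≥0 => (1 + e) ^ 2 * (1 + e + n * e * P) := by fun_prop
  have hlim := (hcont.tendsto 0).mono_left (nhdsWithin_le_nhds (s := Set.Ioi 0))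
  obtain ⟨e, he, he0⟩ := ((hlim.eventually_lt_const (u := 1 + ε) (by simpa using hε)).and
    self_mem_nhdsWithin).exists
  exact ⟨e, he0, he⟩

theorem eventually_add_div_ofReal_lt {a b c s : ℝ≥0∞} (hab : a < b) (hc : c ≠ ⊤) (hs : s ≠ ⊤) :
    ∀ᶠ l : ℝ in atTop, a + c * (s / ENNReal.ofReal l) < b := by
  have hlim : Tendsto (fun l : ℝ => a + c * (s / ENNReal.ofReal l)) atTop
      (nhds (a + c * (s / ⊤))) :=
    tendsto_const_nhds.add (ENNReal.Tendsto.const_mul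
      (ENNReal.Tendsto.const_div ENNReal.tendsto_ofReal_atTop (.inr hs)) (.inr hc))
  exact hlim.eventually_lt_const (by simpa using hab)

theorem mul_lintegral_enorm_sq_le {α F : Type*} [MeasurableSpace α] {μ : Measure α}
    [IsProbabilityMeasure μ] [NormedAddCommGroup F] {φ : α → F} {c : F}
    (hφ : AEMeasurable (fun x => ‖φ x - c‖ₑ) μ)
    {e n P : ℝ≥0} {κ E : ℝ≥0∞}
    (hc : ((1 + e : ℝ≥0) : ℝ≥0∞)⁻¹ * (κ * ‖c‖ₑ ^ 2)
      ≤ (1 + e) * E + n * e * ∫⁻ x, ‖φ x - c‖ₑ ^ 2 ∂μ)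
    (hP : ∫⁻ x, ‖φ x - c‖ₑ ^ 2 ∂μ ≤ P * E) :
    κ * ∫⁻ x, ‖φ x‖ₑ ^ 2 ∂μ
      ≤ ((1 + e) ^ 2 * (1 + e + n * e * P) + (1 + (e : ℝ≥0∞)⁻¹) * κ * P) * E := by
  have hφc : ∫⁻ x, ‖φ x‖ₑ ^ 2 ∂μ
      ≤ (1 + e) * ‖c‖ₑ ^ 2 + (1 + (e : ℝ≥0∞)⁻¹) * ∫⁻ x, ‖φ x - c‖ₑ ^ 2 ∂μ := by
    calc ∫⁻ x, ‖φ x‖ₑ ^ 2 ∂μ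
        ≤ ∫⁻ x, ((1 + e) * ‖c‖ₑ ^ 2 + (1 + (e : ℝ≥0∞)⁻¹) * ‖φ x - c‖ₑ ^ 2) ∂μ :=
          lintegral_mono fun x => by simpa using enorm_add_sq_le e c (φ x - c)
      _ = _ := by
          rw [lintegral_add_left measurable_const, lintegral_const_mul'' _ (hφ.pow_const 2)]
          simp
  have hκc : κ * ‖c‖ₑ ^ 2 ≤ (1 + e) * ((1 + e) * E + n * e * (P * E)) := by
    rw [mul_comm (1 + e : ℝ≥0∞), ← ENNReal.div_le_iff_le_mul (by simp) (by simp),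
      ENNReal.div_eq_inv_mul]
    refine le_trans (by simpa using hc) ?_
    gcongr
  calc κ * ∫⁻ x, ‖φ x‖ₑ ^ 2 ∂μ
      ≤ κ * ((1 + e) * ‖c‖ₑ ^ 2 + (1 + (e : ℝ≥0∞)⁻¹) * (P * E)) := by
        gcongr
        exact hφc.trans (by gcongr)
    _ = (1 + e) * (κ * ‖c‖ₑ ^ 2) + (1 + (e : ℝ≥0∞)⁻¹) * κ * P * E := by ring
    _ ≤ (1 + e) * ((1 + e) * ((1 + e) * E + n * e * (P * E)))
          + (1 + (e : ℝ≥0∞)⁻¹) * κ * P * E := by gcongr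
    _ = _ := by ring

section ManyBody

variable {d : ℕ} {ι F : Type*} [Fintype ι] [DecidableEq ι] [NormedAddCommGroup F]
  [NormedSpace ℝ F]

/-- The squared gradient of `φ` with respect to the position of the particle `i`. -/
def partialGradSq (φ : (ι → Vec d) → F) (i : ι) (x : ι → Vec d) : ℝ≥0∞ :=
  ∑ k, ‖fderiv ℝ φ x (Pi.single i (Pi.single k 1))‖ₑ ^ 2

/-- The energy density of the particle `i`: its kinetic energy and half of its interaction with
each of the particles in `s`. -/
def particleDensity (W : Vec d → ℝ≥0∞) (s : Finset ι) (φ : (ι → Vec d) → F) (i : ι)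
    (x : ι → Vec d) : ℝ≥0∞ :=
  partialGradSq φ i x + ∑ j ∈ s, W (x i - x j) * ‖φ x‖ₑ ^ 2 / 2

/-- The energy density of the particles in `g`, discarding their interaction with the others. For
even `W` the halves in `particleDensity` make every pair of particles count once. -/
def clusterDensity (W : Vec d → ℝ≥0∞) (g : Finset ι) (φ : (ι → Vec d) → F) (x : ι → Vec d) :
    ℝ≥0∞ :=
  ∑ i ∈ g, particleDensity W (g.erase i) φ i x

theorem measurable_partialGradSq {φ : (ι → Vec d) → F} (hφ : ContDiff ℝ 1 φ) (i : ι) :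
    Measurable (partialGradSq φ i) :=
  Finset.measurable_sum _ fun _ _ =>
    ((hφ.continuous_fderiv one_ne_zero).clm_apply continuous_const).enorm.measurable.pow_const 2

theorem measurable_particleDensity {W : Vec d → ℝ≥0∞} (hW : Measurable W) {φ : (ι → Vec d) → F}
    (hφ : ContDiff ℝ 1 φ) (s : Finset ι) (i : ι) : Measurable (particleDensity W s φ i) := by
  have hφm : Measurable fun x => ‖φ x‖ₑ := hφ.continuous.enorm.measurable
  exact (measurable_partialGradSq hφ i).add (by fun_prop)

theorem measurable_clusterDensity {W : Vec d → ℝ≥0∞} (hW : Measurable W) {φ : (ι → Vec d) → F}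
    (hφ : ContDiff ℝ 1 φ) (g : Finset ι) : Measurable (clusterDensity W g φ) :=
  Finset.measurable_sum _ fun i _ => measurable_particleDensity hW hφ _ i

omit [Fintype ι] in
theorem gradSq_update [Finite ι] {φ : (ι → Vec d) → F} (hφ : Differentiable ℝ φ) (x : ι → Vec d)
    (i : ι) (z : Vec d) :
    gradSq (fun z => φ (Function.update x i z)) z = partialGradSq φ i (Function.update x i z) := by
  cases nonempty_fintype ι
  refine Finset.sum_congr rfl fun k _ => ?_
  have h := ((hφ (Function.update x i z)).hasFDerivAt.comp z (hasFDerivAt_update x z)).fderiv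
  rw [show fderiv ℝ (fun z => φ (Function.update x i z)) z = _ from h,
    ContinuousLinearMap.comp_apply]
  congr 3
  ext j m
  rcases eq_or_ne j i with rfl | hj
  · simp
  · simp [hj]

theorem energyDensity_update_le {φ : (ι → Vec d) → F} (hφ : Differentiable ℝ φ)
    (W : Vec d → ℝ≥0∞) (x : ι → Vec d) {i j : ι} (hji : j ≠ i) (z : Vec d) :
    energyDensity (fun z => W (z - x j)) (fun z => φ (Function.update x i z)) z
      ≤ particleDensity W (Finset.univ.erase i) φ i (Function.update x i z) := by
  rw [energyDensity, particleDensity, gradSq_update hφ]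
  gcongr
  refine le_trans (le_of_eq ?_) (Finset.single_le_sum (fun _ _ => zero_le)
    (Finset.mem_erase.2 ⟨hji, Finset.mem_univ j⟩))
  simp [hji]

theorem enorm_fderiv_sq_le_sum_partialGradSq (φ : (ι → Vec d) → F) (x : ι → Vec d) :
    ‖fderiv ℝ φ x‖ₑ ^ 2 ≤ Fintype.card ι * d * ∑ i, partialGradSq φ i x := by
  refine (enorm_sq_le_sum_single _).trans ?_
  rw [mul_assoc, Finset.mul_sum _ _ (d : ℝ≥0∞)]
  gcongr with i
  simpa [partialGradSq] using
    enorm_sq_le_sum_basis ((fderiv ℝ φ x).comp (.single ℝ (fun _ => Vec d) i))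

variable (d ι F) in
theorem exists_lintegral_enorm_sub_sq_le_cluster [CompleteSpace F] :
    ∃ P : ℝ≥0, ∀ (W : Vec d → ℝ≥0∞) (φ : (ι → Vec d) → F), ContDiff ℝ 1 φ → ∃ c : F,
      ∫⁻ x in Set.Icc 0 1, ‖φ x - c‖ₑ ^ 2
        ≤ P * ∫⁻ x in Set.Icc 0 1, clusterDensity W Finset.univ φ x := by
  set Q : Set (ι → Vec d) := Set.Icc 0 1
  have hQ : volume Q = 1 := volume_unitCube ι d
  have hdiam : Metric.ediam Q ≠ ⊤ := (isCompact_Icc).isBounded.ediam_ne_top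
  refine ⟨(2 ^ Module.finrank ℝ (ι → Vec d) * Metric.ediam Q ^ 2 *
    (Fintype.card ι * d)).toNNReal, fun W φ hφ => ?_⟩
  obtain ⟨c, hc⟩ := exists_lintegral_enorm_sub_sq_le volume measurableSet_Icc (convex_Icc 0 1)
    (hQ.trans_ne one_ne_zero) (hQ.trans_ne ENNReal.one_ne_top) hφ
  refine ⟨c, hc.trans ?_⟩
  rw [ENNReal.coe_toNNReal (by finiteness), mul_assoc _ (_ * _ : ℝ≥0∞),
    ← lintegral_const_mul' (Fintype.card ι * d : ℝ≥0∞) _ (by finiteness)]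
  refine mul_le_mul_right (lintegral_mono fun x => ?_) _
  refine (enorm_fderiv_sq_le_sum_partialGradSq φ x).trans ?_
  gcongr
  exact Finset.sum_le_sum fun i _ => le_self_add

theorem card_sub_one_mul_le_of_mem_separated {W : Vec d → ℝ≥0∞} {φ : (ι → Vec d) → F}
    (hφ : Differentiable ℝ φ) {a b K : ℝ≥0∞} {c : F} {i : ι} {x : ι → Vec d} {s : Set (Vec d)}
    {δ : ℝ} (hx : x ∈ separated ι s δ)
    (hK : ∀ y, K ≤ ∫⁻ z in Metric.ball y δ,
      (a * energyDensity (fun z => W (z - y)) (fun z => φ (Function.update x i z)) z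
        + b * ‖φ (Function.update x i z) - c‖ₑ ^ 2)) :
    ((Fintype.card ι - 1 : ℕ) : ℝ≥0∞) * K
      ≤ ∫⁻ z in s, (a * particleDensity W (Finset.univ.erase i) φ i (Function.update x i z)
          + b * ‖φ (Function.update x i z) - c‖ₑ ^ 2) := by
  set g : Vec d → ℝ≥0∞ := fun z =>
    a * particleDensity W (Finset.univ.erase i) φ i (Function.update x i z)
      + b * ‖φ (Function.update x i z) - c‖ₑ ^ 2
  have hball : ∀ j ∈ Finset.univ.erase i, K ≤ ∫⁻ z in Metric.ball (x j) δ, g z := by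
    refine fun j hj => (hK (x j)).trans (lintegral_mono fun z => ?_)
    dsimp only [g]
    gcongr
    exact energyDensity_update_le hφ W x (Finset.ne_of_mem_erase hj) z
  have hdisj : Set.PairwiseDisjoint (Finset.univ.erase i : Set ι)
      fun j => Metric.ball (x j) δ := fun j _ k _ hjk =>
    Metric.ball_disjoint_ball (by linarith [hx.2 j k hjk])
  calc ((Fintype.card ι - 1 : ℕ) : ℝ≥0∞) * K = ∑ _j ∈ Finset.univ.erase i, K := by
        rw [Finset.sum_const, nsmul_eq_mul, Finset.card_erase_of_mem (Finset.mem_univ i),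
          Finset.card_univ]
    _ ≤ ∑ j ∈ Finset.univ.erase i, ∫⁻ z in Metric.ball (x j) δ, g z := Finset.sum_le_sum hball
    _ = ∫⁻ z in ⋃ j ∈ Finset.univ.erase i, Metric.ball (x j) δ, g z :=
        (lintegral_biUnion_finset (by simpa using hdisj) (fun _ _ => measurableSet_ball) _).symm
    _ ≤ ∫⁻ z in s, g z := lintegral_mono_set (Set.iUnion₂_subset fun j _ =>
        Metric.ball_subset_closedBall.trans (hx.1 j))

theorem measure_separated_mul_le {W : Vec d → ℝ≥0∞} (hW : Measurable W) {φ : (ι → Vec d) → F}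
    (hφ : ContDiff ℝ 1 φ) {a b : ℝ≥0} {K : ℝ≥0∞} {c : F} {δ : ℝ} (hδ : 0 ≤ δ)
    (hK : ∀ (x : ι → Vec d) (i : ι) (y : Vec d), K ≤ ∫⁻ z in Metric.ball y δ,
      (a * energyDensity (fun z => W (z - y)) (fun z => φ (Function.update x i z)) z
        + b * ‖φ (Function.update x i z) - c‖ₑ ^ 2)) (i : ι) :
    volume (separated ι (Set.Icc (0 : Vec d) 1) δ) * ((Fintype.card ι - 1 : ℕ) * K)
      ≤ a * (∫⁻ x in Set.Icc 0 1, particleDensity W (Finset.univ.erase i) φ i x)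
        + b * ∫⁻ x in Set.Icc 0 1, ‖φ x - c‖ₑ ^ 2 := by
  have hD : Measurable fun x => ‖φ x - c‖ₑ ^ 2 :=
    (hφ.continuous.sub continuous_const).enorm.measurable.pow_const 2
  have hp := measurable_particleDensity hW hφ (Finset.univ.erase i) i
  set g := fun x => a * particleDensity W (Finset.univ.erase i) φ i x + b * ‖φ x - c‖ₑ ^ 2
  have hg : Measurable g := by fun_prop
  have : IsProbabilityMeasure (volume.restrict (Set.Icc (0 : Vec d) 1)) :=
    ⟨by simp [Real.volume_Icc_pi]⟩
  have hQ : (Set.univ.pi fun _ : ι => Set.Icc (0 : Vec d) 1) = Set.Icc 0 1 :=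
    Set.pi_univ_Icc _ _
  calc volume (separated ι (Set.Icc (0 : Vec d) 1) δ) * ((Fintype.card ι - 1 : ℕ) * K)
      = ∫⁻ _x in separated ι (Set.Icc (0 : Vec d) 1) δ, (Fintype.card ι - 1 : ℕ) * K := by
        rw [setLIntegral_const, mul_comm]
    _ ≤ ∫⁻ x in separated ι (Set.Icc (0 : Vec d) 1) δ, ∫⁻ z in Set.Icc 0 1,
          g (Function.update x i z) :=
        setLIntegral_mono' (isClosed_separated isClosed_Icc δ).measurableSet fun x hx =>
          card_sub_one_mul_le_of_mem_separated (hφ.differentiable one_ne_zero) hx (hK x i)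
    _ ≤ ∫⁻ x in Set.univ.pi fun _ => Set.Icc 0 1, ∫⁻ z in Set.Icc 0 1,
          g (Function.update x i z) := lintegral_mono_set (separated_subset hδ)
    _ = ∫⁻ x in Set.Icc 0 1, g x := by
        rw [← hQ, volume_pi, Measure.restrict_pi_pi]
        exact lintegral_lintegral_update _ hg i
    _ = _ := by
        rw [lintegral_add_left (by fun_prop), lintegral_const_mul _ hp, lintegral_const_mul _ hD]

theorem card_mul_measure_separated_mul_le {W : Vec d → ℝ≥0∞} (hW : Measurable W)
    {φ : (ι → Vec d) → F} (hφ : ContDiff ℝ 1 φ) {a b : ℝ≥0} {K : ℝ≥0∞} {c : F} {δ : ℝ}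
    (hδ : 0 ≤ δ)
    (hK : ∀ (x : ι → Vec d) (i : ι) (y : Vec d), K ≤ ∫⁻ z in Metric.ball y δ,
      (a * energyDensity (fun z => W (z - y)) (fun z => φ (Function.update x i z)) z
        + b * ‖φ (Function.update x i z) - c‖ₑ ^ 2)) :
    volume (separated ι (Set.Icc (0 : Vec d) 1) δ) *
        (Fintype.card ι * (Fintype.card ι - 1 : ℕ) * K)
      ≤ a * (∫⁻ x in Set.Icc 0 1, clusterDensity W Finset.univ φ x)
        + Fintype.card ι * b * ∫⁻ x in Set.Icc 0 1, ‖φ x - c‖ₑ ^ 2 := by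
  have hsum := Finset.sum_le_sum fun i (_ : i ∈ Finset.univ) =>
    measure_separated_mul_le hW hφ hδ hK i
  rw [Finset.sum_add_distrib, ← Finset.mul_sum, ← Finset.mul_sum (a := (a : ℝ≥0∞)),
    ← lintegral_finsetSum _ fun i _ => measurable_particleDensity hW hφ _ i,
    Finset.sum_const, Finset.sum_const, Finset.card_univ, nsmul_eq_mul, nsmul_eq_mul] at hsum
  simpa only [mul_assoc] using! hsum

variable (ι F) in
theorem eventually_le_lintegral_clusterDensity_univ [FiniteDimensional ℝ F] {V : Vec 3 → ℝ≥0∞}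
    (hV : Measurable V) (hVs : HasCompactSupport V) (hscat : scatEnergy V ≠ ⊤) {ε : ℝ≥0}
    (hε : 0 < ε) :
    ∀ᶠ l : ℝ in atTop, ∀ φ : (ι → Vec 3) → F, ContDiff ℝ (⊤ : ℕ∞) φ →
      Fintype.card ι * (Fintype.card ι - 1 : ℕ) * (scatEnergy V / ENNReal.ofReal l) *
        ∫⁻ x in Set.Icc 0 1, ‖φ x‖ₑ ^ 2
      ≤ (1 + ε) * ∫⁻ x in Set.Icc 0 1, clusterDensity (scaledPotential V l) Finset.univ φ x := by
  have : CompleteSpace F := FiniteDimensional.complete ℝ F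
  have := isProbabilityMeasure_unitCube ι 3
  set n := Fintype.card ι
  obtain ⟨P, hP⟩ := exists_lintegral_enorm_sub_sq_le_cluster 3 ι F
  obtain ⟨e, he, hεe⟩ := exists_sq_mul_lt_one_add n P hε
  obtain ⟨δ, hδ, hδQ⟩ := exists_lt_measure_pi_separated (ι := ι) (θ := ((1 + e : ℝ≥0) : ℝ≥0∞)⁻¹)
    volume (convex_Icc (0 : Vec 3) 1) (by
      have hQ : volume (Set.univ.pi fun _ : ι => Set.Icc (0 : Vec 3) 1) = 1 := by
        rw [Set.pi_univ_Icc]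
        exact volume_unitCube ι 3
      rw [← volume_pi, hQ, ENNReal.inv_lt_one]
      exact mod_cast lt_add_of_pos_right 1 he)
  have hlarge : ∀ᶠ l : ℝ in atTop, (1 + e : ℝ≥0∞) ^ 2 * (1 + e + n * e * P)
      + (1 + (e : ℝ≥0∞)⁻¹) * (n * (n - 1 : ℕ) * P) * (scatEnergy V / ENNReal.ofReal l) < 1 + ε :=
    eventually_add_div_ofReal_lt (mod_cast hεe)
      (by have : (e : ℝ≥0∞) ≠ 0 := by simpa using he.ne'
          finiteness) hscat
  filter_upwards [eventually_scatEnergy_mul_le_ball F hV hVs he hδ, hlarge] with l hl hle φ hφ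
  have hφ1 : ContDiff ℝ 1 φ := hφ.of_le (by simp)
  have hφc := hφ1.continuous
  obtain ⟨c, hc⟩ := hP (scaledPotential V l) φ hφ1
  refine (mul_lintegral_enorm_sq_le (e := e) (n := n)
    (by fun_prop : Continuous fun x => ‖φ x - c‖ₑ).aemeasurable ?_ hc).trans ?_
  · have hsep := card_mul_measure_separated_mul_le (measurable_scaledPotential hV l) hφ1
      (a := 1 + e) (b := e) (c := c) hδ.le fun x i y => by
        simpa using hl (fun z => φ (Function.update x i z)) c y (hφ.comp (contDiff_update _ _ _))
    rw [← mul_assoc _ (scatEnergy V / _)] at hsep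
    push_cast [-Nat.cast_pred, -ENNReal.natCast_sub] at hsep
    exact (mul_le_mul_left hδQ.le _).trans hsep
  · refine mul_le_mul_left (le_trans (le_of_eq ?_) hle.le) _
    push_cast
    ring

end ManyBody

theorem restrict_unitCube (ι : Type*) [Fintype ι] (d : ℕ) :
    volume.restrict (Set.Icc (0 : ι → Vec d) 1)
      = Measure.pi fun _ => volume.restrict (Set.Icc (0 : Vec d) 1) := by
  rw [← Measure.restrict_pi_pi, Set.pi_univ_Icc]
  rfl

theorem lmarginal_eq_lintegral_comp_equiv {ι κ X : Type*} [Fintype ι] [DecidableEq κ]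
    [MeasurableSpace X] (μ : Measure X) [SigmaFinite μ] {g : Finset κ} (e : ι ≃ g)
    (f : (κ → X) → ℝ≥0∞) (x : κ → X) :
    (∫⋯∫⁻_g, f ∂fun _ => μ) x
      = ∫⁻ y, f (Function.updateFinset x g fun j => y (e.symm j)) ∂Measure.pi fun _ => μ := by
  rw [lmarginal, ← (measurePreserving_piCongrLeft (fun _ : g => μ) e).lintegral_comp_emb
    (MeasurableEquiv.measurableEmbedding _)]
  refine lintegral_congr fun y => congrArg (fun z => f (Function.updateFinset x g z)) ?_
  ext1 j
  obtain ⟨i, rfl⟩ := e.surjective j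
  rw [MeasurableEquiv.piCongrLeft_apply_apply, e.symm_apply_apply]

section Clusters

variable {d : ℕ} {ι κ F : Type*} [Fintype ι] [DecidableEq ι] [Fintype κ] [DecidableEq κ]
  [NormedAddCommGroup F] [NormedSpace ℝ F]

omit [Fintype ι] [Fintype κ] in
theorem partialGradSq_comp_of_apply_single [Finite ι] [Finite κ] {φ : (κ → Vec d) → F}
    (hφ : Differentiable ℝ φ) {L : (ι → Vec d) →L[ℝ] (κ → Vec d)} {i : ι} {j : κ}
    (hL : ∀ v, L (Pi.single i v) = Pi.single j v) (b : κ → Vec d) (y : ι → Vec d) :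
    partialGradSq (fun y => φ (b + L y)) i y = partialGradSq φ j (b + L y) := by
  cases nonempty_fintype ι
  cases nonempty_fintype κ
  have hfderiv : fderiv ℝ (fun y => φ (b + L y)) y = (fderiv ℝ φ (b + L y)).comp L :=
    ((hφ (b + L y)).hasFDerivAt.comp y (L.hasFDerivAt.const_add b)).fderiv
  simp only [partialGradSq, hfderiv, ContinuousLinearMap.comp_apply, hL]

omit [Fintype κ] in
theorem clusterDensity_comp_of_apply_single [Finite κ] (W : Vec d → ℝ≥0∞) {φ : (κ → Vec d) → F}
    (hφ : Differentiable ℝ φ) {g : Finset κ} (e : ι ≃ g) {L : (ι → Vec d) →L[ℝ] (κ → Vec d)}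
    (hL : ∀ i v, L (Pi.single i v) = Pi.single (e i : κ) v) {b : κ → Vec d} {y : ι → Vec d}
    (hy : ∀ i, (b + L y) (e i) = y i) :
    clusterDensity W Finset.univ (fun y => φ (b + L y)) y = clusterDensity W g φ (b + L y) := by
  rw [clusterDensity, clusterDensity, ← Finset.sum_coe_sort g, ← e.sum_comp]
  refine Finset.sum_congr rfl fun i _ => ?_
  rw [particleDensity, particleDensity, partialGradSq_comp_of_apply_single hφ (hL i)]
  congr 1
  refine Finset.sum_bij (fun j _ => (e j : κ)) (fun j hj => ?_) (fun j _ j' _ h => ?_)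
    (fun j hj => ?_) fun j _ => by rw [hy, hy]
  · simpa [Subtype.val_inj] using Finset.ne_of_mem_erase hj
  · exact e.injective (Subtype.val_injective h)
  · obtain ⟨hne, hjg⟩ := Finset.mem_erase.1 hj
    exact ⟨e.symm ⟨j, hjg⟩, by simpa [Equiv.symm_apply_eq, Subtype.ext_iff] using hne, by simp⟩

theorem lintegral_clusterDensity_bound_of_equiv {W : Vec d → ℝ≥0∞} (hW : Measurable W)
    {g : Finset κ} (e : ι ≃ g) {C A : ℝ≥0∞}
    (h : ∀ φ : (ι → Vec d) → F, ContDiff ℝ (⊤ : ℕ∞) φ →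
      C * ∫⁻ x in Set.Icc 0 1, ‖φ x‖ₑ ^ 2
        ≤ A * ∫⁻ x in Set.Icc 0 1, clusterDensity W Finset.univ φ x)
    {φ : (κ → Vec d) → F} (hφ : ContDiff ℝ (⊤ : ℕ∞) φ) :
    C * ∫⁻ x in Set.Icc 0 1, ‖φ x‖ₑ ^ 2 ≤ A * ∫⁻ x in Set.Icc 0 1, clusterDensity W g φ x := by
  have hφm : Measurable fun x => ‖φ x‖ₑ ^ 2 := hφ.continuous.enorm.measurable.pow_const 2
  have hgm := measurable_clusterDensity hW (hφ.of_le (by simp)) g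
  set L : (ι → Vec d) →L[ℝ] (κ → Vec d) := ContinuousLinearMap.pi fun j =>
    if hj : j ∈ g then ContinuousLinearMap.proj (e.symm ⟨j, hj⟩) else 0
  have hL : ∀ i v, L (Pi.single i v) = Pi.single (e i : κ) v := fun i v => by
    ext1 j
    by_cases hj : j ∈ g
    · obtain ⟨i', hi'⟩ := e.surjective ⟨j, hj⟩
      obtain rfl : (e i' : κ) = j := congrArg Subtype.val hi'
      simp [L, Pi.single_apply]
    · have : j ≠ e i := fun h => hj (h ▸ (e i).2)
      simp [L, hj, this]
  have hupdate : ∀ (x : κ → Vec d) (y : ι → Vec d),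
      Function.updateFinset x g (fun j => y (e.symm j)) = Function.updateFinset x g 0 + L y := by
    intro x y
    ext1 j
    by_cases hj : j ∈ g <;> simp [L, Function.updateFinset, hj]
  rw [← lintegral_const_mul _ hφm, ← lintegral_const_mul _ hgm, restrict_unitCube]
  refine lintegral_le_of_lmarginal_le g (hφm.const_mul C) (hgm.const_mul A) fun x => ?_
  simp_rw [lmarginal_eq_lintegral_comp_equiv _ e, hupdate x]
  have hy : ∀ y i, (Function.updateFinset x g 0 + L y) (e i) = y i := fun y i => by
    simp [L, Function.updateFinset]
  have hT : ContDiff ℝ (⊤ : ℕ∞) fun y => Function.updateFinset x g 0 + L y := by fun_prop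
  simp_rw [← clusterDensity_comp_of_apply_single W (hφ.differentiable (by simp)) e hL (hy _)]
  rw [← restrict_unitCube]
  refine (lintegral_const_mul C (hφm.comp hT.continuous.measurable)).trans_le
    ((h _ (hφ.comp hT)).trans_eq (lintegral_const_mul A ?_).symm)
  exact measurable_clusterDensity hW ((hφ.comp hT).of_le (by simp)) _

end Clusters

theorem eventually_le_lintegral_clusterDensity (F : Type*) [NormedAddCommGroup F]
    [NormedSpace ℝ F] [FiniteDimensional ℝ F] {V : Vec 3 → ℝ≥0∞} (hV : Measurable V)
    (hVs : HasCompactSupport V) (hscat : scatEnergy V ≠ ⊤) {ε : ℝ≥0} (hε : 0 < ε) (p : ℕ) :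
    ∀ᶠ l : ℝ in atTop, ∀ {κ : Type*} [Fintype κ] [DecidableEq κ] {g : Finset κ}, g.card ≤ p →
      ∀ φ : (κ → Vec 3) → F, ContDiff ℝ (⊤ : ℕ∞) φ →
        g.card * (g.card - 1 : ℕ) * (scatEnergy V / ENNReal.ofReal l) *
          ∫⁻ x in Set.Icc 0 1, ‖φ x‖ₑ ^ 2
        ≤ (1 + ε) * ∫⁻ x in Set.Icc 0 1, clusterDensity (scaledPotential V l) g φ x := by
  have hn : ∀ᶠ l : ℝ in atTop, ∀ n ∈ Set.Iic p, ∀ φ : (Fin n → Vec 3) → F,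
      ContDiff ℝ (⊤ : ℕ∞) φ → n * (n - 1 : ℕ) * (scatEnergy V / ENNReal.ofReal l) *
        ∫⁻ x in Set.Icc 0 1, ‖φ x‖ₑ ^ 2 ≤
      (1 + ε) * ∫⁻ x in Set.Icc 0 1, clusterDensity (scaledPotential V l) Finset.univ φ x := by
    refine (eventually_all_finite (Set.finite_Iic p)).2 fun n _ => ?_
    simpa using eventually_le_lintegral_clusterDensity_univ (Fin n) F hV hVs hscat hε
  filter_upwards [hn] with l hl κ _ _ g hg φ hφ
  exact lintegral_clusterDensity_bound_of_equiv (measurable_scaledPotential hV l) g.equivFin.symm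
    (hl _ hg) hφ

theorem mul_card_le_of_superadditive {α : Type*} [DecidableEq α] {f : Finset α → ℝ≥0∞}
    (hf : ∀ s t, Disjoint s t → f s + f t ≤ f (s ∪ t)) {M : ℕ} (hM : 0 < M) {K : ℝ≥0∞}
    (hK : ∀ g : Finset α, g.card ≤ 2 * M → g.card * (g.card - 1 : ℕ) * K ≤ f g) (s : Finset α) :
    (2 * M - 1 : ℕ) * s.card * K ≤ f s + M ^ 2 * K := by
  induction hn : s.card using Nat.strong_induction_on generalizing s with
  | _ n ih =>
    subst hn
    rcases le_total s.card (2 * M) with hs | hs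
    · have hcard : (2 * M - 1) * s.card ≤ s.card * (s.card - 1) + M ^ 2 := by
        rcases s.card.eq_zero_or_pos with h0 | h0
        · simp [h0]
        · zify [show 1 ≤ 2 * M by omega, show 1 ≤ s.card from h0]
          nlinarith [sq_nonneg ((s.card : ℤ) - M)]
      calc (2 * M - 1 : ℕ) * s.card * K
          ≤ (s.card * (s.card - 1 : ℕ) + M ^ 2) * K := mul_le_mul_left (mod_cast hcard) _
        _ ≤ f s + M ^ 2 * K := by
          rw [add_mul]
          gcongr
          exact hK s hs
    · obtain ⟨g, hgs, hg⟩ := Finset.exists_subset_card_eq hs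
      have hcard : (s \ g).card + 2 * M = s.card := by
        rw [← hg, Finset.card_sdiff_add_card_eq_card hgs]
      calc ((2 * M - 1 : ℕ) : ℝ≥0∞) * s.card * K
          = (2 * M : ℕ) * (2 * M - 1 : ℕ) * K + (2 * M - 1 : ℕ) * (s \ g).card * K := by
            rw [← hcard, Nat.cast_add]
            ring
        _ ≤ f g + (f (s \ g) + M ^ 2 * K) := by
            gcongr
            · simpa only [hg] using hK g hg.le
            · exact ih (s \ g).card (by omega) _ rfl
        _ ≤ f s + M ^ 2 * K := by
            rw [← add_assoc]
            gcongr
            simpa only [Finset.union_sdiff_of_subset hgs] using hf g (s \ g) Finset.disjoint_sdiff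

/-! ### The lower bound on the torus -/

theorem iUnion_Ico_natCast_fin (L : ℕ) :
    ⋃ s : Fin L, Set.Ico (s : ℝ) (s + 1) = Set.Ico 0 (L : ℝ) := by
  ext x
  simp only [Set.mem_iUnion, Set.mem_Ico]
  constructor
  · rintro ⟨s, hs, hs'⟩
    have : (s : ℝ) + 1 ≤ L := mod_cast s.2
    exact ⟨s.val.cast_nonneg.trans hs, by linarith⟩
  · rintro ⟨h0, hL⟩
    exact ⟨⟨⌊x⌋₊, (Nat.floor_lt h0).2 hL⟩, Nat.floor_le h0, Nat.lt_floor_add_one x⟩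

theorem disjoint_Ico_natCast {m n : ℕ} (h : m ≠ n) :
    Disjoint (Set.Ico (m : ℝ) (m + 1)) (Set.Ico (n : ℝ) (n + 1)) := by
  have := Set.pairwise_disjoint_Ico_intCast ℝ (Nat.cast_injective.ne h)
  simpa [Function.onFun] using this

theorem univ_pi_univ_pi_Ico_ae_eq_Icc {ι : Type*} [Fintype ι] {d : ℕ} (a b : ι → Vec d) :
    (Set.univ.pi fun i => Set.univ.pi fun k => Set.Ico (a i k) (b i k)) =ᵐ[volume]
      Set.Icc a b := by
  rw [← Set.pi_univ_Icc]
  exact Measure.ae_eq_set_pi fun i _ => Measure.univ_pi_Ico_ae_eq_Icc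

theorem clusterDensity_add_le {d : ℕ} {ι F : Type*} [DecidableEq ι] [NormedAddCommGroup F]
    [NormedSpace ℝ F] (W : Vec d → ℝ≥0∞) (φ : (ι → Vec d) → F) {s t : Finset ι}
    (hst : Disjoint s t) (x : ι → Vec d) :
    clusterDensity W s φ x + clusterDensity W t φ x ≤ clusterDensity W (s ∪ t) φ x := by
  rw [clusterDensity, clusterDensity, clusterDensity, Finset.sum_union hst]
  refine add_le_add (Finset.sum_le_sum fun i _ => ?_) (Finset.sum_le_sum fun i _ => ?_) <;>
    exact add_le_add_right (Finset.sum_le_sum_of_subset (Finset.erase_subset_erase i (by simp))) _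

section Cells

variable {d : ℕ} {ι F : Type*} [Fintype ι] [DecidableEq ι] [NormedAddCommGroup F]
  [NormedSpace ℝ F]

theorem lintegral_Icc_zero_natCast (L : ℕ) (f : (ι → Vec d) → ℝ≥0∞) :
    ∫⁻ x in Set.Icc 0 (L : ι → Vec d), f x
      = ∑ σ : ι → Fin d → Fin L, ∫⁻ z in Set.Icc 0 1, f ((fun i k => (σ i k : ℝ)) + z) := by
  have hcover : (⋃ σ : ι → Fin d → Fin L, Set.univ.pi fun i => Set.univ.pi fun k =>
      Set.Ico (σ i k : ℝ) (σ i k + 1)) = Set.univ.pi fun _ => Set.univ.pi fun _ =>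
      Set.Ico (0 : ℝ) L := by
    rw [Set.iUnion_univ_pi fun _ (τ : Fin d → Fin L) => Set.univ.pi fun k =>
      Set.Ico (τ k : ℝ) (τ k + 1)]
    simp_rw [Set.iUnion_univ_pi fun _ (s : Fin L) => Set.Ico (s : ℝ) (s + 1),
      iUnion_Ico_natCast_fin]
  have hdisj : Pairwise (Function.onFun Disjoint fun σ : ι → Fin d → Fin L =>
      Set.univ.pi fun i => Set.univ.pi fun k => Set.Ico (σ i k : ℝ) (σ i k + 1)) := by
    intro σ τ hne
    obtain ⟨i, hi⟩ := Function.ne_iff.1 hne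
    obtain ⟨k, hk⟩ := Function.ne_iff.1 hi
    exact Set.disjoint_univ_pi.2 ⟨i, Set.disjoint_univ_pi.2
      ⟨k, disjoint_Ico_natCast (Fin.val_injective.ne hk)⟩⟩
  rw [← setLIntegral_congr (univ_pi_univ_pi_Ico_ae_eq_Icc 0 (L : ι → Vec d))]
  simp only [Pi.zero_apply, Pi.natCast_apply]
  rw [← hcover, lintegral_iUnion (fun σ => .univ_pi fun i => .univ_pi fun k => measurableSet_Ico)
    hdisj, tsum_fintype]
  refine Finset.sum_congr rfl fun σ _ => ?_
  rw [setLIntegral_congr (univ_pi_univ_pi_Ico_ae_eq_Icc (fun i k => (σ i k : ℝ))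
    fun i k => σ i k + 1), ← (measurePreserving_add_left volume fun i k =>
      (σ i k : ℝ)).setLIntegral_comp_preimage_emb (measurableEmbedding_addLeft _) f,
    Set.preimage_const_add_Icc, sub_self]
  congr 3
  ext i k
  simp

theorem sum_clusterDensity_fiber_le {B : Type*} [Fintype B] [DecidableEq B] (W : Vec d → ℝ≥0∞)
    (φ : (ι → Vec d) → F) (c : B → Vec d) (σ : ι → B) (z : ι → Vec d) :
    ∑ b, clusterDensity W {i | σ i = b} (fun z => φ (c ∘ σ + z)) z
      ≤ clusterDensity W Finset.univ φ (c ∘ σ + z) := by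
  rw [clusterDensity, ← Finset.sum_fiberwise _ σ]
  refine Finset.sum_le_sum fun b _ => Finset.sum_le_sum fun i hi => ?_
  refine add_le_add (le_of_eq ?_) ?_
  · simp only [partialGradSq, fderiv_comp_add_left]
  · refine le_trans (le_of_eq (Finset.sum_congr rfl fun j hj => ?_))
      (Finset.sum_le_sum_of_subset (Finset.erase_subset_erase i (Finset.subset_univ _)))
    have hij : σ i = σ j := (Finset.mem_filter.1 hi).2.trans
      (Finset.mem_filter.1 (Finset.mem_of_mem_erase hj)).2.symm
    simp [hij]

theorem card_mul_le_lintegral_sum_fiber {B : Type*} [Fintype B] [DecidableEq B]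
    {W : Vec d → ℝ≥0∞} (hW : Measurable W) {φ : (ι → Vec d) → F} (hφ : ContDiff ℝ 1 φ) {M : ℕ}
    (hM : 0 < M) {A K : ℝ≥0∞}
    (hK : ∀ g : Finset ι, g.card ≤ 2 * M →
      g.card * (g.card - 1 : ℕ) * K ≤ A * ∫⁻ x in Set.Icc 0 1, clusterDensity W g φ x)
    (σ : ι → B) :
    (2 * M - 1 : ℕ) * Fintype.card ι * K
      ≤ A * (∫⁻ x in Set.Icc 0 1, ∑ b, clusterDensity W {i | σ i = b} φ x)
        + M ^ 2 * Fintype.card B * K := by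
  have hm := measurable_clusterDensity hW hφ
  have hsuper : ∀ s t : Finset ι, Disjoint s t →
      A * (∫⁻ x in Set.Icc 0 1, clusterDensity W s φ x)
        + A * (∫⁻ x in Set.Icc 0 1, clusterDensity W t φ x)
      ≤ A * ∫⁻ x in Set.Icc 0 1, clusterDensity W (s ∪ t) φ x := fun s t hst => by
    rw [← mul_add, ← lintegral_add_left (hm s)]
    gcongr with x
    exact clusterDensity_add_le W φ hst x
  calc (2 * M - 1 : ℕ) * Fintype.card ι * K
      = ∑ b, (2 * M - 1 : ℕ) * (Finset.univ.filter fun i => σ i = b).card * K := by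
        rw [← Finset.sum_mul, ← Finset.mul_sum, ← Nat.cast_sum,
          ← Finset.card_eq_sum_card_fiberwise (by simp), Finset.card_univ]
    _ ≤ ∑ b, (A * (∫⁻ x in Set.Icc 0 1, clusterDensity W {i | σ i = b} φ x) + M ^ 2 * K) :=
        Finset.sum_le_sum fun b _ => mul_card_le_of_superadditive hsuper hM hK _
    _ = _ := by
        rw [Finset.sum_add_distrib, ← Finset.mul_sum, ← lintegral_finsetSum _ fun b _ => hm _,
          Finset.sum_const, nsmul_eq_mul, Finset.card_univ]
        ring

end Cells

theorem eventually_le_lintegral_Icc_natCast (F : Type*) [NormedAddCommGroup F] [NormedSpace ℝ F]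
    [FiniteDimensional ℝ F] {V : Vec 3 → ℝ≥0∞} (hV : Measurable V) (hVs : HasCompactSupport V)
    (hscat : scatEnergy V ≠ ⊤) {ε : ℝ≥0} (hε : 0 < ε) {M : ℕ} (hM : 0 < M) :
    ∀ᶠ l : ℝ in atTop, ∀ {ι : Type*} [Fintype ι] [DecidableEq ι] (L : ℕ) (φ : (ι → Vec 3) → F),
      ContDiff ℝ (⊤ : ℕ∞) φ →
        (2 * M - 1 : ℕ) * Fintype.card ι * (scatEnergy V / ENNReal.ofReal l) *
          ∫⁻ x in Set.Icc 0 (L : ι → Vec 3), ‖φ x‖ₑ ^ 2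
        ≤ (1 + ε) * (∫⁻ x in Set.Icc 0 (L : ι → Vec 3),
              clusterDensity (scaledPotential V l) Finset.univ φ x)
            + M ^ 2 * L ^ 3 * (scatEnergy V / ENNReal.ofReal l) *
              ∫⁻ x in Set.Icc 0 (L : ι → Vec 3), ‖φ x‖ₑ ^ 2 := by
  filter_upwards [eventually_le_lintegral_clusterDensity F hV hVs hscat hε (2 * M)]
    with l hl ι _ _ L φ hφ
  set W := scaledPotential V l
  have hW : Measurable W := measurable_scaledPotential hV l
  have hcell : ∀ σ : ι → Fin 3 → Fin L,
      (2 * M - 1 : ℕ) * Fintype.card ι * (scatEnergy V / ENNReal.ofReal l) *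
        ∫⁻ z in Set.Icc 0 1, ‖φ ((fun i k => (σ i k : ℝ)) + z)‖ₑ ^ 2
      ≤ (1 + ε) * (∫⁻ z in Set.Icc 0 1,
            clusterDensity W Finset.univ φ ((fun i k => (σ i k : ℝ)) + z))
          + M ^ 2 * L ^ 3 * (scatEnergy V / ENNReal.ofReal l) *
            ∫⁻ z in Set.Icc 0 1, ‖φ ((fun i k => (σ i k : ℝ)) + z)‖ₑ ^ 2 := by
    intro σ
    have hs : ContDiff ℝ (⊤ : ℕ∞) fun z => φ ((fun i k => (σ i k : ℝ)) + z) :=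
      hφ.comp (by fun_prop)
    have hfiber := card_mul_le_lintegral_sum_fiber hW (hs.of_le (by simp)) hM
      (fun g hg => by simpa only [mul_assoc] using! hl hg _ hs) σ
    simp only [Fintype.card_pi, Fintype.card_fin, Finset.prod_const, Finset.card_univ,
      Nat.cast_pow, ← mul_assoc] at hfiber
    refine hfiber.trans ?_
    gcongr with z
    exact sum_clusterDensity_fiber_le W φ (fun (τ : Fin 3 → Fin L) k => (τ k : ℝ)) σ z
  simp_rw [lintegral_Icc_zero_natCast L, Finset.mul_sum, ← Finset.sum_add_distrib]
  exact Finset.sum_le_sum fun σ _ => hcell σ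

theorem setLIntegral_preimage_comp_add_smul {E : Type*} [NormedAddCommGroup E] [NormedSpace ℝ E]
    [FiniteDimensional ℝ E] [MeasurableSpace E] [BorelSpace E] (μ : Measure E)
    [μ.IsAddHaarMeasure] {r : ℝ} (hr : r ≠ 0) (b : E) {s : Set E} (hs : MeasurableSet s)
    (f : E → ℝ≥0∞) :
    ∫⁻ x in (fun x => b + r • x) ⁻¹' s, f (b + r • x) ∂μ
      = ENNReal.ofReal |(r ^ Module.finrank ℝ E)⁻¹| * ∫⁻ x in s, f x ∂μ := by
  rw [← lintegral_indicator hs, ← lintegral_comp_add_smul μ hr b,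
    ← lintegral_indicator (hs.preimage (by fun_prop))]
  rfl

theorem preimage_box (d N L : ℕ) (hL : 0 < L) :
    (fun z : Fin N → Vec d => (fun _ _ => -1 / 2) + (L : ℝ)⁻¹ • z) ⁻¹' box d N 1
      = Set.Icc 0 (L : Fin N → Vec d) := by
  have hL' : (0 : ℝ) < L := mod_cast hL
  ext z
  simp only [box, Set.mem_preimage, Set.mem_ofPred_eq, Set.mem_Icc, Pi.le_def, ← forall_and,
    Pi.add_apply, Pi.smul_apply, smul_eq_mul, Pi.zero_apply, Pi.natCast_apply]
  refine forall₂_congr fun i k => and_congr ?_ ?_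
  · rw [le_add_iff_nonneg_right, mul_nonneg_iff_of_pos_left (inv_pos.2 hL')]
  · rw [← inv_mul_le_one₀ hL']
    constructor <;> intro h <;> linarith

theorem measurableSet_box (d N : ℕ) (T : ℝ) : MeasurableSet (box d N T) := by
  have : box d N T = Set.Icc (fun _ _ => -T / 2) (fun _ _ => T / 2) := by
    ext x
    simp [box, Pi.le_def, forall_and]
  rw [this]
  exact measurableSet_Icc

theorem sum_sum_erase_div_two {ι : Type*} [Fintype ι] [LinearOrder ι] {w : ι → ι → ℝ≥0∞}
    (hw : ∀ i j, w i j = w j i) :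
    ∑ i, ∑ j ∈ Finset.univ.erase i, w i j / 2 = ∑ i, ∑ j, if i < j then w i j else 0 := by
  have hsplit : ∀ i, ∑ j ∈ Finset.univ.erase i, w i j / 2
      = ∑ j, ((if i < j then w i j / 2 else 0) + if j < i then w i j / 2 else 0) := fun i => by
    rw [← Finset.sum_erase Finset.univ (a := i) (by simp)]
    refine Finset.sum_congr rfl fun j hj => ?_
    rcases lt_or_gt_of_ne (Finset.ne_of_mem_erase hj) with h | h <;> simp [h, h.not_gt]
  have hswap : ∑ i, ∑ j, (if j < i then w i j / 2 else 0)
      = ∑ i, ∑ j, if i < j then w i j / 2 else 0 := by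
    rw [Finset.sum_comm]
    simp_rw [fun i j => hw j i]
  simp_rw [hsplit, Finset.sum_add_distrib]
  rw [hswap, ← Finset.sum_add_distrib]
  simp_rw [← Finset.sum_add_distrib, ← ite_add_zero, ENNReal.add_halves]

theorem le_periodize (d : ℕ) (W : Vec d → ℝ≥0∞) (T : ℝ) (z : Vec d) : W z ≤ periodize d W T z := by
  simpa [periodize] using
    ENNReal.le_tsum (f := fun n : Fin d → ℤ => W fun k => z k + T * n k) 0

theorem lintegral_clusterDensity_le_energy {d N : ℕ} {T : ℝ} {W : Vec d → ℝ≥0∞}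
    (hW : Measurable W) (hWeven : ∀ x, W (-x) = W x) {ψ : (Fin N → Vec d) → ℂ}
    (hψ : ContDiff ℝ 1 ψ) :
    ∫⁻ x in box d N T, clusterDensity W Finset.univ ψ x
      ≤ kineticE d N T ψ + interE d N T W ψ := by
  have hψm : Measurable fun x => ‖ψ x‖ₑ := hψ.continuous.enorm.measurable
  have hgrad : Measurable fun x => ∑ i, partialGradSq ψ i x :=
    Finset.measurable_sum _ fun i _ => measurable_partialGradSq hψ i
  have hw : ∀ i j, Measurable fun x : Fin N → Vec d =>
      if i < j then W (x i - x j) * ‖ψ x‖ₑ ^ 2 else 0 := fun i j => by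
    split_ifs <;> fun_prop
  have hpairs : ∀ x, ∑ i, ∑ j ∈ Finset.univ.erase i, W (x i - x j) * ‖ψ x‖ₑ ^ 2 / 2
      = ∑ i, ∑ j, if i < j then W (x i - x j) * ‖ψ x‖ₑ ^ 2 else 0 := fun x =>
    sum_sum_erase_div_two fun i j => by rw [← hWeven, neg_sub]
  simp_rw [clusterDensity, particleDensity, Finset.sum_add_distrib, hpairs]
  rw [lintegral_add_left hgrad]
  refine add_le_add (le_of_eq ?_) ?_
  · rw [lintegral_finsetSum _ fun i _ => measurable_partialGradSq hψ i, kineticE]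
    refine Finset.sum_congr rfl fun i _ => ?_
    exact lintegral_finsetSum _ fun k _ => ((hψ.continuous_fderiv one_ne_zero).clm_apply
      continuous_const).enorm.measurable.pow_const 2
  · rw [lintegral_finsetSum _ fun i _ => Finset.measurable_sum _ fun j _ => hw i j]
    refine Finset.sum_le_sum fun i _ => ?_
    rw [lintegral_finsetSum _ fun j _ => hw i j]
    refine Finset.sum_le_sum fun j _ => ?_
    split_ifs
    · exact lintegral_mono fun x => mul_le_mul_left (le_periodize d W T _) _
    · simp

theorem partialGradSq_comp_add_smul {d : ℕ} {ι F : Type*} [Finite ι] [DecidableEq ι]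
    [NormedAddCommGroup F] [NormedSpace ℝ F] (φ : (ι → Vec d) → F) (b : ι → Vec d) (r : ℝ)
    (i : ι) (z : ι → Vec d) :
    partialGradSq (fun z => φ (b + r • z)) i z = ‖r‖ₑ ^ 2 * partialGradSq φ i (b + r • z) := by
  cases nonempty_fintype ι
  rw [partialGradSq, partialGradSq, Finset.mul_sum]
  refine Finset.sum_congr rfl fun k _ => ?_
  rw [fderiv_comp_smul (f := fun z => φ (b + z)), fderiv_comp_add_left, smul_apply, enorm_smul,
    mul_pow]

theorem clusterDensity_comp_add_smul {d : ℕ} {ι F : Type*} [Finite ι] [DecidableEq ι]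
    [NormedAddCommGroup F] [NormedSpace ℝ F] (V : Vec d → ℝ≥0∞) (φ : (ι → Vec d) → F) (b : Vec d)
    (r m : ℝ) (g : Finset ι) (z : ι → Vec d) :
    clusterDensity (scaledPotential V (m * r)) g (fun z => φ ((fun _ => b) + r • z)) z
      = ‖r‖ₑ ^ 2 * clusterDensity (scaledPotential V m) g φ ((fun _ => b) + r • z) := by
  simp only [clusterDensity, particleDensity, partialGradSq_comp_add_smul, scaledPotential,
    Finset.mul_sum, mul_add, Pi.add_apply, Pi.smul_apply, add_sub_add_left_eq_sub, ← smul_sub,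
    smul_smul, enorm_mul, mul_pow, mul_div_assoc]
  refine Finset.sum_congr rfl fun i _ => congrArg _ (Finset.sum_congr rfl fun j _ => ?_)
  ring

theorem eventually_le_energy_of_pos {V : Vec 3 → ℝ≥0∞} (hV : Measurable V)
    (hVs : HasCompactSupport V) (hVeven : ∀ x, V (-x) = V x) (hscat : scatEnergy V ≠ ⊤)
    {ε : ℝ≥0} (hε : 0 < ε) {M : ℕ} (hM : 0 < M) :
    ∀ᶠ l : ℝ in atTop, ∀ N L : ℕ, 0 < L → l = N / L → ∀ ψ : (Fin N → Vec 3) → ℂ,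
      ContDiff ℝ (⊤ : ℕ∞) ψ → ∫⁻ x in box 3 N 1, ‖ψ x‖ₑ ^ 2 = 1 →
      (2 * M - 1 : ℕ) * N * (L ^ 2 * (scatEnergy V / ENNReal.ofReal l))
        ≤ (1 + ε) * (kineticE 3 N 1 ψ + interE 3 N 1 (scaledPotential V N) ψ)
          + M ^ 2 * L ^ 3 * (L ^ 2 * (scatEnergy V / ENNReal.ofReal l)) := by
  filter_upwards [eventually_le_lintegral_Icc_natCast ℂ hV hVs hscat hε hM] with l hl
  rintro N L hL rfl ψ hψ hnorm
  have hL0 : (L : ℝ) ≠ 0 := by positivity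
  have hbox := measurableSet_box 3 N 1
  have h := hl L (fun z => ψ ((fun _ _ => -1 / 2) + (L : ℝ)⁻¹ • z))
    (hψ.comp (by fun_prop))
  simp_rw [div_eq_mul_inv (N : ℝ) L, clusterDensity_comp_add_smul] at h
  rw [lintegral_const_mul' _ _ (by simp), ← preimage_box 3 N L hL,
    setLIntegral_preimage_comp_add_smul volume (inv_ne_zero hL0) _ hbox (fun x => ‖ψ x‖ₑ ^ 2),
    setLIntegral_preimage_comp_add_smul volume (inv_ne_zero hL0) _ hbox
      (clusterDensity (scaledPotential V N) Finset.univ ψ), hnorm,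
    ← div_eq_mul_inv (N : ℝ) L] at h
  set J := ENNReal.ofReal |((L : ℝ)⁻¹ ^ Module.finrank ℝ (Fin N → Vec 3))⁻¹|
  have hJ0 : J ≠ 0 := by
    simp only [J, ne_eq, ENNReal.ofReal_eq_zero, not_le]
    positivity
  have hL1 : (L : ℝ≥0∞) ^ 2 * ‖(L : ℝ)⁻¹‖ₑ ^ 2 = 1 := by
    rw [show (L : ℝ≥0∞) = ‖(L : ℝ)‖ₑ by simp, ← mul_pow, ← enorm_mul, mul_inv_cancel₀ hL0]
    simp
  have henergy := lintegral_clusterDensity_le_energy (T := 1) (measurable_scaledPotential hV N)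
    (fun x => by simp [scaledPotential, hVeven]) (hψ.of_le (by simp))
  refine (ENNReal.mul_le_mul_iff_right hJ0 ENNReal.ofReal_ne_top).1 ?_
  calc
    _ = L ^ 2 * ((2 * M - 1 : ℕ) * N * (scatEnergy V / ENNReal.ofReal (N / L)) * (J * 1)) := by
      ring
    _ ≤ _ := mul_le_mul_right (by simpa only [Fintype.card_fin] using! h) _
    _ = J * ((1 + ε) * ((L ^ 2 * ‖(L : ℝ)⁻¹‖ₑ ^ 2) * ∫⁻ x in box 3 N 1,
            clusterDensity (scaledPotential V N) Finset.univ ψ x)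
          + M ^ 2 * L ^ 3 * (L ^ 2 * (scatEnergy V / ENNReal.ofReal (N / L)))) := by ring
    _ ≤ _ := by
      rw [hL1, one_mul]
      gcongr

theorem exists_tendsto_pow_div {k : ℕ} (hk : 1 < k) {c : ℝ} (hc : 0 < c) :
    ∃ L : ℕ → ℕ, Tendsto (fun N : ℕ => (L N : ℝ) ^ k / N) atTop (nhds c) ∧
      Tendsto (fun N : ℕ => (N : ℝ) / L N) atTop atTop := by
  obtain ⟨j, rfl⟩ := Nat.exists_eq_add_of_le' hk.le
  set y : ℕ → ℝ := fun N => (c * N) ^ ((j + 1 : ℕ) : ℝ)⁻¹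
  have hyk : ∀ N, y N ^ (j + 1) = c * N := fun N =>
    Real.rpow_inv_natCast_pow (by positivity) (by positivity)
  have hy : Tendsto y atTop atTop := (tendsto_rpow_atTop (by positivity)).comp
    (tendsto_natCast_atTop_atTop.const_mul_atTop hc)
  have hfloor : Tendsto (fun N => (⌊y N⌋₊ : ℝ) / y N) atTop (nhds 1) :=
    tendsto_nat_floor_div_atTop.comp hy
  refine ⟨fun N => ⌊y N⌋₊, ?_, ?_⟩
  · have h := (hfloor.pow (j + 1)).const_mul c
    rw [one_pow, mul_one] at h
    refine h.congr' ?_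
    filter_upwards [eventually_gt_atTop 0] with N hN
    have hN' : (N : ℝ) ≠ 0 := by positivity
    rw [div_pow, hyk]
    field_simp
  · have hpow : Tendsto (fun N => y N ^ j) atTop atTop :=
      (tendsto_pow_atTop (by lia)).comp hy
    have h := (hpow.atTop_mul_pos (by simp) (hfloor.inv₀ one_ne_zero)).const_mul_atTop
      (inv_pos.2 hc)
    refine h.congr' ?_
    filter_upwards [hy.eventually_gt_atTop 0] with N hN
    rw [eq_div_of_mul_eq hc.ne' ((mul_comm _ _).trans (hyk N).symm)]
    rw [pow_succ]
    field_simp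

theorem exists_pos_mul_add_lt {c s : ℝ} (h : c < s) :
    ∃ M : ℕ, 0 < M ∧ c * (1 + (M : ℝ)⁻¹) + s < (2 - (M : ℝ)⁻¹) * s := by
  have h0 := tendsto_inv_atTop_nhds_zero_nat (𝕜 := ℝ)
  have hlt := (((h0.const_add 1).const_mul c).add_const s).eventually_lt
    ((h0.const_sub 2).mul_const s) (by linarith)
  exact ((eventually_gt_atTop 0).and hlt).exists

theorem exists_natCast_mul_add_le {c s : ℝ≥0} (h : c < s) :
    ∃ M : ℕ, 0 < M ∧ ∃ L : ℕ → ℕ, Tendsto (fun N : ℕ => (N : ℝ) / L N) atTop atTop ∧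
      ∀ᶠ N in atTop, c * (1 + (M : ℝ≥0)⁻¹) + M ^ 2 * (L N ^ 3 / N) * (L N ^ 3 / N * s)
        ≤ (2 * M - 1 : ℕ) * (L N ^ 3 / N * s) := by
  obtain ⟨M, hM, hcM⟩ := exists_pos_mul_add_lt (NNReal.coe_lt_coe.2 h)
  have hM' : (M : ℝ) ≠ 0 := by positivity
  obtain ⟨L, hL, hNL⟩ := exists_tendsto_pow_div (k := 3) (by simp) (c := (M : ℝ)⁻¹) (by positivity)
  have hlt : ∀ᶠ N : ℕ in atTop, c * (1 + (M : ℝ)⁻¹) + M ^ 2 * ((L N : ℝ) ^ 3 / N) ^ 2 * s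
      < (2 * M - 1) * ((L N : ℝ) ^ 3 / N) * s := by
    refine ((((hL.pow 2).const_mul _).mul_const _).const_add _).eventually_lt
      ((hL.const_mul _).mul_const _) ?_
    calc _ = c * (1 + (M : ℝ)⁻¹) + s := by field_simp
      _ < _ := hcM
      _ = _ := by field_simp
  have h2M : ((2 * M - 1 : ℕ) : ℝ) = 2 * M - 1 := by
    rw [Nat.cast_sub (by lia)]
    push_cast
    rfl
  refine ⟨M, hM, L, hNL, hlt.mono fun N hN => ?_⟩
  rw [← NNReal.coe_le_coe]
  simp only [NNReal.coe_add, NNReal.coe_mul, NNReal.coe_natCast, h2M]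
  push_cast
  linarith

theorem mul_natCast_le_of_mul_le_add {a b c e : ℝ≥0} {E : ℝ≥0∞} {N : ℕ} (he : 0 < e)
    (habc : c * e + b ≤ a) (h : a * N ≤ e * E + b * N) : c * N ≤ E := by
  have habc' : (c * e + b : ℝ≥0∞) ≤ a := mod_cast habc
  have h' : (e : ℝ≥0∞) * (c * N) + b * N ≤ e * E + b * N :=
    calc _ = (c * e + b : ℝ≥0∞) * N := by ring
      _ ≤ _ := (mul_le_mul_left habc' _).trans h
  rw [ENNReal.add_le_add_iff_right (by finiteness)] at h'
  exact (ENNReal.mul_le_mul_iff_right (mod_cast he.ne') ENNReal.coe_ne_top).1 h'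

theorem eventually_le_energy {V : Vec 3 → ℝ≥0∞} (hV : Measurable V)
    (hVs : HasCompactSupport V) (hVeven : ∀ x, V (-x) = V x) (hscat : scatEnergy V ≠ ⊤)
    {c : ℝ≥0} (hc : c < scatEnergy V) :
    ∀ᶠ N : ℕ in atTop, ∀ ψ, IsTrialState 3 N 1 ψ →
      c * N ≤ kineticE 3 N 1 ψ + interE 3 N 1 (scaledPotential V N) ψ := by
  obtain ⟨s, hs⟩ : ∃ s : ℝ≥0, scatEnergy V = s := ⟨_, (ENNReal.coe_toNNReal hscat).symm⟩
  rw [hs, ENNReal.coe_lt_coe] at hc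
  obtain ⟨M, hM, L, hNL, hle⟩ := exists_natCast_mul_add_le hc
  have hε : 0 < (M : ℝ≥0)⁻¹ := by positivity
  filter_upwards [hle, hNL.eventually_gt_atTop 0,
    hNL.eventually (eventually_le_energy_of_pos hV hVs hVeven hscat hε hM)] with N hN hpos h ψ hψ
  obtain ⟨hN0, hL0⟩ : N ≠ 0 ∧ L N ≠ 0 := by
    simpa only [ne_eq, Nat.cast_eq_zero] using div_ne_zero_iff.1 hpos.ne'
  have hq : (L N : ℝ≥0∞) ^ 2 * (scatEnergy V / ENNReal.ofReal (N / L N))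
      = ((L N ^ 3 / N * s : ℝ≥0) : ℝ≥0∞) := by
    rw [hs, ← NNReal.coe_natCast, ← NNReal.coe_natCast, ← NNReal.coe_div,
      ENNReal.ofReal_coe_nnreal, ← ENNReal.coe_div (by positivity), ← ENNReal.coe_natCast]
    norm_cast
    push_cast
    field_simp
  have hL3 : (L N : ℝ≥0∞) ^ 3 = (L N ^ 3 / N : ℝ≥0) * N := by
    norm_cast
    field_simp
  have h' := h N (L N) (Nat.pos_of_ne_zero hL0) rfl ψ hψ.1 hψ.2.2.2
  rw [hq, hL3] at h'
  refine mul_natCast_le_of_mul_le_add (by positivity) hN ?_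
  push_cast at h' ⊢
  convert h' using 1 <;> ring

/-! ### Scattering profiles and Jastrow functions -/

theorem rIn_le_integral_contDiffBump (b : ContDiffBump (0 : ℝ)) :
    b.rIn ≤ ∫ t in (0 : ℝ)..b.rOut, b t := by
  have hone : ∫ t in (0 : ℝ)..b.rIn, b t = b.rIn := by
    calc ∫ t in (0 : ℝ)..b.rIn, b t = ∫ _ in (0 : ℝ)..b.rIn, (1 : ℝ) := by
          refine intervalIntegral.integral_congr fun t ht => b.one_of_mem_closedBall ?_
          rw [Set.uIcc_of_le b.rIn_pos.le] at ht
          rw [mem_closedBall_zero_iff, Real.norm_of_nonneg ht.1]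
          exact ht.2
      _ = b.rIn := by simp
  calc b.rIn = ∫ t in (0 : ℝ)..b.rIn, b t := hone.symm
    _ ≤ _ := intervalIntegral.integral_mono_interval le_rfl b.rIn_pos.le b.rIn_lt_rOut.le
      (ae_of_all _ fun t => b.nonneg) (b.continuous.intervalIntegrable _ _)

theorem abs_integral_contDiffBump_le (b : ContDiffBump (0 : ℝ)) (t : ℝ) :
    |∫ s in (0 : ℝ)..t, b s| ≤ ∫ s in (0 : ℝ)..b.rOut, b s := by
  wlog ht : 0 ≤ t generalizing t
  · have hneg := intervalIntegral.integral_comp_neg (a := 0) (b := t) b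
    simp only [b.neg, neg_zero] at hneg
    rw [hneg, intervalIntegral.integral_symm, abs_neg]
    exact this _ (by linarith)
  have hint (u v : ℝ) : IntervalIntegrable b volume u v := b.continuous.intervalIntegrable u v
  have hnonneg : 0 ≤ᵐ[volume] b := ae_of_all _ fun _ => b.nonneg
  rw [abs_of_nonneg (intervalIntegral.integral_nonneg ht fun _ _ => b.nonneg)]
  rcases le_total t b.rOut with hle | hle
  · exact intervalIntegral.integral_mono_interval le_rfl ht hle
      (ae_restrict_of_ae hnonneg) (hint _ _)
  · have hzero : ∫ s in b.rOut..t, b s = ∫ _ in b.rOut..t, (0 : ℝ) := by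
      refine intervalIntegral.integral_congr fun s hs => b.zero_of_le_dist ?_
      rw [Set.uIcc_of_le hle] at hs
      rw [dist_zero_right]
      exact hs.1.trans (le_abs_self s)
    rw [← intervalIntegral.integral_add_adjacent_intervals (hint 0 b.rOut) (hint _ _), hzero]
    simp

theorem exists_smooth_truncation {K : ℝ≥0} (hK : 1 < K) :
    ∃ χ : ℝ → ℝ, ContDiff ℝ (⊤ : ℕ∞) χ ∧ LipschitzWith K χ ∧ χ 0 = 0 ∧ χ 1 = 1 ∧
      ∀ t, |χ t| ≤ 1 := by
  let b : ContDiffBump (0 : ℝ) := ⟨K⁻¹, 1, by positivity, mod_cast inv_lt_one_of_one_lt₀ hK⟩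
  set I : ℝ := ∫ t in (0 : ℝ)..1, b t
  have hIr : (K : ℝ)⁻¹ ≤ I := rIn_le_integral_contDiffBump b
  have hI0 : 0 < I := b.rIn_pos.trans_le hIr
  have hderiv (t : ℝ) : HasDerivAt (fun t => I⁻¹ * ∫ s in (0 : ℝ)..t, b s) (I⁻¹ * b t) t :=
    (intervalIntegral.integral_hasDerivAt_right (b.continuous.intervalIntegrable _ _)
      (b.continuous.stronglyMeasurableAtFilter _ _) b.continuous.continuousAt).const_mul _
  refine ⟨fun t => I⁻¹ * ∫ s in (0 : ℝ)..t, b s, ?_, ?_, by simp, inv_mul_cancel₀ hI0.ne',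
    fun t => ?_⟩
  · refine contDiff_infty_iff_deriv.2 ⟨fun t => (hderiv t).differentiableAt, ?_⟩
    rw [funext fun t => (hderiv t).deriv]
    exact contDiff_const.mul b.contDiff
  · refine lipschitzWith_of_nnnorm_deriv_le (fun t => (hderiv t).differentiableAt) fun t => ?_
    rw [(hderiv t).deriv, ← NNReal.coe_le_coe, coe_nnnorm,
      Real.norm_of_nonneg (mul_nonneg (inv_nonneg.2 hI0.le) b.nonneg)]
    calc I⁻¹ * b t ≤ K * 1 :=
          mul_le_mul (inv_le_of_inv_le₀ (by positivity) hIr) b.le_one b.nonneg (by positivity)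
      _ = K := mul_one _
  · rw [abs_mul, abs_of_pos (inv_pos.2 hI0), inv_mul_le_one₀ hI0]
    exact abs_integral_contDiffBump_le b t

theorem lintegral_energyDensity_symmetrize_le {d : ℕ} {F : Type*} [NormedAddCommGroup F]
    [NormedSpace ℝ F] {V : Vec d → ℝ≥0∞} (hV : Measurable V) (hVeven : ∀ x, V (-x) = V x)
    {f : Vec d → F} (hf : ContDiff ℝ 1 f) :
    ∫⁻ x, energyDensity V (fun x => (2 : ℝ)⁻¹ • (f x + f (-x))) x
      ≤ ∫⁻ x, energyDensity V f x := by
  have hfd : Differentiable ℝ f := hf.differentiable one_ne_zero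
  have hfd' : Differentiable ℝ fun x => f (-x) := hfd.comp differentiable_id.neg
  have hneg (x : Vec d) : energyDensity V (fun x => f (-x)) x = energyDensity V f (-x) := by
    have hV1 : scaledPotential V (-1) = V := funext fun x => by simp [scaledPotential, hVeven]
    simpa [hV1] using energyDensity_comp_smul V (l := -1) (by simp) f x
  have hcoef : (‖(2 : ℝ)⁻¹‖₊ : ℝ≥0∞) ^ 2 * 2 = 2⁻¹ := by
    rw [nnnorm_inv, Real.nnnorm_ofNat]
    norm_cast
    push_cast
    rw [pow_two, mul_assoc, ENNReal.inv_mul_cancel (by simp) (by simp), mul_one]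
  calc ∫⁻ x, energyDensity V (fun x => (2 : ℝ)⁻¹ • (f x + f (-x))) x
      ≤ ∫⁻ x, 2⁻¹ * (energyDensity V f x + energyDensity V f (-x)) := by
        refine lintegral_mono fun x => (energyDensity_lipschitz_comp_le (lipschitzWith_smul _)
          (differentiable_id.const_smul _) (smul_zero _) V (hfd.add hfd') x).trans ?_
        rw [← hcoef, mul_assoc, ← hneg]
        exact mul_le_mul_right (energyDensity_add_le V hfd hfd' x) _
    _ = _ := by
        rw [lintegral_const_mul' _ _ (by simp), lintegral_add_left (measurable_energyDensity hV hf),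
          lintegral_neg_eq_self, ← two_mul, ← mul_assoc, ENNReal.inv_mul_cancel (by simp) (by simp),
          one_mul]

theorem exists_profile {V : Vec 3 → ℝ≥0∞} (hV : Measurable V) (hVeven : ∀ x, V (-x) = V x)
    {c : ℝ≥0∞} (hc : scatEnergy V < c) :
    ∃ f : Vec 3 → ℂ, ContDiff ℝ (⊤ : ℕ∞) f ∧ HasCompactSupport (fun x => f x - 1) ∧
      (∀ x, f (-x) = f x) ∧ (∀ x, ‖f x‖ ≤ 1) ∧ ∫⁻ x, energyDensity V f x < c := by
  obtain ⟨_, ⟨f, hf, hfc, rfl⟩, hlt⟩ := sInf_lt_iff.1 hc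
  set g : Vec 3 → ℝ := fun x => (2 : ℝ)⁻¹ • (f x + f (-x)) with hg
  have hgs : ContDiff ℝ (⊤ : ℕ∞) g := (hf.add (hf.comp contDiff_neg)).const_smul _
  have hgc : HasCompactSupport fun x => g x - 1 := by
    have hsum := (hfc.add (hfc.comp_homeomorph (Homeomorph.neg (Vec 3)))).comp_left
      (g := fun t : ℝ => (2 : ℝ)⁻¹ • t) (smul_zero _)
    convert! hsum using 1
    ext x
    simp [hg]
    ring
  have hgE : ∫⁻ x, energyDensity V g x < c :=
    (lintegral_energyDensity_symmetrize_le hV hVeven (hf.of_le (by simp))).trans_lt hlt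
  obtain ⟨K, hK, hKc⟩ : ∃ K : ℝ≥0, 1 < K ∧ K ^ 2 * ∫⁻ x, energyDensity V g x < c := by
    have hcont : ContinuousAt (fun K : ℝ≥0 => K ^ 2 * ∫⁻ x, energyDensity V g x) 1 :=
      ((ENNReal.continuous_mul_const hgE.ne_top).comp
        ((ENNReal.continuous_pow 2).comp ENNReal.continuous_coe)).continuousAt
    obtain ⟨K, hKc, hK⟩ := ((hcont.eventually_lt_const (by simpa using hgE)).filter_mono
      nhdsWithin_le_nhds |>.and (self_mem_nhdsWithin (s := Set.Ioi 1))).exists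
    exact ⟨K, hK, hKc⟩
  obtain ⟨χ, hχ, hχK, hχ0, hχ1, hχle⟩ := exists_smooth_truncation hK
  have hχℂ : ContDiff ℝ (⊤ : ℕ∞) fun t => (χ t : ℂ) := Complex.ofRealCLM.contDiff.comp hχ
  have hχℂK : LipschitzWith K fun t => (χ t : ℂ) := by
    simpa only [one_mul] using! Complex.isometry_ofReal.lipschitz.comp hχK
  refine ⟨fun x => χ (g x), hχℂ.comp hgs, ?_, fun x => by simp only [hg, neg_neg, add_comm],
    fun x => by simpa using hχle (g x), lt_of_le_of_lt ?_ hKc⟩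
  · refine hgc.mono fun x hx hx' => hx ?_
    simp only [sub_eq_zero.1 hx', hχ1, Complex.ofReal_one, sub_self]
  · rw [← lintegral_const_mul' _ _ (by finiteness)]
    exact lintegral_mono fun x => energyDensity_lipschitz_comp_le hχℂK
      (hχℂ.differentiable (by simp)) (by simp [hχ0]) V (hgs.differentiable (by simp)) x

section PeriodicExtension

variable {d : ℕ} {α E : Type*} [NormedAddCommGroup E] [NormedSpace ℝ E]

/-- The closed unit cube centred at the origin, a fundamental domain of the unit torus. -/
def centredCube (d : ℕ) : Set (Vec d) := Set.Icc (fun _ => -1 / 2) (fun _ => 1 / 2)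

/-- Functions on the unit torus, encoded as `ℤᵈ`-periodic functions on `ℝᵈ`. -/
def IsIntPeriodic (f : Vec d → α) : Prop :=
  ∀ (z : Vec d) (n : Fin d → ℤ), f (fun k => z k + n k) = f z

/-- The periodic function that agrees with `f` on the unit cube centred at the origin. -/
def periodicExtension (f : Vec d → α) (z : Vec d) : α := f fun k => z k - round (z k)

theorem mem_centredCube {z : Vec d} : z ∈ centredCube d ↔ ∀ k, |z k| ≤ 1 / 2 := by
  simp only [centredCube, Set.mem_Icc, Pi.le_def, ← forall_and, abs_le, neg_div]

theorem IsIntPeriodic.comp_left {β : Type*} {f : Vec d → α} (hf : IsIntPeriodic f) (g : α → β) :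
    IsIntPeriodic fun z => g (f z) :=
  fun z n => congrArg g (hf z n)

theorem isIntPeriodic_periodicExtension (f : Vec d → α) : IsIntPeriodic (periodicExtension f) :=
  fun z n => by simp [periodicExtension]

theorem isIntPeriodic_periodize (W : Vec d → ℝ≥0∞) : IsIntPeriodic (periodize d W 1) := by
  refine fun z n => Eq.trans (tsum_congr fun m => ?_)
    ((Equiv.addRight n).tsum_eq fun m : Fin d → ℤ => W fun k => z k + 1 * m k)
  congr 1
  ext k
  simp only [Equiv.coe_addRight, Pi.add_apply]
  push_cast
  ring

theorem IsIntPeriodic.fderiv {f : Vec d → E} (hf : IsIntPeriodic f) :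
    IsIntPeriodic (fderiv ℝ f) := fun z n => by
  have hshift : (fun y => f (y + fun k => (n k : ℝ))) = f := funext fun y => hf y n
  simpa only [hshift] using!
    (fderiv_comp_add_right (𝕜 := ℝ) (f := f) (x := z) fun k => (n k : ℝ)).symm

section Locality

variable {f : Vec d → α} {a : α}

theorem periodicExtension_eq (hf : ∀ x, 1 / 4 ≤ ‖x‖ → f x = a) {z : Vec d} {n : Fin d → ℤ}
    (hz : ∀ k, |z k - n k| ≤ 3 / 4) : periodicExtension f z = f fun k => z k - n k := by
  by_cases hn : n = fun k => round (z k)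
  · rw [hn, periodicExtension]
  obtain ⟨k, hk⟩ := Function.ne_iff.1 hn
  have hne : (1 : ℝ) ≤ |(n k : ℝ) - round (z k)| := by
    exact_mod_cast Int.one_le_abs (sub_ne_zero.2 hk)
  have hround : |z k - round (z k)| ≤ 1 / 2 := abs_sub_round (z k)
  have htri : |(n k : ℝ) - round (z k)| ≤ |z k - n k| + |z k - round (z k)| := by
    rw [abs_sub_comm (z k) (n k)]
    exact abs_sub_le _ _ _
  have hnorm (m : Fin d → ℤ) : |z k - m k| ≤ ‖fun k => z k - (m k : ℝ)‖ :=
    norm_le_pi_norm (fun k => z k - (m k : ℝ)) k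
  rw [periodicExtension, hf, hf]
  · linarith [hnorm n]
  · linarith [hnorm fun k => round (z k), hz k]

theorem periodicExtension_of_mem (hf : ∀ x, 1 / 4 ≤ ‖x‖ → f x = a) {z : Vec d}
    (hz : z ∈ centredCube d) : periodicExtension f z = f z := by
  rw [periodicExtension_eq hf (n := 0) fun k => ?_]
  · simp
  · simpa using (mem_centredCube.1 hz k).trans (by norm_num)

theorem periodicExtension_neg (hf : ∀ x, 1 / 4 ≤ ‖x‖ → f x = a) (hfeven : ∀ x, f (-x) = f x)
    (z : Vec d) : periodicExtension f (-z) = periodicExtension f z := by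
  have hneg : (fun k => (-z) k - ((-round (z k) : ℤ) : ℝ)) = -fun k => z k - round (z k) := by
    ext k
    simp
    ring
  rw [periodicExtension_eq hf (n := fun k => -round (z k)) fun k => ?_, hneg, hfeven,
    periodicExtension]
  rw [congrFun hneg k, Pi.neg_apply, abs_neg]
  exact (abs_sub_round (z k)).trans (by norm_num)

theorem periodicExtension_eventuallyEq (hf : ∀ x, 1 / 4 ≤ ‖x‖ → f x = a) {z : Vec d}
    {n : Fin d → ℤ} (hz : ∀ k, |z k - n k| ≤ 1 / 2) :
    periodicExtension f =ᶠ[nhds z] fun w => f fun k => w k - n k := by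
  filter_upwards [Metric.ball_mem_nhds z (by norm_num : (0 : ℝ) < 1 / 4)] with w hw
  refine periodicExtension_eq hf fun k => ?_
  rw [Metric.mem_ball, dist_eq_norm] at hw
  have hwk : |w k - z k| ≤ 1 / 4 := (norm_le_pi_norm (w - z) k).trans hw.le
  linarith [abs_sub_le (w k) (z k) (n k), hz k]

end Locality

theorem contDiff_periodicExtension {f : Vec d → E} {a : E} (hf : ∀ x, 1 / 4 ≤ ‖x‖ → f x = a)
    {m : WithTop ℕ∞} (hfs : ContDiff ℝ m f) : ContDiff ℝ m (periodicExtension f) := by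
  refine contDiff_iff_contDiffAt.2 fun z => ContDiffAt.congr_of_eventuallyEq ?_
    (periodicExtension_eventuallyEq hf (n := fun k => round (z k)) fun k => abs_sub_round (z k))
  exact (hfs.comp (by fun_prop)).contDiffAt

theorem fderiv_periodicExtension_of_mem {f : Vec d → E} {a : E}
    (hf : ∀ x, 1 / 4 ≤ ‖x‖ → f x = a) {z : Vec d} (hz : z ∈ centredCube d) :
    fderiv ℝ (periodicExtension f) z = fderiv ℝ f z := by
  have hev := periodicExtension_eventuallyEq hf (z := z) (n := 0) fun k => by
    simpa using mem_centredCube.1 hz k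
  simpa using hev.fderiv_eq

theorem periodize_of_mem {W : Vec d → ℝ≥0∞} (hW : ∀ x, 1 / 2 ≤ ‖x‖ → W x = 0) {z : Vec d}
    (hz : z ∈ centredCube d) : periodize d W 1 z = W z := by
  rw [periodize, tsum_eq_single 0]
  · simp
  intro n hn
  obtain ⟨k, hk⟩ := Function.ne_iff.1 hn
  have hnk : (1 : ℝ) ≤ |(n k : ℝ)| := by exact_mod_cast Int.one_le_abs hk
  have htri := abs_sub_abs_le_abs_add (n k : ℝ) (z k)
  refine hW _ (le_trans ?_ (norm_le_pi_norm (fun k => z k + 1 * (n k : ℝ)) k))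
  rw [Real.norm_eq_abs, one_mul, add_comm]
  linarith [mem_centredCube.1 hz k]

theorem setLIntegral_energyDensity_periodicExtension_le {f : Vec d → E} {a : E}
    (hf : ∀ x, 1 / 4 ≤ ‖x‖ → f x = a) {W : Vec d → ℝ≥0∞} (hW : ∀ x, 1 / 2 ≤ ‖x‖ → W x = 0) :
    ∫⁻ z in centredCube d, energyDensity (periodize d W 1) (periodicExtension f) z
      ≤ ∫⁻ z, energyDensity W f z := by
  refine le_of_eq_of_le (setLIntegral_congr_fun measurableSet_Icc fun z hz => ?_)
    (setLIntegral_le_lintegral (centredCube d) _)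
  simp only [energyDensity, gradSq, fderiv_periodicExtension_of_mem hf hz, periodize_of_mem hW hz,
    periodicExtension_of_mem hf hz]

theorem setLIntegral_enorm_fderiv_periodicExtension_le {f : Vec d → E} {a : E}
    (hf : ∀ x, 1 / 4 ≤ ‖x‖ → f x = a) (v : Vec d) :
    ∫⁻ z in centredCube d, ‖fderiv ℝ (periodicExtension f) z v‖ₑ ≤ ∫⁻ z, ‖fderiv ℝ f z v‖ₑ := by
  refine le_of_eq_of_le (setLIntegral_congr_fun measurableSet_Icc fun z hz => ?_)
    (setLIntegral_le_lintegral (centredCube d) _)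
  simp only [fderiv_periodicExtension_of_mem hf hz]

theorem setLIntegral_comp_periodicExtension_le {f : Vec d → α} {a : α}
    (hf : ∀ x, 1 / 4 ≤ ‖x‖ → f x = a) (g : α → ℝ≥0∞) :
    ∫⁻ z in centredCube d, g (periodicExtension f z) ≤ ∫⁻ z, g (f z) := by
  refine le_of_eq_of_le (setLIntegral_congr_fun measurableSet_Icc fun z hz => ?_)
    (setLIntegral_le_lintegral (centredCube d) _)
  simp only [periodicExtension_of_mem hf hz]

end PeriodicExtension

section TorusIntegral

open scoped Pointwise

variable {d : ℕ} {G : Vec d → ℝ≥0∞}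

theorem vadd_fundamentalDomain_basisFun_ae_eq_Icc (v : Vec d) :
    (v +ᵥ ZSpan.fundamentalDomain (Pi.basisFun ℝ (Fin d)) : Set (Vec d))
      =ᵐ[volume] Set.Icc v (v + 1) := by
  have hIco : v +ᵥ ZSpan.fundamentalDomain (Pi.basisFun ℝ (Fin d))
      = Set.pi Set.univ fun k => Set.Ico (v k) ((v + 1) k) := by
    ext z
    rw [Set.mem_vadd_set_iff_neg_vadd_mem, ZSpan.fundamentalDomain_pi_basisFun]
    simp only [Set.mem_pi, Set.mem_univ, true_implies, Set.mem_Ico, vadd_eq_add, Pi.add_apply,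
      Pi.neg_apply, Pi.one_apply]
    refine forall_congr' fun k => ?_
    constructor <;> rintro ⟨h1, h2⟩ <;> constructor <;> linarith
  rw [hIco]
  exact Measure.univ_pi_Ico_ae_eq_Icc

theorem IsIntPeriodic.vadd_span {α : Type*} {f : Vec d → α} (hf : IsIntPeriodic f)
    (g : (Submodule.span ℤ (Set.range (Pi.basisFun ℝ (Fin d)))).toAddSubgroup) (z : Vec d) :
    f (g +ᵥ z) = f z := by
  have hg : (g : Vec d) ∈ Submodule.span ℤ (Set.range (Pi.basisFun ℝ (Fin d))) := g.2
  rw [Module.Basis.mem_span_iff_repr_mem ℤ] at hg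
  choose n hn using hg
  rw [← hf z n]
  congr 1
  ext k
  have hk : (n k : ℝ) = (g : Vec d) k := hn k
  rw [hk, add_comm]
  rfl

theorem IsIntPeriodic.setLIntegral_Icc_add_one (hG : IsIntPeriodic G) (v w : Vec d) :
    ∫⁻ z in Set.Icc v (v + 1), G z = ∫⁻ z in Set.Icc w (w + 1), G z := by
  have hD := ZSpan.isAddFundamentalDomain' (Pi.basisFun ℝ (Fin d)) (volume : Measure (Vec d))
  have : Countable (Submodule.span ℤ (Set.range (Pi.basisFun ℝ (Fin d)))).toAddSubgroup :=
    inferInstanceAs (Countable (Submodule.span ℤ (Set.range (Pi.basisFun ℝ (Fin d)))))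
  rw [← setLIntegral_congr (vadd_fundamentalDomain_basisFun_ae_eq_Icc v),
    ← setLIntegral_congr (vadd_fundamentalDomain_basisFun_ae_eq_Icc w)]
  exact (hD.vadd_of_comm v).setLIntegral_eq (hD.vadd_of_comm w) G hG.vadd_span

theorem IsIntPeriodic.lintegral_centredCube_sub (hG : IsIntPeriodic G) (hGm : Measurable G)
    (y : Vec d) : ∫⁻ z in centredCube d, G (y - z) = ∫⁻ z in centredCube d, G z := by
  have hpre : (fun z => y - z) ⁻¹' Set.Icc (y - fun _ => 1 / 2) (y - (fun _ => 1 / 2) + 1)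
      = centredCube d := by
    rw [Set.preimage_const_sub_Icc, centredCube]
    congr 1 <;> ext k <;> simp only [Pi.sub_apply, Pi.add_apply, Pi.one_apply] <;> ring
  have hcube : centredCube d = Set.Icc (fun _ => -1 / 2 : Vec d) ((fun _ => -1 / 2) + 1) := by
    rw [centredCube]
    congr 1
    ext k
    simp only [Pi.add_apply, Pi.one_apply]
    norm_num
  have hsub := (Measure.measurePreserving_sub_left volume y).setLIntegral_comp_preimage
    (s := Set.Icc (y - fun _ => 1 / 2) (y - (fun _ => 1 / 2) + 1)) measurableSet_Icc hGm
  rw [hpre] at hsub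
  rw [hsub, hcube]
  exact hG.setLIntegral_Icc_add_one _ _

instance isProbabilityMeasure_centredCube :
    IsProbabilityMeasure (volume.restrict (centredCube d)) :=
  ⟨by rw [Measure.restrict_apply_univ, centredCube, Real.volume_Icc_pi]; norm_num⟩

theorem volume_restrict_box (d N : ℕ) : (volume.restrict (box d N 1) : Measure (Fin N → Vec d))
    = Measure.pi fun _ => volume.restrict (centredCube d) := by
  have hbox : box d N 1 = Set.pi Set.univ fun _ => centredCube d := by
    ext x
    simp [box, centredCube, Pi.le_def, forall_and]
  rw [hbox, ← Measure.restrict_pi_pi]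
  rfl

instance isProbabilityMeasure_box (N : ℕ) : IsProbabilityMeasure (volume.restrict (box d N 1)) := by
  rw [volume_restrict_box]
  infer_instance

variable {N : ℕ} {i j : Fin N}

theorem IsIntPeriodic.lintegral_box_comp_sub_mul (hG : IsIntPeriodic G) (hGm : Measurable G)
    (hij : i ≠ j) {H : (Fin N → Vec d) → ℝ≥0∞} (hHm : Measurable H)
    (hH : ∀ x z, H (Function.update x j z) = H x) :
    ∫⁻ x in box d N 1, G (x i - x j) * H x
      = (∫⁻ z in centredCube d, G z) * ∫⁻ x in box d N 1, H x := by
  rw [volume_restrict_box, ← lintegral_lintegral_update _ (f := fun x => G (x i - x j) * H x)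
    ((hGm.comp (by fun_prop)).mul hHm) j, ← lintegral_const_mul _ hHm]
  refine lintegral_congr fun x => ?_
  have hm : Measurable fun z => G (x i - z) := hGm.comp (by fun_prop)
  simp only [hH, Function.update_self, Function.update_of_ne hij]
  rw [lintegral_mul_const _ hm, hG.lintegral_centredCube_sub hGm]

theorem IsIntPeriodic.lintegral_box_comp_sub (hG : IsIntPeriodic G) (hGm : Measurable G)
    (hij : i ≠ j) : ∫⁻ x in box d N 1, G (x i - x j) = ∫⁻ z in centredCube d, G z := by
  simpa using hG.lintegral_box_comp_sub_mul hGm hij (H := fun _ => 1) measurable_const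
    fun _ _ => rfl

theorem IsIntPeriodic.lintegral_box_comp_sub_mul_comp_sub (hG : IsIntPeriodic G)
    (hGm : Measurable G) {l : Fin N} (hij : i ≠ j) (hil : i ≠ l) (hjl : j ≠ l) :
    ∫⁻ x in box d N 1, G (x i - x j) * G (x i - x l) = (∫⁻ z in centredCube d, G z) ^ 2 := by
  rw [hG.lintegral_box_comp_sub_mul hGm hij (H := fun x => G (x i - x l)) (hGm.comp (by fun_prop))
    fun x z => ?_, hG.lintegral_box_comp_sub hGm hil, sq]
  rw [Function.update_of_ne hij, Function.update_of_ne hjl.symm]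

end TorusIntegral

section Pairs

variable {ι M : Type*} [Fintype ι] [LinearOrder ι]

theorem sum_lt_comp_perm [AddCommMonoid M] {g : ι → ι → M} (hg : ∀ i j, g i j = g j i)
    (σ : Equiv.Perm ι) :
    ∑ p : ι × ι with p.1 < p.2, g (σ p.1) (σ p.2) = ∑ p : ι × ι with p.1 < p.2, g p.1 p.2 := by
  have hpairs : (Finset.univ : Finset ι).offDiag.filter (fun p => p.1 < p.2)
      = Finset.univ.filter fun p => p.1 < p.2 := by
    ext p
    simpa using fun h : p.1 < p.2 => h.ne
  have hsym (h : ι → ι → M) (hh : ∀ i j, h i j = h j i) :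
      ∑ p : ι × ι with p.1 < p.2, h p.1 p.2
        = ∑ e ∈ Finset.univ.sym2 with ¬ e.IsDiag, Sym2.lift ⟨h, hh⟩ e := by
    rw [Finset.sum_sym2_filter_not_isDiag, hpairs]
    rfl
  rw [hsym _ hg, hsym (fun i j => g (σ i) (σ j)) fun i j => hg _ _]
  refine Finset.sum_nbij' (Sym2.map σ) (Sym2.map σ.symm) ?_ ?_ ?_ ?_ ?_ <;>
    refine Sym2.ind fun i j => ?_ <;> simp

theorem prod_lt_comp_perm [CommMonoid M] {g : ι → ι → M} (hg : ∀ i j, g i j = g j i)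
    (σ : Equiv.Perm ι) :
    ∏ p : ι × ι with p.1 < p.2, g (σ p.1) (σ p.2) = ∏ p : ι × ι with p.1 < p.2, g p.1 p.2 :=
  sum_lt_comp_perm (M := Additive M) hg σ

theorem sum_lt_eq_sum_erase [AddCommMonoid M] {w : ι → ι → M} (hw : ∀ a b, w a b = w b a) (i : ι)
    (hi : ∀ a b, a ≠ i → b ≠ i → w a b = 0) :
    ∑ p : ι × ι with p.1 < p.2, w p.1 p.2 = ∑ j ∈ Finset.univ.erase i, w i j := by
  have hrow (a : ι) (ha : a ∈ Finset.univ.erase i) :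
      (∑ b, if a < b then w a b else 0) = if a < i then w i a else 0 := by
    rw [Finset.sum_eq_single i (fun b _ hb => ?_) (by simp), hw]
    rw [hi a b (Finset.ne_of_mem_erase ha) hb, ite_self]
  rw [Finset.sum_filter, Fintype.sum_prod_type, ← Finset.add_sum_erase _ _ (Finset.mem_univ i),
    Finset.sum_congr rfl hrow, ← Finset.sum_erase Finset.univ (a := i) (by simp),
    ← Finset.sum_add_distrib]
  refine Finset.sum_congr rfl fun j hj => ?_
  rcases lt_or_gt_of_ne (Finset.ne_of_mem_erase hj) with h | h <;> simp [h, h.not_gt]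

end Pairs

theorem enorm_prod_eq {ι : Type*} (s : Finset ι) (g : ι → ℂ) :
    ‖∏ i ∈ s, g i‖ₑ = ∏ i ∈ s, ‖g i‖ₑ := by
  simp only [enorm_eq_nnnorm, nnnorm_prod, ENNReal.ofNNReal_finsetProd]

theorem enorm_prod_le_one {ι : Type*} {s : Finset ι} {g : ι → ℂ} (hg : ∀ i ∈ s, ‖g i‖ ≤ 1) :
    ‖∏ i ∈ s, g i‖ₑ ≤ 1 := by
  rw [enorm_prod_eq]
  exact Finset.prod_le_one' fun i hi => ENNReal.coe_le_one_iff.2 (hg i hi)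

theorem one_le_prod_add_sum_tsub {ι : Type*} (s : Finset ι) (g : ι → ℝ≥0∞) :
    1 ≤ ∏ i ∈ s, g i + ∑ i ∈ s, (1 - g i) := by
  classical
  induction s using Finset.induction_on with
  | empty => simp
  | insert a s ha ih =>
    rw [Finset.prod_insert ha, Finset.sum_insert ha]
    set P := ∏ i ∈ s, g i
    set S := ∑ i ∈ s, (1 - g i)
    rcases le_total 1 (g a) with h | h
    · calc 1 ≤ P + S := ih
        _ ≤ g a * P + (1 - g a + S) := add_le_add (le_mul_of_one_le_left' h) le_add_self
    · calc 1 = g a + (1 - g a) := (add_tsub_cancel_of_le h).symm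
        _ ≤ g a * (P + S) + (1 - g a) := by gcongr; exact le_mul_of_one_le_right' ih
        _ ≤ g a * P + S + (1 - g a) := by
            rw [mul_add]
            gcongr
            exact mul_le_of_le_one_left' h
        _ = g a * P + (1 - g a + S) := by ring

theorem enorm_fderiv_prod_le {ι E : Type*} [NormedAddCommGroup E] [NormedSpace ℝ E] {s : Finset ι}
    {g : ι → E → ℂ} (hg : ∀ i ∈ s, Differentiable ℝ (g i)) {x : E} (hx : ∀ i ∈ s, ‖g i x‖ ≤ 1)
    (v : E) : ‖fderiv ℝ (fun y => ∏ i ∈ s, g i y) x v‖ₑ ≤ ∑ i ∈ s, ‖fderiv ℝ (g i) x v‖ₑ := by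
  classical
  rw [fderiv_finsetProd fun i hi => hg i hi x, sum_apply]
  refine (enorm_sum_le _ _).trans (Finset.sum_le_sum fun i _ => ?_)
  rw [smul_apply, enorm_smul]
  exact mul_le_of_le_one_left'
    (enorm_prod_le_one fun j hj => hx j (Finset.mem_of_mem_erase hj))

section Jastrow

variable {d : ℕ} {ι : Type*} [Fintype ι] [LinearOrder ι]

/-- The Jastrow trial function: the product of `F` over all pairs of particles. -/
def jastrow (F : Vec d → ℂ) (x : ι → Vec d) : ℂ :=
  ∏ p : ι × ι with p.1 < p.2, F (x p.1 - x p.2)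

variable {F : Vec d → ℂ}

theorem contDiff_jastrow {m : WithTop ℕ∞} (hF : ContDiff ℝ m F) :
    ContDiff ℝ m (jastrow F : (ι → Vec d) → ℂ) :=
  contDiff_prod fun p _ => hF.comp (by fun_prop)

theorem jastrow_add_int (hF : IsIntPeriodic F) (x : ι → Vec d) (v : ι → Fin d → ℤ) :
    jastrow F (fun i k => x i k + v i k) = jastrow F x := by
  refine Finset.prod_congr rfl fun p _ => ?_
  rw [← hF (x p.1 - x p.2) (v p.1 - v p.2)]
  congr 1
  ext k
  simp only [Pi.sub_apply]
  push_cast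
  ring

theorem jastrow_comp_perm (hF : ∀ z, F (-z) = F z) (σ : Equiv.Perm ι) (x : ι → Vec d) :
    jastrow F (x ∘ σ) = jastrow F x :=
  prod_lt_comp_perm (g := fun i j => F (x i - x j)) (fun i j => by rw [← hF, neg_sub]) σ

theorem enorm_jastrow_le (hF : ∀ z, ‖F z‖ ≤ 1) (x : ι → Vec d) {i j : ι} (hij : i < j) :
    ‖jastrow F x‖ₑ ≤ ‖F (x i - x j)‖ₑ := by
  have hmem : (i, j) ∈ Finset.univ.filter fun p : ι × ι => p.1 < p.2 := by simpa using hij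
  rw [jastrow, ← Finset.mul_prod_erase _ _ hmem, enorm_mul]
  exact mul_le_of_le_one_right' (enorm_prod_le_one fun _ _ => hF _)

theorem one_le_enorm_jastrow_sq_add (F : Vec d → ℂ) (x : ι → Vec d) :
    1 ≤ ‖jastrow F x‖ₑ ^ 2 + ∑ p : ι × ι with p.1 < p.2, (1 - ‖F (x p.1 - x p.2)‖ₑ ^ 2) := by
  rw [jastrow, enorm_prod_eq, ← Finset.prod_pow]
  exact one_le_prod_add_sum_tsub _ fun p : ι × ι => ‖F (x p.1 - x p.2)‖ₑ ^ 2

theorem enorm_fderiv_jastrow_le (hFd : Differentiable ℝ F) (hF : ∀ z, ‖F z‖ ≤ 1)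
    (hFe : ∀ z, F (-z) = F z) (x : ι → Vec d) (i : ι) (w : Vec d) :
    ‖fderiv ℝ (jastrow F) x (Pi.single i w)‖ₑ
      ≤ ∑ j ∈ Finset.univ.erase i, ‖fderiv ℝ F (x i - x j) w‖ₑ := by
  set D : ι → ι → ℝ≥0∞ := fun a b => ‖fderiv ℝ F (x a - x b)
    ((Pi.single i w : ι → Vec d) a - (Pi.single i w : ι → Vec d) b)‖ₑ with hD
  have hfactor (a b : ι) :
      ‖fderiv ℝ (fun y : ι → Vec d => F (y a - y b)) x (Pi.single i w)‖ₑ = D a b := by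
    rw [fderiv_fun_comp (g := F) (f := fun y : ι → Vec d => y a - y b) x (hFd _) (by fun_prop),
      fderiv_fun_sub (by fun_prop) (by fun_prop), fderiv_apply differentiableAt_fun_id,
      fderiv_apply differentiableAt_fun_id, fderiv_fun_id]
    rfl
  have hfderiv (z : Vec d) : fderiv ℝ F (-z) = -fderiv ℝ F z := by
    simpa [hFe] using! congrArg Neg.neg (fderiv_comp_smul (𝕜 := ℝ) (f := F) (x := z) (-1)).symm
  have hsymm (a b : ι) : D a b = D b a := by
    simp only [hD]
    rw [← neg_sub (x b), ← neg_sub ((Pi.single i w : ι → Vec d) b), hfderiv, map_neg,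
      neg_apply, neg_neg]
  calc ‖fderiv ℝ (jastrow F) x (Pi.single i w)‖ₑ
      ≤ ∑ p : ι × ι with p.1 < p.2, D p.1 p.2 := by
        simp_rw [← hfactor]
        exact enorm_fderiv_prod_le (fun p _ => hFd.comp (by fun_prop)) (fun p _ => hF _) _
    _ = ∑ j ∈ Finset.univ.erase i, D i j :=
        sum_lt_eq_sum_erase hsymm i fun a b ha hb => by simp [hD, ha, hb]
    _ = _ := Finset.sum_congr rfl fun j hj => by simp [hD, Finset.ne_of_mem_erase hj]

end Jastrow

theorem sum_lt_const_le (N : ℕ) (I : ℝ≥0∞) :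
    ∑ i : Fin N, ∑ j : Fin N, (if i < j then I else 0) ≤ N ^ 2 * (I / 2) :=
  calc ∑ i : Fin N, ∑ j : Fin N, (if i < j then I else 0)
      = ∑ i : Fin N, ∑ j ∈ Finset.univ.erase i, I / 2 :=
        (sum_sum_erase_div_two fun _ _ => rfl).symm
    _ ≤ ∑ i : Fin N, ∑ j : Fin N, I / 2 :=
        Finset.sum_le_sum fun _ _ => Finset.sum_le_sum_of_subset (Finset.erase_subset _ _)
    _ = N ^ 2 * (I / 2) := by simp [sq, mul_assoc]

theorem measurable_periodize {d : ℕ} {W : Vec d → ℝ≥0∞} (hW : Measurable W) (T : ℝ) :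
    Measurable (periodize d W T) :=
  Measurable.tsum fun _ => hW.comp (by fun_prop)

section JastrowEnergy

variable {d N : ℕ} {F : Vec d → ℂ}

theorem IsIntPeriodic.lintegral_box_sum_sq_le {G : Vec d → ℝ≥0∞} (hG : IsIntPeriodic G)
    (hGm : Measurable G) (i : Fin N) :
    ∫⁻ x in box d N 1, (∑ j ∈ Finset.univ.erase i, G (x i - x j)) ^ 2
      ≤ N * (∫⁻ z in centredCube d, G z ^ 2) + N ^ 2 * (∫⁻ z in centredCube d, G z) ^ 2 := by
  set A := ∫⁻ z in centredCube d, G z ^ 2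
  set B := ∫⁻ z in centredCube d, G z
  have hm (j l : Fin N) : Measurable fun x : Fin N → Vec d => G (x i - x j) * G (x i - x l) :=
    (hGm.comp (by fun_prop)).mul (hGm.comp (by fun_prop))
  have hpair (j l : Fin N) (hij : i ≠ j) (hil : i ≠ l) :
      ∫⁻ x in box d N 1, G (x i - x j) * G (x i - x l) ≤ (if j = l then A else 0) + B ^ 2 := by
    rcases eq_or_ne j l with rfl | hjl
    · have hG2 : IsIntPeriodic fun z => G z ^ 2 := hG.comp_left (· ^ 2)
      simp only [← sq, if_true]
      exact (hG2.lintegral_box_comp_sub (hGm.pow_const 2) hij).trans_le le_self_add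
    · rw [hG.lintegral_box_comp_sub_mul_comp_sub hGm hij hil hjl, if_neg hjl, zero_add]
  calc ∫⁻ x in box d N 1, (∑ j ∈ Finset.univ.erase i, G (x i - x j)) ^ 2
      = ∑ j ∈ Finset.univ.erase i, ∑ l ∈ Finset.univ.erase i,
          ∫⁻ x in box d N 1, G (x i - x j) * G (x i - x l) := by
        simp_rw [sq, Finset.sum_mul_sum]
        rw [lintegral_finsetSum _ fun j _ => Finset.measurable_sum _ fun l _ => hm j l]
        exact Finset.sum_congr rfl fun j _ => lintegral_finsetSum _ fun l _ => hm j l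
    _ ≤ ∑ j ∈ Finset.univ.erase i, ∑ l ∈ Finset.univ.erase i,
          ((if j = l then A else 0) + B ^ 2) :=
        Finset.sum_le_sum fun j hj => Finset.sum_le_sum fun l hl =>
          hpair j l (Finset.ne_of_mem_erase hj).symm (Finset.ne_of_mem_erase hl).symm
    _ ≤ ∑ j : Fin N, ∑ l : Fin N, ((if j = l then A else 0) + B ^ 2) :=
        (Finset.sum_le_sum fun j _ => Finset.sum_le_sum_of_subset (Finset.erase_subset _ _)).trans
          (Finset.sum_le_sum_of_subset (Finset.erase_subset _ _))
    _ = N * A + N ^ 2 * B ^ 2 := by simp [Finset.sum_add_distrib, sq, mul_assoc]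

theorem kineticE_jastrow_le (hFd : ContDiff ℝ 1 F) (hF : ∀ z, ‖F z‖ ≤ 1)
    (hFe : ∀ z, F (-z) = F z) (hFp : IsIntPeriodic F) :
    kineticE d N 1 (jastrow F) ≤ N ^ 2 * (∫⁻ z in centredCube d, gradSq F z)
      + N ^ 3 * ∑ k, (∫⁻ z in centredCube d, ‖fderiv ℝ F z (Pi.single k 1)‖ₑ) ^ 2 := by
  have hm (k : Fin d) : Measurable fun z => ‖fderiv ℝ F z (Pi.single k 1)‖ₑ :=
    ((hFd.continuous_fderiv one_ne_zero).clm_apply continuous_const).enorm.measurable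
  have hp (k : Fin d) : IsIntPeriodic fun z => ‖fderiv ℝ F z (Pi.single k 1)‖ₑ :=
    hFp.fderiv.comp_left fun L => ‖L (Pi.single k 1)‖ₑ
  calc kineticE d N 1 (jastrow F)
      ≤ ∑ _i : Fin N, ∑ k, (N * (∫⁻ z in centredCube d, ‖fderiv ℝ F z (Pi.single k 1)‖ₑ ^ 2)
          + N ^ 2 * (∫⁻ z in centredCube d, ‖fderiv ℝ F z (Pi.single k 1)‖ₑ) ^ 2) :=
        Finset.sum_le_sum fun i _ => Finset.sum_le_sum fun k _ =>
          (lintegral_mono fun x => pow_le_pow_left'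
            (enorm_fderiv_jastrow_le (hFd.differentiable one_ne_zero) hF hFe x i _) 2).trans
          ((hp k).lintegral_box_sum_sq_le (hm k) i)
    _ = _ := by
        simp_rw [gradSq]
        rw [lintegral_finsetSum _ fun k _ => (hm k).pow_const 2, Finset.sum_const,
          Finset.card_univ, Fintype.card_fin, nsmul_eq_mul, Finset.sum_add_distrib,
          ← Finset.mul_sum, ← Finset.mul_sum]
        ring

theorem interE_jastrow_le (hFc : Continuous F) (hF : ∀ z, ‖F z‖ ≤ 1) (hFp : IsIntPeriodic F)
    {W : Vec d → ℝ≥0∞} (hW : Measurable W) :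
    interE d N 1 W (jastrow F)
      ≤ N ^ 2 * ∫⁻ z in centredCube d, periodize d W 1 z * ‖F z‖ₑ ^ 2 / 2 := by
  have hp : IsIntPeriodic fun z => periodize d W 1 z * ‖F z‖ₑ ^ 2 :=
    fun z n => congrArg₂ (fun a b => a * ‖b‖ₑ ^ 2) (isIntPeriodic_periodize W z n) (hFp z n)
  have hm : Measurable fun z => periodize d W 1 z * ‖F z‖ₑ ^ 2 :=
    (measurable_periodize hW 1).mul (hFc.enorm.measurable.pow_const 2)
  simp only [div_eq_mul_inv]
  rw [lintegral_mul_const _ hm, ← div_eq_mul_inv]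
  refine le_trans (Finset.sum_le_sum fun i _ => Finset.sum_le_sum fun j _ => ?_)
    (sum_lt_const_le N _)
  split_ifs with hij
  · rw [← hp.lintegral_box_comp_sub hm hij.ne]
    exact lintegral_mono fun x => mul_le_mul_right
      (pow_le_pow_left' (enorm_jastrow_le hF x hij) 2) _
  · exact le_rfl

theorem energy_jastrow_le (hFd : ContDiff ℝ 1 F) (hF : ∀ z, ‖F z‖ ≤ 1)
    (hFe : ∀ z, F (-z) = F z) (hFp : IsIntPeriodic F) {W : Vec d → ℝ≥0∞} (hW : Measurable W) :
    kineticE d N 1 (jastrow F) + interE d N 1 W (jastrow F)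
      ≤ N ^ 2 * (∫⁻ z in centredCube d, energyDensity (periodize d W 1) F z)
        + N ^ 3 * ∑ k, (∫⁻ z in centredCube d, ‖fderiv ℝ F z (Pi.single k 1)‖ₑ) ^ 2 := by
  refine (add_le_add (kineticE_jastrow_le hFd hF hFe hFp)
    (interE_jastrow_le hFd.continuous hF hFp hW)).trans_eq ?_
  simp_rw [energyDensity]
  rw [lintegral_add_left (measurable_gradSq hFd)]
  ring

theorem one_le_lintegral_enorm_jastrow_sq_add (hFc : Continuous F) (hFp : IsIntPeriodic F) :
    1 ≤ (∫⁻ x in box d N 1, ‖jastrow F x‖ₑ ^ 2)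
      + N ^ 2 * ∫⁻ z in centredCube d, (1 - ‖F z‖ₑ ^ 2) := by
  have hp : IsIntPeriodic fun z => 1 - ‖F z‖ₑ ^ 2 := hFp.comp_left fun a => 1 - ‖a‖ₑ ^ 2
  have hm : Measurable fun z => 1 - ‖F z‖ₑ ^ 2 := (hFc.enorm.measurable.pow_const 2).const_sub 1
  have hms (p : Fin N × Fin N) :
      Measurable fun x : Fin N → Vec d => 1 - ‖F (x p.1 - x p.2)‖ₑ ^ 2 :=
    hm.comp (g := fun z => 1 - ‖F z‖ₑ ^ 2) (by fun_prop)
  calc (1 : ℝ≥0∞) = ∫⁻ _x in box d N 1, 1 := by simp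
    _ ≤ ∫⁻ x in box d N 1, (‖jastrow F x‖ₑ ^ 2
          + ∑ p : Fin N × Fin N with p.1 < p.2, (1 - ‖F (x p.1 - x p.2)‖ₑ ^ 2)) :=
        lintegral_mono fun x => one_le_enorm_jastrow_sq_add F x
    _ = (∫⁻ x in box d N 1, ‖jastrow F x‖ₑ ^ 2)
          + ∑ p : Fin N × Fin N with p.1 < p.2, ∫⁻ z in centredCube d, (1 - ‖F z‖ₑ ^ 2) := by
        rw [lintegral_add_right _ (Finset.measurable_sum _ fun p _ => hms p),
          lintegral_finsetSum _ fun p _ => hms p]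
        congr 1
        exact Finset.sum_congr rfl fun p hp' =>
          hp.lintegral_box_comp_sub hm (Finset.mem_filter.1 hp').2.ne
    _ ≤ _ := by
        gcongr
        refine (Finset.sum_le_sum_of_subset (Finset.subset_univ _)).trans_eq ?_
        simp [sq]

end JastrowEnergy

section Normalization

variable {d N : ℕ} {T : ℝ} {φ : (Fin N → Vec d) → ℂ}

theorem kineticE_smul (c : ℝ) (hφ : Differentiable ℝ φ) :
    kineticE d N T (c • φ) = ‖c‖ₑ ^ 2 * kineticE d N T φ := by
  have hc : ‖c‖ₑ ^ 2 ≠ ⊤ := by finiteness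
  simp only [kineticE, Finset.mul_sum, ← lintegral_const_mul' _ _ hc, fderiv_const_smul (hφ _),
    smul_apply, ← enorm_eq_nnnorm, enorm_smul, mul_pow]

theorem interE_smul (c : ℝ) (W : Vec d → ℝ≥0∞) :
    interE d N T W (c • φ) = ‖c‖ₑ ^ 2 * interE d N T W φ := by
  have hc : ‖c‖ₑ ^ 2 ≠ ⊤ := by finiteness
  simp only [interE, Finset.mul_sum, mul_ite, mul_zero, ← lintegral_const_mul' _ _ hc,
    Pi.smul_apply, ← enorm_eq_nnnorm, enorm_smul, mul_pow, mul_left_comm (‖c‖ₑ ^ 2)]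

theorem exists_isTrialState (hφ : ContDiff ℝ (⊤ : ℕ∞) φ)
    (hper : ∀ (x : Fin N → Vec d) (v : Fin N → Fin d → ℤ), φ (fun i k => x i k + T * v i k) = φ x)
    (hsymm : ∀ (σ : Equiv.Perm (Fin N)) x, φ (x ∘ σ) = φ x)
    (h0 : ∫⁻ x in box d N T, ‖φ x‖ₑ ^ 2 ≠ 0) (htop : ∫⁻ x in box d N T, ‖φ x‖ₑ ^ 2 ≠ ⊤)
    (W : Vec d → ℝ≥0∞) :
    ∃ ψ, IsTrialState d N T ψ ∧
      (∫⁻ x in box d N T, ‖φ x‖ₑ ^ 2) * (kineticE d N T ψ + interE d N T W ψ)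
        = kineticE d N T φ + interE d N T W φ := by
  set M := ∫⁻ x in box d N T, ‖φ x‖ₑ ^ 2
  have hMpos : 0 < M.toReal := ENNReal.toReal_pos h0 htop
  set c : ℝ := (√M.toReal)⁻¹ with hc
  have hcM : M * ‖c‖ₑ ^ 2 = 1 := by
    rw [← enorm_pow, Real.enorm_of_nonneg (by positivity), hc, inv_pow, Real.sq_sqrt hMpos.le,
      ENNReal.ofReal_inv_of_pos hMpos, ENNReal.ofReal_toReal htop, ENNReal.mul_inv_cancel h0 htop]
  refine ⟨c • φ, ⟨contDiff_const.smul hφ, fun x v => ?_, fun σ x => ?_, ?_⟩, ?_⟩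
  · rw [Pi.smul_apply, hper, Pi.smul_apply]
  · rw [Pi.smul_apply, hsymm, Pi.smul_apply]
  · simp only [Pi.smul_apply, ← enorm_eq_nnnorm, enorm_smul, mul_pow]
    rw [lintegral_const_mul' _ _ (by finiteness), mul_comm, hcM]
  · rw [kineticE_smul c (hφ.differentiable (by simp)), interE_smul, ← mul_add, ← mul_assoc, hcM,
      one_mul]

end Normalization

section UpperBound

variable {d N : ℕ}

theorem lintegral_enorm_jastrow_sq_ne_top {F : Vec d → ℂ} (hF : ∀ z, ‖F z‖ ≤ 1) :
    ∫⁻ x in box d N 1, ‖jastrow F x‖ₑ ^ 2 ≠ ⊤ := by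
  refine ne_top_of_le_ne_top ENNReal.one_ne_top ?_
  calc ∫⁻ x in box d N 1, ‖jastrow F x‖ₑ ^ 2 ≤ ∫⁻ _x in box d N 1, 1 :=
        lintegral_mono fun x => pow_le_one' (enorm_prod_le_one fun _ _ => hF _) 2
    _ = 1 := by simp

theorem exists_isTrialState_le_of_jastrow {F : Vec d → ℂ} (hFs : ContDiff ℝ (⊤ : ℕ∞) F)
    (hF : ∀ z, ‖F z‖ ≤ 1) (hFe : ∀ z, F (-z) = F z) (hFp : IsIntPeriodic F)
    {W : Vec d → ℝ≥0∞} (hW : Measurable W) {c : ℝ≥0∞}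
    (hc : N * (∫⁻ z in centredCube d, energyDensity (periodize d W 1) F z)
      + N ^ 2 * ∑ k, (∫⁻ z in centredCube d, ‖fderiv ℝ F z (Pi.single k 1)‖ₑ) ^ 2
      + c * (N ^ 2 * ∫⁻ z in centredCube d, (1 - ‖F z‖ₑ ^ 2)) < c) :
    ∃ ψ, IsTrialState d N 1 ψ ∧ kineticE d N 1 ψ + interE d N 1 W ψ ≤ c * N := by
  have hF1 : ContDiff ℝ 1 F := hFs.of_le (by simp)
  set M := ∫⁻ x in box d N 1, ‖jastrow F x‖ₑ ^ 2
  set X := ∫⁻ z in centredCube d, energyDensity (periodize d W 1) F z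
  set Y := ∑ k, (∫⁻ z in centredCube d, ‖fderiv ℝ F z (Pi.single k 1)‖ₑ) ^ 2
  set Z := ∫⁻ z in centredCube d, (1 - ‖F z‖ₑ ^ 2)
  have hMtop : M ≠ ⊤ := lintegral_enorm_jastrow_sq_ne_top hF
  have hcM : N * X + N ^ 2 * Y < c * M := by
    refine lt_of_add_lt_add_right (a := c * (N ^ 2 * Z)) (hc.trans_le ?_)
    calc c = c * 1 := (mul_one c).symm
      _ ≤ c * (M + N ^ 2 * Z) :=
          mul_le_mul_right (one_le_lintegral_enorm_jastrow_sq_add hFs.continuous hFp) _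
      _ = _ := mul_add _ _ _
  have hM0 : M ≠ 0 := right_ne_zero_of_mul (bot_le.trans_lt hcM).ne'
  obtain ⟨ψ, hψ, hψE⟩ := exists_isTrialState (T := 1) (contDiff_jastrow hFs)
    (fun x v => by simpa only [one_mul] using jastrow_add_int hFp x v) (jastrow_comp_perm hFe)
    hM0 hMtop W
  refine ⟨ψ, hψ, (ENNReal.mul_le_mul_iff_right hM0 hMtop).1 ?_⟩
  calc M * (kineticE d N 1 ψ + interE d N 1 W ψ) ≤ N ^ 2 * X + N ^ 3 * Y :=
        hψE.trans_le (energy_jastrow_le hF1 hF hFe hFp hW)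
    _ = N * (N * X + N ^ 2 * Y) := by ring
    _ ≤ N * (c * M) := mul_le_mul_right hcM.le _
    _ = M * (c * N) := by ring

theorem ofReal_pow_mul_lintegral_comp_smul {l : ℝ} (hl : 0 < l) (g : Vec d → ℝ≥0∞) :
    ENNReal.ofReal l ^ d * ∫⁻ x, g (l • x) = ∫⁻ x, g x := by
  have h := lintegral_comp_add_smul volume hl.ne' (0 : Vec d) g
  simp only [zero_add, Module.finrank_fin_fun, abs_of_pos (inv_pos.2 (pow_pos hl d)),
    ENNReal.ofReal_inv_of_pos (pow_pos hl d), ENNReal.ofReal_pow hl.le] at h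
  rw [h, ← mul_assoc, ENNReal.mul_inv_cancel (pow_ne_zero d (by simpa using hl)) (by finiteness),
    one_mul]

theorem ofReal_pow_mul_lintegral_enorm_fderiv_comp_smul {F : Type*} [NormedAddCommGroup F]
    [NormedSpace ℝ F] (f : Vec (d + 1) → F) {l : ℝ} (hl : 0 < l) (v : Vec (d + 1)) :
    ENNReal.ofReal l ^ d * ∫⁻ x, ‖fderiv ℝ (fun y => f (l • y)) x v‖ₑ
      = ∫⁻ x, ‖fderiv ℝ f x v‖ₑ := by
  simp_rw [fderiv_comp_smul, smul_apply, enorm_smul, Real.enorm_of_nonneg hl.le]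
  rw [lintegral_const_mul' _ _ (by finiteness), ← mul_assoc, ← pow_succ]
  exact ofReal_pow_mul_lintegral_comp_smul hl fun x => ‖fderiv ℝ f x v‖ₑ

theorem exists_isTrialState_le_of_profile {g : Vec d → ℂ} (hgs : ContDiff ℝ (⊤ : ℕ∞) g)
    (hg : ∀ z, ‖g z‖ ≤ 1) (hge : ∀ z, g (-z) = g z) (hg1 : ∀ x, 1 / 4 ≤ ‖x‖ → g x = 1)
    {W : Vec d → ℝ≥0∞} (hW : Measurable W) (hW0 : ∀ x, 1 / 2 ≤ ‖x‖ → W x = 0) {c : ℝ≥0∞}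
    (hc : N * (∫⁻ z, energyDensity W g z)
      + N ^ 2 * ∑ k, (∫⁻ z, ‖fderiv ℝ g z (Pi.single k 1)‖ₑ) ^ 2
      + c * (N ^ 2 * ∫⁻ z, (1 - ‖g z‖ₑ ^ 2)) < c) :
    ∃ ψ, IsTrialState d N 1 ψ ∧ kineticE d N 1 ψ + interE d N 1 W ψ ≤ c * N := by
  refine exists_isTrialState_le_of_jastrow (contDiff_periodicExtension hg1 hgs) (fun z => hg _)
    (periodicExtension_neg hg1 hge) (isIntPeriodic_periodicExtension g) hW (lt_of_le_of_lt ?_ hc)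
  have henergy := setLIntegral_energyDensity_periodicExtension_le hg1 hW0
  have hderiv (k : Fin d) :=
    setLIntegral_enorm_fderiv_periodicExtension_le hg1 (Pi.single k (1 : ℝ))
  have hdefect := setLIntegral_comp_periodicExtension_le hg1 fun a => 1 - ‖a‖ₑ ^ 2
  exact add_le_add (add_le_add (mul_le_mul_right henergy _)
    (mul_le_mul_right (Finset.sum_le_sum fun k _ => pow_le_pow_left' (hderiv k) 2) _))
    (mul_le_mul_right (mul_le_mul_right hdefect _) _)

theorem scaled_profile_energy_le (V : Vec 3 → ℝ≥0∞) (f : Vec 3 → ℂ) (hN : 0 < N) (c : ℝ≥0∞) :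
    N * (∫⁻ x, energyDensity (scaledPotential V N) (fun y => f ((N : ℝ) • y)) x)
      + N ^ 2 * ∑ k, (∫⁻ x, ‖fderiv ℝ (fun y => f ((N : ℝ) • y)) x (Pi.single k 1)‖ₑ) ^ 2
      + c * (N ^ 2 * ∫⁻ x, (1 - ‖f ((N : ℝ) • x)‖ₑ ^ 2))
    ≤ (∫⁻ x, energyDensity V f x)
      + (∑ k, (∫⁻ x, ‖fderiv ℝ f x (Pi.single k 1)‖ₑ) ^ 2 + c * ∫⁻ x, (1 - ‖f x‖ₑ ^ 2)) / N := by
  have hN' : (0 : ℝ) < N := by exact_mod_cast hN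
  have hN1 : (1 : ℝ≥0∞) ≤ N := by exact_mod_cast hN
  have henergy := lintegral_energyDensity_comp_smul V hN' fun y => f ((N : ℝ) • y)
  have hderiv (k : Fin 3) :=
    ofReal_pow_mul_lintegral_enorm_fderiv_comp_smul f hN' (Pi.single k 1)
  have hdefect := ofReal_pow_mul_lintegral_comp_smul hN' fun x => 1 - ‖f x‖ₑ ^ 2
  simp only [smul_inv_smul₀ hN'.ne', ENNReal.ofReal_natCast] at henergy hderiv hdefect
  rw [← henergy, add_assoc]
  gcongr
  rw [ENNReal.le_div_iff_mul_le (by simp [hN.ne']) (by simp)]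
  simp_rw [← hderiv, ← hdefect, mul_pow, ← Finset.mul_sum]
  set S := ∑ k, (∫⁻ x, ‖fderiv ℝ (fun y => f ((N : ℝ) • y)) x (Pi.single k 1)‖ₑ) ^ 2
  set D := ∫⁻ x, (1 - ‖f ((N : ℝ) • x)‖ₑ ^ 2)
  calc (N ^ 2 * S + c * (N ^ 2 * D)) * N = N ^ 3 * S + c * (N ^ 3 * D) := by ring
    _ ≤ (N ^ 2) ^ 2 * S + c * (N ^ 3 * D) := by
        rw [← pow_mul]
        gcongr
        norm_num

theorem lintegral_enorm_fderiv_ne_top {f : Vec d → ℂ} (hf : ContDiff ℝ 1 f) {c : ℂ}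
    (hfc : HasCompactSupport fun x => f x - c) (v : Vec d) :
    ∫⁻ x, ‖fderiv ℝ f x v‖ₑ ≠ ⊤ := by
  have hcs : HasCompactSupport fun x => fderiv ℝ f x v := by
    simpa only [fderiv_sub_const] using hfc.fderiv_apply (𝕜 := ℝ) v
  exact (((hf.continuous_fderiv one_ne_zero).clm_apply
    continuous_const).integrable_of_hasCompactSupport hcs).2.ne

theorem lintegral_one_sub_enorm_sq_ne_top {f : Vec d → ℂ}
    (hfc : HasCompactSupport fun x => f x - 1) : ∫⁻ x, (1 - ‖f x‖ₑ ^ 2) ≠ ⊤ := by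
  set K := tsupport fun x => f x - 1
  have hK (x : Vec d) : 1 - ‖f x‖ₑ ^ 2 ≤ K.indicator 1 x := by
    by_cases hx : x ∈ K
    · simp [hx]
    · have hfx : f x - 1 = 0 := image_eq_zero_of_notMem_tsupport (f := fun x => f x - 1) hx
      simp [hx, sub_eq_zero.1 hfx]
  refine ne_top_of_le_ne_top ?_ (lintegral_mono hK)
  rw [lintegral_indicator_one (isClosed_tsupport _).measurableSet]
  exact hfc.isCompact.measure_ne_top

theorem eventually_exists_energy_le {V : Vec 3 → ℝ≥0∞} (hV : Measurable V)
    (hVs : HasCompactSupport V) (hVeven : ∀ x, V (-x) = V x) {c : ℝ≥0} (hc : scatEnergy V < c) :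
    ∀ᶠ N : ℕ in atTop, ∃ ψ, IsTrialState 3 N 1 ψ ∧
      kineticE 3 N 1 ψ + interE 3 N 1 (scaledPotential V N) ψ ≤ c * N := by
  obtain ⟨f, hfs, hfc, hfe, hf1, hfE⟩ := exists_profile hV hVeven hc
  have hgrad (k : Fin 3) :=
    lintegral_enorm_fderiv_ne_top (hfs.of_le (by simp)) hfc (Pi.single k 1)
  have hdefect := lintegral_one_sub_enorm_sq_ne_top hfc
  have hsum : (∑ k, (∫⁻ x, ‖fderiv ℝ f x (Pi.single k 1)‖ₑ) ^ 2)
      + c * ∫⁻ x, (1 - ‖f x‖ₑ ^ 2) ≠ ⊤ := by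
    have hsq : ∑ k, (∫⁻ x, ‖fderiv ℝ f x (Pi.single k 1)‖ₑ) ^ 2 ≠ ⊤ :=
      ENNReal.sum_ne_top.2 fun k _ => ENNReal.pow_ne_top (hgrad k)
    finiteness
  have hlim := eventually_add_div_ofReal_lt hfE ENNReal.one_ne_top hsum
  have hsmall : ∀ᶠ x : Vec 3 in nhds 0, ‖x‖ < 1 / 4 :=
    continuous_norm.continuousAt.eventually_lt_const (by simp)
  filter_upwards [tendsto_natCast_atTop_atTop.eventually hlim, eventually_gt_atTop 0,
    tendsto_natCast_atTop_atTop.eventually (eventually_comp_smul_ne_zero_imp hfc hsmall),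
    tendsto_natCast_atTop_atTop.eventually (eventually_comp_smul_ne_zero_imp hVs hsmall)]
    with N hN hN0 hfN hVN
  refine exists_isTrialState_le_of_profile (g := fun x => f ((N : ℝ) • x)) (hfs.comp (by fun_prop))
    (fun z => hf1 _) (fun z => by rw [smul_neg, hfe]) (fun x hx => ?_)
    (measurable_scaledPotential hV N) (fun x hx => ?_) ?_
  · by_contra h
    exact (hfN x (sub_ne_zero.2 h)).not_ge hx
  · by_contra h
    linarith [hVN x (right_ne_zero_of_mul h)]
  · refine (scaled_profile_energy_le V f hN0 c).trans_lt ?_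
    simpa only [one_mul, ENNReal.ofReal_natCast] using hN

end UpperBound

/-! ### The ground state energy -/

section GroundStateEnergy

variable {d N : ℕ} {T : ℝ} {W : Vec d → ℝ≥0∞} {b : ℝ≥0}

theorem gsEnergy_le {ψ : (Fin N → Vec d) → ℂ} (hψ : IsTrialState d N T ψ)
    (hle : kineticE d N T ψ + interE d N T W ψ ≤ b) : gsEnergy d N T W ≤ b := by
  refine csInf_le_of_le ⟨0, ?_⟩ ⟨ψ, hψ, ne_top_of_le_ne_top ENNReal.coe_ne_top hle, rfl⟩
    (ENNReal.toReal_le_coe_of_le_coe hle)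
  rintro _ ⟨_, _, _, rfl⟩
  exact ENNReal.toReal_nonneg

theorem le_gsEnergy (hfin : ∃ ψ, IsTrialState d N T ψ ∧ kineticE d N T ψ + interE d N T W ψ ≠ ⊤)
    (hle : ∀ ψ, IsTrialState d N T ψ → b ≤ kineticE d N T ψ + interE d N T W ψ) :
    b ≤ gsEnergy d N T W := by
  obtain ⟨ψ₀, hψ₀, htop₀⟩ := hfin
  refine le_csInf ⟨_, ψ₀, hψ₀, htop₀, rfl⟩ ?_
  rintro _ ⟨ψ, hψ, htop, rfl⟩
  exact ENNReal.toReal_mono htop (hle ψ hψ)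

theorem gsEnergy_nonneg (W : Vec d → ℝ≥0∞) : 0 ≤ gsEnergy d N T W := by
  refine Real.sInf_nonneg ?_
  rintro _ ⟨_, _, _, rfl⟩
  exact ENNReal.toReal_nonneg

end GroundStateEnergy

theorem gpPotential_eq_scaledPotential (V : Vec 3 → ℝ) (N : ℕ) :
    gpPotential V N = scaledPotential (fun x => ENNReal.ofReal (V x)) N := by
  ext x
  rw [gpPotential, scaledPotential, ENNReal.ofReal_mul (by positivity),
    ENNReal.ofReal_pow (by positivity), Real.enorm_of_nonneg (by positivity)]

theorem eventually_gsEnergy_le {V : Vec 3 → ℝ≥0∞} (hV : Measurable V)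
    (hVs : HasCompactSupport V) (hVeven : ∀ x, V (-x) = V x) {c : ℝ≥0} (hc : scatEnergy V < c) :
    ∀ᶠ N : ℕ in atTop, gsEnergy 3 N 1 (scaledPotential V N) ≤ c * N := by
  filter_upwards [eventually_exists_energy_le hV hVs hVeven hc] with N ⟨ψ, hψ, hle⟩
  exact mod_cast gsEnergy_le (b := c * N) hψ (mod_cast hle)

theorem eventually_le_gsEnergy {V : Vec 3 → ℝ≥0∞} (hV : Measurable V)
    (hVs : HasCompactSupport V) (hVeven : ∀ x, V (-x) = V x) (hscat : scatEnergy V ≠ ⊤)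
    {c : ℝ≥0} (hc : c < scatEnergy V) :
    ∀ᶠ N : ℕ in atTop, c * N ≤ gsEnergy 3 N 1 (scaledPotential V N) := by
  obtain ⟨b, hb⟩ := ENNReal.lt_iff_exists_nnreal_btwn.1 hscat.lt_top
  filter_upwards [eventually_le_energy hV hVs hVeven hscat hc,
    eventually_exists_energy_le hV hVs hVeven hb.1] with N hle ⟨ψ, hψ, hψb⟩
  exact mod_cast le_gsEnergy (b := c * N)
    ⟨ψ, hψ, ne_top_of_le_ne_top (by finiteness) hψb⟩ (mod_cast hle)

theorem gross_pitaevskii_energy_general {V : Vec 3 → ℝ≥0∞} (hV : Measurable V)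
    (hVs : HasCompactSupport V) (hVeven : ∀ x, V (-x) = V x) {e : ℝ≥0} (he : scatEnergy V = e) :
    Tendsto (fun N : ℕ => gsEnergy 3 N 1 (scaledPotential V N) / N) atTop (nhds e) := by
  refine tendsto_order.2 ⟨fun c hc => ?_, fun c hc => ?_⟩
  · rcases lt_or_ge c 0 with hc0 | hc0
    · exact Eventually.of_forall fun N => hc0.trans_le (div_nonneg (gsEnergy_nonneg _) (by simp))
    lift c to ℝ≥0 using hc0
    obtain ⟨b, hcb, hbe⟩ := exists_between (NNReal.coe_lt_coe.1 hc)
    have hb : (b : ℝ≥0∞) < scatEnergy V := he ▸ ENNReal.coe_lt_coe.2 hbe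
    filter_upwards [eventually_le_gsEnergy hV hVs hVeven (he ▸ ENNReal.coe_ne_top) hb,
      eventually_gt_atTop 0] with N hN hN0
    exact (NNReal.coe_lt_coe.2 hcb).trans_le ((le_div_iff₀ (mod_cast hN0)).2 hN)
  · obtain ⟨b, heb, hbc⟩ := exists_between hc
    lift b to ℝ≥0 using e.2.trans heb.le
    have hb : scatEnergy V < b := he ▸ ENNReal.coe_lt_coe.2 heb
    filter_upwards [eventually_gsEnergy_le hV hVs hVeven hb, eventually_gt_atTop 0] with N hN hN0
    exact ((div_le_iff₀ (mod_cast hN0)).2 hN).trans_lt hbc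

/-- **Ground state energy in the Gross–Pitaevskii regime (Lieb–Seiringer–Yngvason).**
For a measurable, radial, compactly supported `V : ℝ³ → [0,∞)` with scattering length
`𝔞 > 0`, the ground state energy of the Gross–Pitaevskii Hamiltonian on the unit torus
satisfies `lim_{N→∞} E_N^{GP}/N = 4π𝔞`. -/
theorem gross_pitaevskii_energy
    (V : Vec 3 → ℝ) (hVmeas : Measurable V) (hVpos : ∀ x, 0 ≤ V x)
    (hVrad : ∀ x y : Vec 3, ∑ k, (x k) ^ 2 = ∑ k, (y k) ^ 2 → V x = V y)
    (hVsupp : HasCompactSupport V)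
    (a : ℝ) (ha : 0 < a)
    (hscat : sInf (scatSet3 (fun x => ENNReal.ofReal (V x))) = ENNReal.ofReal (4 * π * a)) :
    Tendsto (fun N : ℕ => gsEnergy 3 N 1 (gpPotential V N) / (N : ℝ))
      atTop (nhds (4 * π * a)) := by
  have hVeven (x : Vec 3) : ENNReal.ofReal (V (-x)) = ENNReal.ofReal (V x) := by
    rw [hVrad (-x) x (by simp)]
  simpa only [gpPotential_eq_scaledPotential, Real.coe_toNNReal _ (by positivity : 0 ≤ 4 * π * a)]
    using gross_pitaevskii_energy_general hVmeas.ennreal_ofReal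
      (hVsupp.comp_left ENNReal.ofReal_zero) hVeven hscat
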